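/- arXiv:2409.14375 — 2 statements merged into one kernel-verified Lean document; each statement's English description precedes it below -/
import Mathlib

section
/- Let n ≥ 2 and 1 ≤ j ≤ n−1, let X = SL_n(ℤ)\SL_n(ℝ) and let μ be the right-invariant Borel probability measure on X. For every continuous compactly supported function f : X → ℝ, the Hecke average (1/#L_{N,j}(n)) · Σ_{L ∈ L_{N,j}(n)} f(x_L) converges to ∫_X f dμ as N → ∞, where for L ∈ L_{N,j}(n), x_L ∈ X denotes the coset SL_n(ℤ)·(N^{−j/n}·B) for any matrix B whose rows form a ℤ-basis of L with det B = N^{j} (this coset is independent of the choice of B). -/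
open Matrix MeasureTheory

noncomputable section

/-- The subgroup `Γ = SL_n(ℤ)` inside `G = SL_n(ℝ)`, realized as the range of the map
induced by the ring homomorphism `ℤ → ℝ`. -/
def Gamma (n : ℕ) : Subgroup (Matrix.SpecialLinearGroup (Fin n) ℝ) :=
  (Matrix.SpecialLinearGroup.map (Int.castRingHom ℝ)).range

/-- The homogeneous space `X = Γ\G = SL_n(ℤ)\SL_n(ℝ)` (right cosets `Γg`). -/
def XSpace (n : ℕ) : Type :=
  Quotient (QuotientGroup.rightRel (Gamma n))

/-- The topology on `SL_n(ℝ)` induced from the space of matrices. -/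
instance (n : ℕ) : TopologicalSpace (Matrix.SpecialLinearGroup (Fin n) ℝ) :=
  TopologicalSpace.induced (fun g => (g : Matrix (Fin n) (Fin n) ℝ)) inferInstance

/-- The quotient topology on `X = Γ\G`. -/
instance (n : ℕ) : TopologicalSpace (XSpace n) :=
  instTopologicalSpaceQuotient

/-- The Borel σ-algebra on `X`. -/
instance (n : ℕ) : MeasurableSpace (XSpace n) := borel _

instance (n : ℕ) : BorelSpace (XSpace n) := ⟨rfl⟩

/-- Right translation `Γx ↦ Γxg` of `G` on `X = Γ\G`. -/
def rightTranslate (n : ℕ) (g : Matrix.SpecialLinearGroup (Fin n) ℝ) :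
    XSpace n → XSpace n :=
  Quotient.map' (fun x => x * g) (fun x y hxy => by
    simp only [QuotientGroup.rightRel_apply] at hxy ⊢
    simpa [mul_assoc] using hxy)

/-- `Ω̃_{n,r}` : the set of cosets `Γg ∈ X` such that the lattice `ℤⁿg` contains exactly
`r` points `vg` (for `v ∈ ℤⁿ`) of sup-norm at most `D`. -/
def OmegaTilde (n : ℕ) (D : ℝ) (r : ℕ) : Set (XSpace n) :=
  {x | ∃ g : Matrix.SpecialLinearGroup (Fin n) ℝ,
    (Quotient.mk'' g : XSpace n) = x ∧
    Set.ncard {v : Fin n → ℤ |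
      ‖Matrix.vecMul (fun i => (v i : ℝ)) (g : Matrix (Fin n) (Fin n) ℝ)‖ ≤ D} = r}


/-- `L_{N,j}(n)`: the set of subgroups `L ≤ ℤⁿ` with `ℤⁿ/L ≅ (ℤ/Nℤ)ʲ`. -/
def latticeSet (N n j : ℕ) : Set (AddSubgroup (Fin n → ℤ)) :=
  {L | Nonempty (((Fin n → ℤ) ⧸ L) ≃+ (Fin j → ZMod N))}

section part1
open Filter Topology

/-- shorthand for `SL_n(ℝ)` -/
abbrev SLn (n : ℕ) := Matrix.SpecialLinearGroup (Fin n) ℝ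

lemma isClosedEmbedding_coe (n : ℕ) :
    Topology.IsClosedEmbedding (fun g : SLn n => (g : Matrix (Fin n) (Fin n) ℝ)) :=
  Matrix.SpecialLinearGroup.isClosedEmbedding_val (n := Fin n) (R := ℝ)

instance instTGSLn (n : ℕ) : IsTopologicalGroup (SLn n) :=
  Matrix.SpecialLinearGroup.topologicalGroup (n := Fin n) (R := ℝ)

instance instT2SLn (n : ℕ) : T2Space (SLn n) :=
  (isClosedEmbedding_coe n).isEmbedding.t2Space

instance instSCMat (n : ℕ) : SecondCountableTopology (Matrix (Fin n) (Fin n) ℝ) :=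
  inferInstanceAs (SecondCountableTopology (Fin n → Fin n → ℝ))

instance instLCMat (n : ℕ) : LocallyCompactSpace (Matrix (Fin n) (Fin n) ℝ) :=
  inferInstanceAs (LocallyCompactSpace (Fin n → Fin n → ℝ))

instance instSCSLn (n : ℕ) : SecondCountableTopology (SLn n) :=
  (isClosedEmbedding_coe n).isEmbedding.secondCountableTopology

instance instLCSLn (n : ℕ) : LocallyCompactSpace (SLn n) :=
  (isClosedEmbedding_coe n).locallyCompactSpace

instance instMSSLn (n : ℕ) : MeasurableSpace (SLn n) := borel _
instance instBSSLn (n : ℕ) : BorelSpace (SLn n) := ⟨rfl⟩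

/-- the projection `G → Γ\G`. -/
def pr {n : ℕ} (g : SLn n) : XSpace n := Quotient.mk'' g

lemma pr_surj {n : ℕ} (x : XSpace n) : ∃ g, pr g = x := Quotient.exists_rep x

lemma pr_eq_iff {n : ℕ} {g h : SLn n} : pr g = pr h ↔ h * g⁻¹ ∈ Gamma n := by
  refine Iff.trans (Quotient.eq'' (s₁ := QuotientGroup.rightRel (Gamma n))) ?_
  rw [QuotientGroup.rightRel_apply]

@[simp] lemma rT_pr {n : ℕ} (g h : SLn n) : rightTranslate n g (pr h) = pr (h * g) := rfl

lemma rT_mul {n : ℕ} (g h : SLn n) (x : XSpace n) :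
    rightTranslate n (g * h) x = rightTranslate n h (rightTranslate n g x) := by
  obtain ⟨y, rfl⟩ := pr_surj x
  simp [mul_assoc]

@[simp] lemma rT_one {n : ℕ} (x : XSpace n) : rightTranslate n 1 x = x := by
  obtain ⟨y, rfl⟩ := pr_surj x
  simp

lemma pr_gamma {n : ℕ} {γ : SLn n} (hγ : γ ∈ Gamma n) (g : SLn n) : pr (γ * g) = pr g := by
  rw [pr_eq_iff]
  simpa using inv_mem hγ

lemma continuous_pr (n : ℕ) : Continuous (pr (n := n)) := continuous_quot_mk

lemma isQuotientMap_pr (n : ℕ) : Topology.IsQuotientMap (pr (n := n)) := isQuotientMap_quot_mk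

lemma isOpenMap_pr (n : ℕ) : IsOpenMap (pr (n := n)) := by
  intro U hU
  rw [← (isQuotientMap_pr n).isOpen_preimage]
  have : pr ⁻¹' (pr '' U) = ⋃ γ ∈ Gamma n, (fun g => γ * g) ⁻¹' U := by
    ext g
    simp only [Set.mem_preimage, Set.mem_image, Set.mem_iUnion, exists_prop]
    constructor
    · rintro ⟨h, hU, hh⟩
      refine ⟨h * g⁻¹, pr_eq_iff.1 hh.symm, by simpa using hU⟩
    · rintro ⟨γ, hγ, h⟩
      exact ⟨_, h, pr_gamma hγ g⟩
  rw [this]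
  exact isOpen_biUnion fun γ _ => hU.preimage (continuous_const_mul γ)

lemma isOpenQuotientMap_pr (n : ℕ) : IsOpenQuotientMap (pr (n := n)) :=
  ⟨pr_surj, continuous_pr n, isOpenMap_pr n⟩

instance instSCX (n : ℕ) : SecondCountableTopology (XSpace n) :=
  (isQuotientMap_pr n).secondCountableTopology (isOpenMap_pr n)

lemma continuous_act (n : ℕ) :
    Continuous (fun p : XSpace n × SLn n => rightTranslate n p.2 p.1) := by
  have h := (isOpenQuotientMap_pr n).prodMap (IsOpenQuotientMap.id (X := SLn n))
  rw [h.isQuotientMap.continuous_iff]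
  exact (continuous_pr n).comp (continuous_fst.mul continuous_snd)

lemma continuous_rT {n : ℕ} (g : SLn n) : Continuous (rightTranslate n g) :=
  (continuous_act n).comp (continuous_id.prodMk continuous_const)

lemma continuous_orbit {n : ℕ} (x : XSpace n) : Continuous (fun g => rightTranslate n g x) :=
  (continuous_act n).comp (continuous_const.prodMk continuous_id)

lemma measurable_act (n : ℕ) :
    Measurable (fun p : XSpace n × SLn n => rightTranslate n p.2 p.1) :=
  (continuous_act n).measurable

/-- bounded, right-uniformly continuous functions on `X`. -/
structure RUC {n : ℕ} (f : XSpace n → ℝ) : Prop where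
  cont : Continuous f
  bdd : ∃ C, ∀ x, |f x| ≤ C
  unif : ∀ ε > 0, ∀ᶠ g in 𝓝 (1 : SLn n), ∀ x, |f (rightTranslate n g x) - f x| ≤ ε

lemma ruc_of_compact {n : ℕ} {f : XSpace n → ℝ} (hf : Continuous f) (hfc : HasCompactSupport f) :
    RUC f := by
  refine ⟨hf, ?_, ?_⟩
  · obtain ⟨C, hC⟩ := hfc.exists_bound_of_continuous hf
    exact ⟨C, hC⟩
  · intro ε hε
    have hK : IsCompact (tsupport f) := hfc
    have key : ∀ᶠ g in 𝓝 (1 : SLn n), ∀ x ∈ tsupport f,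
        |f (rightTranslate n g x) - f x| < ε := by
      refine hK.eventually_forall_of_forall_eventually ?_
      intro x hx
      have : Continuous fun p : SLn n × XSpace n => |f (rightTranslate n p.1 p.2) - f p.2| := by
        have h1 := (continuous_act n).comp (continuous_swap (X := SLn n) (Y := XSpace n))
        exact ((hf.comp h1).sub (hf.comp continuous_snd)).abs
      have h2 := this.continuousAt (x := ((1 : SLn n), x))
      refine h2.eventually (gt_mem_nhds ?_)
      simpa using hε
    have key' : ∀ᶠ g in 𝓝 (1 : SLn n), ∀ x ∈ tsupport f,
        |f (rightTranslate n g⁻¹ x) - f x| < ε := by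
      have : Tendsto (fun g : SLn n => g⁻¹) (𝓝 1) (𝓝 1) := by
        simpa using (continuous_inv (G := SLn n)).tendsto 1
      exact this.eventually key
    filter_upwards [key, key'] with g h1 h2 x
    by_cases hx : x ∈ tsupport f
    · exact (h1 x hx).le
    by_cases hy : rightTranslate n g x ∈ tsupport f
    · have := h2 _ hy
      rw [← rT_mul, mul_inv_cancel, rT_one, abs_sub_comm] at this
      exact this.le
    · rw [image_eq_zero_of_notMem_tsupport hx, image_eq_zero_of_notMem_tsupport hy]
      simpa using hε.le

namespace RUC
variable {n : ℕ} {f h : XSpace n → ℝ}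

lemma const (c : ℝ) : RUC (fun _ : XSpace n => c) :=
  ⟨continuous_const, ⟨|c|, fun _ => le_rfl⟩, fun ε hε => by simp [hε.le]⟩

lemma add (hf : RUC f) (hh : RUC h) : RUC (fun x => f x + h x) := by
  obtain ⟨C, hC⟩ := hf.bdd
  obtain ⟨D, hD⟩ := hh.bdd
  refine ⟨hf.cont.add hh.cont, ⟨C + D, fun x => (abs_add_le _ _).trans (add_le_add (hC x) (hD x))⟩,
    fun ε hε => ?_⟩
  filter_upwards [hf.unif (ε/2) (by linarith), hh.unif (ε/2) (by linarith)] with g h1 h2 x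
  have := abs_add_le (f (rightTranslate n g x) - f x) (h (rightTranslate n g x) - h x)
  rw [show f (rightTranslate n g x) + h (rightTranslate n g x) - (f x + h x) =
    (f (rightTranslate n g x) - f x) + (h (rightTranslate n g x) - h x) by ring]
  linarith [h1 x, h2 x]

lemma abs (hf : RUC f) : RUC (fun x => |f x|) := by
  obtain ⟨C, hC⟩ := hf.bdd
  refine ⟨hf.cont.abs, ⟨C, fun x => by simpa using hC x⟩, fun ε hε => ?_⟩
  filter_upwards [hf.unif ε hε] with g h1 x
  exact (abs_abs_sub_abs_le_abs_sub _ _).trans (h1 x)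

lemma const_mul (c : ℝ) (hf : RUC f) : RUC (fun x => c * f x) := by
  obtain ⟨C, hC⟩ := hf.bdd
  refine ⟨continuous_const.mul hf.cont, ⟨|c| * C, fun x => ?_⟩, fun ε hε => ?_⟩
  · rw [abs_mul]; exact mul_le_mul_of_nonneg_left (hC x) (abs_nonneg _)
  · filter_upwards [hf.unif (ε / (|c| + 1)) (by positivity)] with g h1 x
    rw [← mul_sub, abs_mul]
    calc |c| * _ ≤ |c| * (ε / (|c| + 1)) := mul_le_mul_of_nonneg_left (h1 x) (abs_nonneg _)
      _ ≤ (|c| + 1) * (ε / (|c| + 1)) := by gcongr; linarith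
      _ = ε := by field_simp

lemma sub (hf : RUC f) (hh : RUC h) : RUC (fun x => f x - h x) := by
  simpa [sub_eq_add_neg] using hf.add (hh.const_mul (-1))

lemma sum {ι : Type*} (s : Finset ι) {F : ι → XSpace n → ℝ} (hF : ∀ i ∈ s, RUC (F i)) :
    RUC (fun x => ∑ i ∈ s, F i x) := by
  classical
  induction s using Finset.induction_on with
  | empty => simpa using const (n := n) 0
  | insert a s ha ih =>
    simp only [Finset.sum_insert ha]
    exact (hF a (by simp)).add (ih fun i hi => hF i (by simp [hi]))

lemma sq (hf : RUC f) : RUC (fun x => f x ^ 2) := by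
  obtain ⟨C, hC⟩ := hf.bdd
  have hC0 : 0 ≤ C := (abs_nonneg _).trans (hC (pr 1))
  refine ⟨hf.cont.pow 2, ⟨C ^ 2, fun x => ?_⟩, fun ε hε => ?_⟩
  · rw [abs_pow]; exact pow_le_pow_left₀ (abs_nonneg _) (hC x) 2
  · filter_upwards [hf.unif (ε / (2 * C + 1)) (by positivity)] with g h1 x
    rw [show f (rightTranslate n g x) ^ 2 - f x ^ 2 = (f (rightTranslate n g x) + f x) *
      (f (rightTranslate n g x) - f x) by ring, abs_mul]
    have h2 : |f (rightTranslate n g x) + f x| ≤ 2 * C + 1 :=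
      (abs_add_le _ _).trans (by linarith [hC (rightTranslate n g x), hC x])
    calc _ ≤ (2 * C + 1) * (ε / (2 * C + 1)) :=
          mul_le_mul h2 (h1 x) (abs_nonneg _) (by positivity)
      _ = ε := by field_simp

lemma translate (hf : RUC f) (a : SLn n) : RUC (fun x => f (rightTranslate n a x)) := by
  obtain ⟨C, hC⟩ := hf.bdd
  refine ⟨hf.cont.comp (continuous_rT a), ⟨C, fun x => hC _⟩, fun ε hε => ?_⟩
  have : Tendsto (fun g : SLn n => a⁻¹ * g * a) (𝓝 1) (𝓝 1) := by
    have h : Continuous (fun g : SLn n => a⁻¹ * g * a) := by fun_prop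
    simpa using h.tendsto 1
  filter_upwards [this.eventually (hf.unif ε hε)] with g h1 x
  have := h1 (rightTranslate n a x)
  rwa [← rT_mul, show a * (a⁻¹ * g * a) = g * a by group, rT_mul] at this

lemma measurable (hf : RUC f) : Measurable f := hf.cont.measurable

lemma memLp (hf : RUC f) (μ : Measure (XSpace n)) [IsFiniteMeasure μ] (p : ENNReal) :
    MemLp f p μ := by
  obtain ⟨C, hC⟩ := hf.bdd
  exact MemLp.of_bound hf.measurable.aestronglyMeasurable C (.of_forall hC)

lemma integrable (hf : RUC f) (μ : Measure (XSpace n)) [IsFiniteMeasure μ] :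
    Integrable f μ := memLp_one_iff_integrable.1 (hf.memLp μ 1)

end RUC

end part1

section part2
open Filter Topology

section measure
open scoped Pointwise
variable {n : ℕ} {μ : Measure (XSpace n)}

lemma mp_rT (hinv : ∀ g, Measure.map (rightTranslate n g) μ = μ) (g : SLn n) :
    MeasurePreserving (rightTranslate n g) μ μ := ⟨(continuous_rT g).measurable, hinv g⟩

lemma open_pos [IsProbabilityMeasure μ] (hinv : ∀ g, Measure.map (rightTranslate n g) μ = μ)
    {U : Set (XSpace n)} (hU : IsOpen U) (hne : U.Nonempty) : 0 < μ U := by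
  by_contra h0
  have h0 : μ U = 0 := by simpa using h0
  obtain ⟨T, hT, hT2⟩ := TopologicalSpace.isOpen_iUnion_countable
    (fun g : SLn n => rightTranslate n g ⁻¹' U) (fun g => hU.preimage (continuous_rT g))
  have hcov : (⋃ g : SLn n, rightTranslate n g ⁻¹' U) = Set.univ := by
    refine Set.eq_univ_of_forall fun x => ?_
    obtain ⟨y, hy⟩ := hne
    obtain ⟨a, rfl⟩ := pr_surj x
    obtain ⟨b, rfl⟩ := pr_surj y
    refine Set.mem_iUnion.2 ⟨a⁻¹ * b, ?_⟩
    simpa using hy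
  have : μ (⋃ g ∈ T, rightTranslate n g ⁻¹' U) = 0 := by
    rw [measure_biUnion_null_iff hT]
    intro g _
    rw [(mp_rT hinv g).measure_preimage hU.measurableSet.nullMeasurableSet, h0]
  rw [hT2, hcov] at this
  simp at this

/-- left Haar measure on `SL_n(ℝ)` -/
def lam (n : ℕ) : Measure (SLn n) := Measure.haar

instance instHaarLam (n : ℕ) : (lam n).IsHaarMeasure := by unfold lam; infer_instance

instance instSigmaLam (n : ℕ) : SigmaFinite (lam n) := by unfold lam; infer_instance

lemma local_ac [IsProbabilityMeasure μ] (hinv : ∀ g, Measure.map (rightTranslate n g) μ = μ)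
    {K : Set (SLn n)} (hK : IsCompact K) :
    ∃ C : ENNReal, C ≠ ⊤ ∧ ∀ h : XSpace n → ENNReal, Measurable h →
      ∫⁻ g in K, h (pr g) ∂(lam n) ≤ C * ∫⁻ x, h x ∂μ := by
  obtain ⟨W, hW, hW1⟩ := exists_compact_mem_nhds (1 : SLn n)
  set V := W⁻¹ * K with hV
  have hVc : IsCompact V := hW.inv.mul hK
  set O := pr '' (interior W) with hO
  have hOo : IsOpen O := isOpenMap_pr n _ isOpen_interior
  have hOpos : 0 < μ O := open_pos hinv hOo ⟨pr 1, 1, mem_interior_iff_mem_nhds.2 hW1, rfl⟩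
  refine ⟨(lam n) V / μ O, ENNReal.div_ne_top hVc.measure_lt_top.ne hOpos.ne', fun h hh => ?_⟩
  have hmeas : Measurable (fun p : XSpace n × SLn n => h (rightTranslate n p.2 p.1)) :=
    hh.comp (measurable_act n)
  have e1 : ∫⁻ x, ∫⁻ g in V, h (rightTranslate n g x) ∂(lam n) ∂μ = (lam n) V * ∫⁻ x, h x ∂μ := by
    rw [lintegral_lintegral_swap hmeas.aemeasurable]
    have : ∀ g : SLn n, ∫⁻ x, h (rightTranslate n g x) ∂μ = ∫⁻ x, h x ∂μ := fun g =>
      (mp_rT hinv g).lintegral_comp hh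
    simp [this, mul_comm]
  have e2 : (∫⁻ g in K, h (pr g) ∂(lam n)) * μ O ≤
      ∫⁻ x, ∫⁻ g in V, h (rightTranslate n g x) ∂(lam n) ∂μ := by
    calc (∫⁻ g in K, h (pr g) ∂(lam n)) * μ O = ∫⁻ x in O, (∫⁻ g in K, h (pr g) ∂(lam n)) ∂μ := by
          simp
      _ ≤ ∫⁻ x in O, ∫⁻ g in V, h (rightTranslate n g x) ∂(lam n) ∂μ := by
          refine setLIntegral_mono' hOo.measurableSet ?_
          rintro x ⟨w, hw, rfl⟩
          rw [← lintegral_indicator hK.measurableSet, ← lintegral_indicator hVc.measurableSet,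
            ← lintegral_mul_left_eq_self _ w]
          refine lintegral_mono fun g => ?_
          by_cases hg : w * g ∈ K
          · have : g ∈ V := ⟨w⁻¹, by simpa using interior_subset hw, w * g, hg, by simp⟩
            simp [hg, this]
          · simp [hg]
      _ ≤ _ := setLIntegral_le_lintegral _ _
  rw [e1] at e2
  rw [ENNReal.div_eq_inv_mul, mul_assoc, ← ENNReal.div_eq_inv_mul,
    ENNReal.le_div_iff_mul_le (Or.inl hOpos.ne') (Or.inl (measure_ne_top _ _))]
  exact e2

lemma ergodic_all [IsProbabilityMeasure μ] (hinv : ∀ g, Measure.map (rightTranslate n g) μ = μ)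
    (v : XSpace n → ℝ) (hv : Measurable v)
    (hvi : ∀ g, (fun x => v (rightTranslate n g x)) =ᵐ[μ] v) : ∃ c, v =ᵐ[μ] fun _ => c := by
  have hm : Measurable (fun p : XSpace n × SLn n => v (rightTranslate n p.2 p.1)) :=
    hv.comp (measurable_act n)
  have hS : MeasurableSet {p : XSpace n × SLn n | v (rightTranslate n p.2 p.1) = v p.1} :=
    measurableSet_eq_fun hm (hv.comp measurable_fst)
  have h1 : ∀ᵐ x ∂μ, ∀ᵐ g ∂(lam n), v (rightTranslate n g x) = v x := by
    rw [Measure.ae_ae_comm hS]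
    exact .of_forall hvi
  obtain ⟨x0, hx0⟩ := h1.exists
  obtain ⟨g0, rfl⟩ := pr_surj x0
  have hN : MeasurableSet {x | v x = v (pr g0)} := measurableSet_eq_fun hv measurable_const
  have h2 : ∀ w : SLn n, ∀ᵐ g ∂(lam n), v (pr (w * g)) = v (pr g0) := by
    intro w
    have := (measurePreserving_mul_left (lam n) (g0⁻¹ * w)).quasiMeasurePreserving.ae hx0
    simpa [← mul_assoc] using this
  refine ⟨v (pr g0), ?_⟩
  have h3 : ∀ᵐ x ∂μ, ∀ᵐ g ∂(lam n), v (rightTranslate n g x) = v (pr g0) := by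
    refine .of_forall fun x => ?_
    obtain ⟨w, rfl⟩ := pr_surj x
    exact h2 w
  have hS2 : MeasurableSet {p : XSpace n × SLn n | v (rightTranslate n p.2 p.1) = v (pr g0)} :=
    measurableSet_eq_fun hm measurable_const
  rw [Measure.ae_ae_comm hS2] at h3
  obtain ⟨g, hg⟩ := h3.exists
  have := (mp_rT hinv g⁻¹).quasiMeasurePreserving.ae hg
  filter_upwards [this] with x hx
  simpa [← rT_mul] using hx

end measure

end part2

section part3
open Filter Topology

section mautner
variable {n : ℕ}

/-- elementary matrix -/
abbrev el {i k : Fin n} (h : i ≠ k) (t : ℝ) : SLn n := Matrix.SpecialLinearGroup.transvection h t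

abbrev dg {i k : Fin n} (h : i ≠ k) (a : ℝ) (ha : a ≠ 0) : SLn n :=
  Matrix.SpecialLinearGroup.diag2n h a ha

lemma tendsto_SL_iff {ι : Type*} {l : Filter ι} {F : ι → SLn n} {g : SLn n} :
    Tendsto F l (𝓝 g) ↔ Tendsto (fun i => (F i : Matrix (Fin n) (Fin n) ℝ)) l (𝓝 g.1) :=
  (isClosedEmbedding_coe n).isEmbedding.tendsto_nhds_iff

lemma continuous_el {i k : Fin n} (h : i ≠ k) : Continuous (el h) := by
  rw [(isClosedEmbedding_coe n).isEmbedding.continuous_iff]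
  have : ((fun g : SLn n => (g : Matrix (Fin n) (Fin n) ℝ)) ∘ el h) =
    fun t => 1 + Matrix.single i k t := rfl
  rw [this]
  refine continuous_const.add ?_
  refine continuous_matrix fun a b => ?_
  simp only [Matrix.single_apply]
  split_ifs <;> fun_prop

lemma el_zero {i k : Fin n} (h : i ≠ k) : el h 0 = 1 :=
  Matrix.SpecialLinearGroup.transvection_coeff_zero h

lemma el_add {i k : Fin n} (h : i ≠ k) (s t : ℝ) : el h (s + t) = el h s * el h t :=
  Matrix.SpecialLinearGroup.transvection_add h s t

lemma el_inv {i k : Fin n} (h : i ≠ k) (t : ℝ) : (el h t)⁻¹ = el h (-t) :=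
  Matrix.SpecialLinearGroup.transvection_inv h t

lemma el_pow {i k : Fin n} (h : i ≠ k) (t : ℝ) (m : ℕ) : (el h t) ^ m = el h (m * t) := by
  induction m with
  | zero => simp
  | succ m ih => rw [pow_succ, ih, ← el_add]; congr 1; push_cast; ring

/-- Mautner closed subgroups -/
def MClosed (S : Subgroup (SLn n)) : Prop :=
  ∀ (x y g : ℕ → SLn n) (h : SLn n), (∀ m, x m ∈ S) → (∀ m, y m ∈ S) →
    Tendsto g atTop (𝓝 1) → Tendsto (fun m => x m * g m * y m) atTop (𝓝 h) → h ∈ S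

lemma conj_mem {S : Subgroup (SLn n)} (hS : MClosed S) {D : SLn n} (hD : D ∈ S) {r c : Fin n}
    (h : r ≠ c) {κ : ℝ} (hk : 1 < κ) (hc : ∀ t, D * el h t * D⁻¹ = el h (κ * t)) (t : ℝ) :
    el h t ∈ S := by
  have hpow : ∀ (m : ℕ) (t : ℝ), D ^ m * el h t * (D ^ m)⁻¹ = el h (κ ^ m * t) := by
    intro m
    induction m with
    | zero => simp
    | succ m ih =>
      intro t
      rw [pow_succ', show D * D ^ m * el h t * (D * D ^ m)⁻¹ = D * (D ^ m * el h t * (D ^ m)⁻¹) * D⁻¹ by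
        group, ih, hc, ← mul_assoc, ← pow_succ']
  refine hS (fun m => D ^ m) (fun m => (D ^ m)⁻¹) (fun m => el h ((κ ^ m)⁻¹ * t)) _
    (fun m => pow_mem hD m) (fun m => inv_mem (pow_mem hD m)) ?_ ?_
  · have h1 : Tendsto (fun m : ℕ => (κ ^ m)⁻¹ * t) atTop (𝓝 (0 * t)) :=
      (tendsto_inv_atTop_zero.comp (tendsto_pow_atTop_atTop_of_one_lt hk)).mul_const t
    rw [zero_mul] at h1
    have := (continuous_el h).tendsto 0
    rw [el_zero] at this
    exact this.comp h1
  · refine tendsto_const_nhds.congr fun m => ?_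
    rw [hpow, ← mul_assoc, mul_inv_cancel₀ (by positivity), one_mul]

lemma conj_mem' {S : Subgroup (SLn n)} (hS : MClosed S) {D : SLn n} (hD : D ∈ S) {r c : Fin n}
    (h : r ≠ c) {κ : ℝ} (hk0 : 0 < κ) (hk : κ ≠ 1) (hc : ∀ t, D * el h t * D⁻¹ = el h (κ * t))
    (t : ℝ) : el h t ∈ S := by
  rcases lt_or_gt_of_ne hk with h1 | h1
  · refine conj_mem hS (inv_mem hD) h (one_lt_inv_iff₀.2 ⟨hk0, h1⟩) (fun t => ?_) t
    have := hc (κ⁻¹ * t)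
    rw [← mul_assoc, mul_inv_cancel₀ hk0.ne', one_mul] at this
    rw [← this]; group
  · exact conj_mem hS hD h h1 hc t

lemma dg_conj {i k : Fin n} (h : i ≠ k) {r c : Fin n} (h' : r ≠ c) (t : ℝ) :
    dg h 2 two_ne_zero * el h' t * (dg h 2 two_ne_zero)⁻¹ =
      el h' ((if r = i then 2 else if r = k then 2⁻¹ else 1) /
        (if c = i then 2 else if c = k then 2⁻¹ else 1) * t) := by
  rw [mul_inv_eq_iff_eq_mul]
  ext a b
  simp only [Matrix.SpecialLinearGroup.coe_mul, Matrix.SpecialLinearGroup.transvection_coe,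
    Matrix.SpecialLinearGroup.diag2n_coe, Matrix.diagonal_mul, Matrix.mul_diagonal,
    Matrix.add_apply, Matrix.one_apply, Matrix.single_apply]
  grind

lemma el_dg {i k : Fin n} (h : i ≠ k) {a : ℝ} (ha : a ≠ 0) {x y z w : ℝ} (h1 : 1 + x * y = a)
    (h2 : a * z + x = 0) (h3 : a * y = w) :
    el h x * el h.symm y * el h z = dg h a ha * el h.symm w := by
  have h4 : a * (y * z + 1) = 1 := by linear_combination y * h2 - h1
  have h4 : y * z + 1 = a⁻¹ := eq_inv_of_mul_eq_one_right h4
  have h5 : x * y * z = - x - z := by linear_combination h2 + z * h1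
  have h6 : a⁻¹ * w = y := by rw [← h3]; field_simp
  have hz : Matrix.single i k x * Matrix.single i k z = 0 :=
    Matrix.single_mul_single_of_ne _ _ _ _ h.symm _
  ext p q
  simp only [Matrix.SpecialLinearGroup.coe_mul, Matrix.SpecialLinearGroup.transvection_coe,
        Matrix.SpecialLinearGroup.diag2n_coe, mul_add, add_mul, mul_one, one_mul,
        Matrix.add_apply, Matrix.one_apply, Matrix.single_apply,
        Matrix.single_mul_single_same, Matrix.diagonal_mul,
        hz, Matrix.zero_apply]
  grind

lemma dg_mem {S : Subgroup (SLn n)} (hS : MClosed S) {i k : Fin n} (h : i ≠ k)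
    (h1 : el h 1 ∈ S) : dg h 2 two_ne_zero ∈ S := by
  have hpow : ∀ m : ℤ, el h m ∈ S := by
    intro m
    obtain ⟨k, rfl | rfl⟩ := m.eq_nat_or_neg
    · have := pow_mem h1 k
      rw [el_pow] at this
      simpa using this
    · have := inv_mem (pow_mem h1 k)
      rw [el_pow, el_inv] at this
      simpa using this
  refine hS (fun m => el h ((2 * (m + 1) : ℤ))) (fun m => el h ((-(m + 1) : ℤ)))
    (fun m => el h.symm (1 / (2 * (m + 1 : ℝ)))) _ (fun m => hpow _) (fun m => hpow _) ?_ ?_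
  · have h1 : Tendsto (fun m : ℕ => 1 / (2 * (m + 1 : ℝ))) atTop (𝓝 0) := by
      have := (tendsto_one_div_add_atTop_nhds_zero_nat (𝕜 := ℝ)).const_mul (1/2)
      rw [mul_zero] at this
      refine this.congr fun m => ?_
      field_simp
    have := (continuous_el h.symm).tendsto 0
    rw [el_zero] at this
    exact this.comp h1
  · have key : ∀ m : ℕ, el h ((2 * (m + 1) : ℤ)) * el h.symm (1 / (2 * (m + 1 : ℝ))) *
        el h ((-(m + 1) : ℤ)) = dg h 2 two_ne_zero * el h.symm (1 / (m + 1 : ℝ)) := by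
      intro m
      have hm : (m + 1 : ℝ) ≠ 0 := by positivity
      apply el_dg <;> push_cast <;> field_simp <;> ring
    have h1 : Tendsto (fun m : ℕ => el h.symm (1 / (m + 1 : ℝ))) atTop (𝓝 1) := by
      have := (continuous_el h.symm).tendsto 0
      rw [el_zero] at this
      exact this.comp (tendsto_one_div_add_atTop_nhds_zero_nat (𝕜 := ℝ))
    have h2 := h1.const_mul (dg h 2 two_ne_zero)
    rw [mul_one] at h2
    exact h2.congr fun m => (key m).symm

lemma mclosed_top (hn : 2 ≤ n) {S : Subgroup (SLn n)} (hS : MClosed S) {i k : Fin n} (h : i ≠ k)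
    (h1 : el h 1 ∈ S) : S = ⊤ := by
  have step : ∀ {i k : Fin n} (h : i ≠ k), el h 1 ∈ S → ∀ {r c : Fin n} (h' : r ≠ c),
      (r = i ∨ r = k ∨ c = i ∨ c = k) → ∀ t, el h' t ∈ S := by
    intro i k h h1 r c h' hor
    refine conj_mem' hS (dg_mem hS h h1) h' ?_ ?_ (dg_conj h h')
    · positivity
    · grind
  have all : ∀ {r c : Fin n} (h' : r ≠ c) t, el h' t ∈ S := by
    intro r c h'
    by_cases hr : i = r
    · exact step h h1 h' (by simp [hr])
    · exact step hr (step h h1 hr (by simp) 1) h' (by simp)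
  have : Nontrivial (Fin n) := ⟨i, k, h⟩
  rw [eq_top_iff]
  intro g _
  refine Matrix.SpecialLinearGroup.diagonal_transvection_induction' (fun g => g ∈ S) g ?_ ?_ ?_
  · intro i j hij a ha
    have := el_dg hij ha (x := a - 1) (y := 1) (z := - (a - 1) / a) (w := a) (by ring)
      (by field_simp; ring) (by ring)
    rw [← mul_inv_eq_iff_eq_mul] at this
    have e : Matrix.SpecialLinearGroup.diag2n hij a ha = _ := this.symm
    rw [e]
    exact mul_mem (mul_mem (mul_mem (all _ _) (all _ _)) (all _ _)) (inv_mem (all _ _))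
  · intro i j hij a
    exact all hij a
  · intro a b ha hb
    exact mul_mem ha hb

end mautner

end part3

section part4
open Filter Topology

section koopman
variable {n : ℕ} {μ : Measure (XSpace n)}

/-- Koopman operators -/
def Kp (hinv : ∀ g, Measure.map (rightTranslate n g) μ = μ) (g : SLn n) :
    Lp ℝ 2 μ →ₗᵢ[ℝ] Lp ℝ 2 μ :=
  Lp.compMeasurePreservingₗᵢ ℝ (rightTranslate n g) (mp_rT hinv g)

variable (hinv : ∀ g, Measure.map (rightTranslate n g) μ = μ)

lemma Kp_coe (g : SLn n) (v : Lp ℝ 2 μ) :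
    (Kp hinv g v : XSpace n → ℝ) =ᵐ[μ] fun x => v (rightTranslate n g x) :=
  Lp.coeFn_compMeasurePreserving v (mp_rT hinv g)

lemma Kp_toLp (g : SLn n) {h : XSpace n → ℝ} (hh : MemLp h 2 μ)
    (hh' : MemLp (fun x => h (rightTranslate n g x)) 2 μ) :
    Kp hinv g hh.toLp = hh'.toLp := rfl

lemma Kp_mul (g h : SLn n) (v : Lp ℝ 2 μ) : Kp hinv (g * h) v = Kp hinv g (Kp hinv h v) := by
  apply Lp.ext
  filter_upwards [Kp_coe hinv (g * h) v, Kp_coe hinv g (Kp hinv h v),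
    (mp_rT hinv g).quasiMeasurePreserving.ae (Kp_coe hinv h v)] with x h1 h2 h3
  rw [h1, h2, h3, rT_mul]

lemma Kp_one (v : Lp ℝ 2 μ) : Kp hinv 1 v = v := by
  apply Lp.ext
  filter_upwards [Kp_coe hinv 1 v] with x h1
  rw [h1, rT_one]

lemma Kp_iter (g : SLn n) (k : ℕ) (v : Lp ℝ 2 μ) : (Kp hinv g)^[k] v = Kp hinv (g ^ k) v := by
  induction k with
  | zero => simp [Kp_one]
  | succ k ih => rw [Function.iterate_succ_apply', ih, pow_succ', Kp_mul]

/-- continuous vectors -/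
def CV : Submodule ℝ (Lp ℝ 2 μ) where
  carrier := {v | Tendsto (fun g => Kp hinv g v) (𝓝 1) (𝓝 v)}
  add_mem' {a b} ha hb := by
    simp only [Set.mem_ofPred_eq, map_add] at *
    exact ha.add hb
  zero_mem' := by simp
  smul_mem' c v hv := by
    simp only [Set.mem_ofPred_eq, map_smul] at *
    exact hv.const_smul c

lemma mem_CV {v : Lp ℝ 2 μ} : v ∈ CV hinv ↔ Tendsto (fun g => Kp hinv g v) (𝓝 1) (𝓝 v) := Iff.rfl

lemma CV_Kp {v : Lp ℝ 2 μ} (hv : v ∈ CV hinv) (k : SLn n) : Kp hinv k v ∈ CV hinv := by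
  rw [mem_CV] at *
  have h1 : Tendsto (fun g : SLn n => k⁻¹ * g * k) (𝓝 1) (𝓝 1) := by
    have h : Continuous (fun g : SLn n => k⁻¹ * g * k) := by fun_prop
    simpa using h.tendsto 1
  have h2 := ((Kp hinv k).continuous.tendsto v).comp (hv.comp h1)
  refine h2.congr fun g => ?_
  simp only [Function.comp]
  rw [← Kp_mul, ← Kp_mul]
  congr 2
  group

lemma CV_closed : IsClosed (CV hinv : Set (Lp ℝ 2 μ)) := by
  rw [← closure_subset_iff_isClosed]
  intro v hv
  change Tendsto _ _ _
  rw [Metric.tendsto_nhds]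
  intro ε hε
  obtain ⟨w, hw, hvw⟩ := Metric.mem_closure_iff.1 hv (ε/3) (by linarith)
  have := Metric.tendsto_nhds.1 ((mem_CV hinv).1 hw) (ε/3) (by linarith)
  filter_upwards [this] with g hg
  have h1 : dist (Kp hinv g v) (Kp hinv g w) = dist v w := (Kp hinv g).dist_map v w
  have h2 := dist_triangle4 (Kp hinv g v) (Kp hinv g w) w v
  rw [dist_comm w v] at h2
  linarith

/-- stabilizer -/
def Stab (v : Lp ℝ 2 μ) : Subgroup (SLn n) where
  carrier := {g | Kp hinv g v = v}
  mul_mem' {a b} ha hb := by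
    simp only [Set.mem_ofPred_eq] at *
    rw [Kp_mul, hb, ha]
  one_mem' := Kp_one hinv v
  inv_mem' {a} ha := by
    simp only [Set.mem_ofPred_eq] at *
    conv_lhs => rw [← ha]
    rw [← Kp_mul, inv_mul_cancel, Kp_one]

lemma mem_Stab {v : Lp ℝ 2 μ} {g : SLn n} : g ∈ Stab hinv v ↔ Kp hinv g v = v := Iff.rfl

lemma Stab_mclosed {v : Lp ℝ 2 μ} (hv : v ∈ CV hinv) : MClosed (Stab hinv v) := by
  intro x y g h hx hy hg hh
  rw [mem_CV] at hv
  have h1 : Tendsto (fun m => Kp hinv (x m * g m * y m) v) atTop (𝓝 (Kp hinv h v)) := by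
    have e1 : Tendsto (fun m => h⁻¹ * (x m * g m * y m)) atTop (𝓝 1) := by
      have := hh.const_mul h⁻¹
      rwa [inv_mul_cancel] at this
    have e2 := ((Kp hinv h).continuous.tendsto v).comp (hv.comp e1)
    refine e2.congr fun m => ?_
    simp only [Function.comp]
    rw [← Kp_mul, mul_inv_cancel_left]
  have h2 : Tendsto (fun m => Kp hinv (x m * g m * y m) v) atTop (𝓝 v) := by
    rw [tendsto_iff_dist_tendsto_zero]
    have e := tendsto_iff_dist_tendsto_zero.1 (hv.comp hg)
    refine e.congr fun m => ?_
    simp only [Function.comp]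
    rw [Kp_mul, Kp_mul, (mem_Stab hinv).1 (hy m)]
    have e3 := (Kp hinv (x m)).dist_map (Kp hinv (g m) v) v
    rw [(mem_Stab hinv).1 (hx m)] at e3
    exact e3.symm
  exact tendsto_nhds_unique h1 h2

variable [IsProbabilityMeasure μ]

lemma RUC.cv {h : XSpace n → ℝ} (hh : RUC h) : (hh.memLp μ 2).toLp ∈ CV hinv := by
  rw [mem_CV, Metric.tendsto_nhds]
  intro ε hε
  filter_upwards [hh.unif (ε/2) (by linarith)] with g hg
  rw [Kp_toLp hinv g (hh.memLp μ 2) ((hh.translate g).memLp μ 2), dist_eq_norm, ← MemLp.toLp_sub]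
  have : ‖(((hh.translate g).memLp μ 2).sub (hh.memLp μ 2)).toLp‖ ≤ ε / 2 := by
    refine (Lp.norm_le_of_ae_bound (C := ε/2) (by linarith) ?_).trans ?_
    · filter_upwards [MemLp.coeFn_toLp (((hh.translate g).memLp μ 2).sub (hh.memLp μ 2))] with x hx
      rw [hx]
      exact hg x
    · simp [measureUnivNNReal]
  linarith

/-- elements generating `SL_n` in the Mautner sense -/
def Good (u : SLn n) : Prop := ∀ S : Subgroup (SLn n), MClosed S → u ∈ S → S = ⊤

lemma good_el (hn : 2 ≤ n) {i k : Fin n} (h : i ≠ k) : Good (el h 1) :=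
  fun _ hS hu => mclosed_top hn hS h hu

lemma Good.inv {u : SLn n} (hu : Good u) : Good u⁻¹ :=
  fun S hS h => hu S hS (by simpa using inv_mem h)

lemma good_fixed {u : SLn n} (hu : Good u) {v : Lp ℝ 2 μ} (hv : v ∈ CV hinv)
    (hf : Kp hinv u v = v) : ∃ c : ℝ, v = (memLp_const (μ := μ) (p := 2) c).toLp := by
  have h1 := hu _ (Stab_mclosed hinv hv) hf
  obtain ⟨c, hc⟩ := ergodic_all hinv v (Lp.stronglyMeasurable v).measurable (fun g => by
    have hg : Kp hinv g v = v := by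
      have : g ∈ Stab hinv v := by rw [h1]; trivial
      exact this
    have := Kp_coe hinv g v
    rw [hg] at this
    exact this.symm)
  refine ⟨c, Lp.ext ?_⟩
  filter_upwards [hc, MemLp.coeFn_toLp (memLp_const (μ := μ) (p := 2) c)] with x h1 h2
  rw [h1, h2]

/-- constants in `L²` -/
def cst (μ : Measure (XSpace n)) [IsProbabilityMeasure μ] (c : ℝ) : Lp ℝ 2 μ :=
  (memLp_const (μ := μ) (p := 2) c).toLp

lemma inner_toLp {f h : XSpace n → ℝ} (hf : MemLp f 2 μ) (hh : MemLp h 2 μ) :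
    inner ℝ hf.toLp hh.toLp = ∫ x, f x * h x ∂μ := by
  rw [MeasureTheory.L2.inner_def]
  refine integral_congr_ae ?_
  filter_upwards [hf.coeFn_toLp, hh.coeFn_toLp] with x h1 h2
  rw [h1, h2]
  simp [mul_comm]

lemma vonNeumann (u : SLn n) : ∃ P : Lp ℝ 2 μ → Lp ℝ 2 μ,
    (∀ v, Tendsto (fun H => birkhoffAverage ℝ (Kp hinv u) _root_.id H v) atTop (𝓝 (P v))) ∧
    (∀ v, Kp hinv u (P v) = P v) ∧ (∀ v w, inner ℝ (P v) w = inner ℝ v (P w)) := by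
  set T := (Kp hinv u).toContinuousLinearMap
  refine ⟨fun v => ((T.eqLocus (1 : Lp ℝ 2 μ →L[ℝ] Lp ℝ 2 μ)).orthogonalProjectionOnto v : Lp ℝ 2 μ),
    fun v => ?_, fun v => ?_, fun v w => ?_⟩
  · exact ContinuousLinearMap.tendsto_birkhoffAverage_orthogonalProjection T
      ((Kp hinv u).norm_toContinuousLinearMap_le) v
  · exact ((T.eqLocus (1 : Lp ℝ 2 μ →L[ℝ] Lp ℝ 2 μ)).orthogonalProjectionOnto v).2
  · exact Submodule.inner_starProjection_left_eq_right _ v w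

lemma birkhoff_toLp (u : SLn n) {h : XSpace n → ℝ} (hh : RUC h) (H : ℕ)
    (hm : MemLp (fun x => (H : ℝ)⁻¹ * ∑ b ∈ Finset.range H, h (rightTranslate n (u ^ b) x)) 2 μ) :
    birkhoffAverage ℝ (Kp hinv u) _root_.id H (hh.memLp μ 2).toLp = hm.toLp := by
  have key : ∀ H : ℕ, ∀ hm : MemLp (fun x => ∑ b ∈ Finset.range H, h (rightTranslate n (u ^ b) x)) 2 μ,
      ∑ b ∈ Finset.range H, Kp hinv (u ^ b) (hh.memLp μ 2).toLp = hm.toLp := by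
    intro H
    induction H with
    | zero => intro hm; simp only [Finset.range_zero, Finset.sum_empty]; rfl
    | succ H ih =>
      intro hm
      have h1 : MemLp (fun x => ∑ b ∈ Finset.range H, h (rightTranslate n (u ^ b) x)) 2 μ :=
        (RUC.sum _ fun b _ => hh.translate (u ^ b)).memLp μ 2
      rw [Finset.sum_range_succ, ih h1,
        Kp_toLp hinv _ (hh.memLp μ 2) ((hh.translate (u ^ H)).memLp μ 2), ← MemLp.toLp_add]
      congr 1
      funext x
      rw [Finset.sum_range_succ]; rfl
  have h1 : MemLp (fun x => ∑ b ∈ Finset.range H, h (rightTranslate n (u ^ b) x)) 2 μ :=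
    (RUC.sum _ fun b _ => hh.translate (u ^ b)).memLp μ 2
  rw [birkhoffAverage, birkhoffSum]
  simp only [id, Kp_iter]
  rw [key H h1, ← MemLp.toLp_const_smul]
  rfl

lemma ME_lp {u : SLn n} (hu : Good u) {h : XSpace n → ℝ} (hh : RUC h)
    {P : Lp ℝ 2 μ → Lp ℝ 2 μ}
    (hP : ∀ v, Tendsto (fun H => birkhoffAverage ℝ (Kp hinv u) _root_.id H v) atTop (𝓝 (P v)))
    (hP2 : ∀ v, Kp hinv u (P v) = P v) :
    P (hh.memLp μ 2).toLp = cst μ (∫ x, h x ∂μ) := by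
  set v := (hh.memLp μ 2).toLp
  have hcv : P v ∈ CV hinv := by
    refine (CV_closed hinv).mem_of_tendsto (hP v) (.of_forall fun H => ?_)
    rw [birkhoffAverage, birkhoffSum]
    refine (CV hinv).smul_mem _ ((CV hinv).sum_mem fun k _ => ?_)
    simp only [id]
    rw [Kp_iter]
    exact CV_Kp hinv (hh.cv hinv) _
  obtain ⟨c, hc⟩ := good_fixed hinv hu hcv (hP2 v)
  have h1 : ∀ w : Lp ℝ 2 μ, ∀ g, inner ℝ (Kp hinv g w) (cst μ 1) = inner ℝ w (cst μ 1) := by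
    intro w g
    have : Kp hinv g (cst μ 1) = cst μ 1 := Kp_toLp hinv g (memLp_const 1) (memLp_const 1)
    conv_lhs => rw [← this]
    exact (Kp hinv g).inner_map_map _ _
  have h2 : ∀ H : ℕ, 1 ≤ H → inner ℝ (birkhoffAverage ℝ (Kp hinv u) _root_.id H v) (cst μ 1) =
      inner ℝ v (cst μ 1) := by
    intro H hH
    rw [birkhoffAverage, birkhoffSum, inner_smul_left, sum_inner]
    simp only [id, Kp_iter, h1]
    have : (H : ℝ) ≠ 0 := by positivity
    simp
    field_simp
  have h3 : inner ℝ (P v) (cst μ 1) = inner ℝ v (cst μ 1) := by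
    have e1 := (hP v).inner (tendsto_const_nhds (x := cst μ 1)) (𝕜 := ℝ)
    refine tendsto_nhds_unique e1 (tendsto_const_nhds.congr' ?_)
    filter_upwards [eventually_ge_atTop 1] with H hH
    rw [h2 H hH]
  rw [hc] at h3 ⊢
  unfold cst at h3
  rw [inner_toLp, inner_toLp] at h3
  have : c = ∫ x, h x ∂μ := by simpa using h3
  rw [this, cst]

/-- averages along powers of `u` -/
def avgU (u : SLn n) (H : ℕ) (h : XSpace n → ℝ) (x : XSpace n) : ℝ :=
  (H : ℝ)⁻¹ * ∑ b ∈ Finset.range H, h (rightTranslate n (u ^ b) x)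

lemma RUC.avgU {h : XSpace n → ℝ} (hh : RUC h) (u : SLn n) (H : ℕ) : RUC (avgU u H h) :=
  (RUC.sum _ fun b _ => hh.translate (u ^ b)).const_mul _

lemma ME_two (hinv : ∀ g, Measure.map (rightTranslate n g) μ = μ) {u : SLn n} (hu : Good u) {h : XSpace n → ℝ} (hh : RUC h) :
    Tendsto (fun H => ∫ x, (avgU u H h x - ∫ y, h y ∂μ) ^ 2 ∂μ) atTop (𝓝 0) := by
  obtain ⟨P, hP, hP2, -⟩ := vonNeumann hinv u
  have h1 := hP (hh.memLp μ 2).toLp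
  rw [ME_lp hinv hu hh hP hP2] at h1
  have h2 := (tendsto_iff_norm_sub_tendsto_zero.1 h1).pow 2
  rw [zero_pow two_ne_zero] at h2
  refine h2.congr fun H => ?_
  have hm : MemLp (fun x => (H : ℝ)⁻¹ * ∑ b ∈ Finset.range H, h (rightTranslate n (u ^ b) x)) 2 μ :=
    (hh.avgU u H).memLp μ 2
  rw [birkhoff_toLp hinv u hh H hm, cst, ← MemLp.toLp_sub, ← real_inner_self_eq_norm_sq, inner_toLp]
  refine integral_congr_ae (.of_forall fun x => ?_)
  simp only [avgU, Pi.sub_apply]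
  ring

lemma ME_one (hinv : ∀ g, Measure.map (rightTranslate n g) μ = μ) {u : SLn n} (hu : Good u) {h : XSpace n → ℝ} (hh : RUC h) :
    Tendsto (fun H => ∫ x, |avgU u H h x - ∫ y, h y ∂μ| ∂μ) atTop (𝓝 0) := by
  have h2 := ME_two hinv hu hh
  rw [Metric.tendsto_nhds] at h2 ⊢
  intro ε hε
  filter_upwards [h2 (ε ^ 2) (by positivity)] with H hH
  have hr : RUC (fun x => avgU u H h x - ∫ y, h y ∂μ) := (hh.avgU u H).sub (RUC.const _)
  have e1 : ∫ x, |avgU u H h x - ∫ y, h y ∂μ| ∂μ ≤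
      ∫ x, (ε / 2 + 1 / (2 * ε) * (avgU u H h x - ∫ y, h y ∂μ) ^ 2) ∂μ := by
    refine integral_mono (hr.abs.integrable μ)
      (((RUC.const _).add (hr.sq.const_mul _)).integrable μ) fun x => ?_
    dsimp only
    have hs := sq_nonneg (|avgU u H h x - ∫ y, h y ∂μ| - ε)
    rw [sub_sq, sq_abs] at hs
    have : ε / 2 + 1 / (2 * ε) * (avgU u H h x - ∫ y, h y ∂μ) ^ 2 -
      |avgU u H h x - ∫ y, h y ∂μ| = 1 / (2 * ε) * ((avgU u H h x - ∫ y, h y ∂μ) ^ 2 -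
        2 * |avgU u H h x - ∫ y, h y ∂μ| * ε + ε ^ 2) := by
      field_simp
      ring
    have h3 : 0 ≤ 1 / (2 * ε) * ((avgU u H h x - ∫ y, h y ∂μ) ^ 2 -
        2 * |avgU u H h x - ∫ y, h y ∂μ| * ε + ε ^ 2) := by positivity
    linarith
  rw [integral_add (integrable_const _) ((hr.sq.const_mul _).integrable μ), integral_const_mul] at e1
  have e2 : 0 ≤ ∫ x, |avgU u H h x - ∫ y, h y ∂μ| ∂μ := integral_nonneg fun x => abs_nonneg _
  have e3 : 0 ≤ ∫ x, (avgU u H h x - ∫ y, h y ∂μ) ^ 2 ∂μ := integral_nonneg fun x => sq_nonneg _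
  rw [Real.dist_0_eq_abs, abs_of_nonneg e3] at hH
  rw [Real.dist_0_eq_abs, abs_of_nonneg e2]
  have e4 : 1 / (2 * ε) * ∫ x, (avgU u H h x - ∫ y, h y ∂μ) ^ 2 ∂μ < 1 / (2 * ε) * ε ^ 2 := by
    gcongr
  have e5 : 1 / (2 * ε) * ε ^ 2 = ε / 2 := by field_simp
  simp at e1
  simp at e4 e5
  linarith

end koopman

end part4

section part5
open Filter Topology

section mixing
variable {n : ℕ} {μ : Measure (XSpace n)} [IsProbabilityMeasure μ]

lemma density (hinv : ∀ g, Measure.map (rightTranslate n g) μ = μ)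
    {K K' : Set (SLn n)} (hK' : IsCompact K') (hKK : K ⊆ K') :
    ∃ ρ : XSpace n → ℝ, MemLp ρ 2 μ ∧ ∀ h : XSpace n → ℝ, Measurable h →
      ∫ g in K, h (pr g) ∂(lam n) = ∫ x, ρ x * h x ∂μ := by
  obtain ⟨C, hC, hCb⟩ := local_ac hinv hK'
  have hfin : IsFiniteMeasure ((lam n).restrict K) :=
    ⟨by simpa using (measure_mono hKK).trans_lt hK'.measure_lt_top⟩
  set η := Measure.map pr ((lam n).restrict K) with hη
  have hprm : Measurable (pr (n := n)) := (continuous_pr n).measurable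
  have hle : ∀ s, MeasurableSet s → η s ≤ C * μ s := by
    intro s hs
    have := hCb (s.indicator 1) (measurable_one.indicator hs)
    rw [lintegral_indicator_one hs] at this
    refine le_trans ?_ this
    rw [hη, ← lintegral_indicator_one hs, lintegral_map (measurable_one.indicator hs) hprm]
    exact lintegral_mono_set hKK
  have hac : η ≪ μ := by
    refine Measure.AbsolutelyContinuous.mk fun s hs h0 => ?_
    have := hle s hs
    rw [h0, mul_zero] at this
    simpa using this
  have hρ : ∀ᵐ x ∂μ, η.rnDeriv μ x ≤ C := by
    refine ae_le_of_forall_setLIntegral_le_of_sigmaFinite (Measure.measurable_rnDeriv _ _) ?_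
    intro s hs _
    rw [setLIntegral_const, ← withDensity_apply _ hs, Measure.withDensity_rnDeriv_eq _ _ hac]
    exact hle s hs
  refine ⟨fun x => (η.rnDeriv μ x).toReal, ?_, fun h hh => ?_⟩
  · refine MemLp.of_bound (Measure.measurable_rnDeriv _ _).ennreal_toReal.aestronglyMeasurable
      C.toReal ?_
    filter_upwards [hρ] with x hx
    rw [Real.norm_of_nonneg ENNReal.toReal_nonneg]
    exact ENNReal.toReal_mono hC hx
  · have := integral_rnDeriv_smul (f := h) hac
    simp only [smul_eq_mul] at this
    rw [this, hη, integral_map hprm.aemeasurable hh.aestronglyMeasurable]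

lemma mixing (hinv : ∀ g, Measure.map (rightTranslate n g) μ = μ)
    {K K' : Set (SLn n)} (hK' : IsCompact K') (hKK : K ⊆ K')
    {a : ℕ → SLn n} {u : SLn n} (hu : Good u)
    (hau : ∀ b : ℕ, Tendsto (fun q => (a q)⁻¹ * u ^ b * a q) atTop (𝓝 1))
    {F : XSpace n → ℝ} (hF : RUC F) :
    Tendsto (fun q => ∫ g in K, F (pr (g * a q)) ∂(lam n)) atTop
      (𝓝 ((lam n).real K * ∫ x, F x ∂μ)) := by
  obtain ⟨ρ, hρ, hρη⟩ := density hinv hK' hKK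
  have hfin : IsFiniteMeasure ((lam n).restrict K) :=
    ⟨by simpa using (measure_mono hKK).trans_lt hK'.measure_lt_top⟩
  set G := fun x => F x - ∫ y, F y ∂μ with hG
  have hGr : RUC G := hF.sub (RUC.const _)
  have hG0 : ∫ x, G x ∂μ = 0 := by
    rw [hG, integral_sub (hF.integrable μ) (integrable_const _)]; simp
  have hIntg : ∀ {h : XSpace n → ℝ}, RUC h → Integrable (fun g => h (pr g)) ((lam n).restrict K) := by
    intro h hh
    obtain ⟨D, hD⟩ := hh.bdd
    exact Integrable.of_bound (hh.measurable.comp (continuous_pr n).measurable).aestronglyMeasurable D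
      (.of_forall fun g => hD _)
  suffices hs : Tendsto (fun q => ∫ g in K, G (pr (g * a q)) ∂(lam n)) atTop (𝓝 0) by
    have := hs.add_const ((lam n).real K * ∫ x, F x ∂μ)
    rw [zero_add] at this
    refine this.congr fun q => ?_
    have e : ∫ g in K, G (pr (g * a q)) ∂(lam n) = ∫ g in K, F (pr (g * a q)) ∂(lam n) -
        ∫ g in K, (∫ y, F y ∂μ) ∂(lam n) :=
      integral_sub (hIntg (hF.translate (a q))) (integrable_const _)
    rw [e, setIntegral_const]
    simp
  obtain ⟨P, hP, hP2, hP3⟩ := vonNeumann hinv u⁻¹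
  obtain ⟨M, hM⟩ := hGr.bdd
  have hM0 : 0 ≤ M := (abs_nonneg _).trans (hM (pr 1))
  have hw : ∀ q, RUC (fun x => G (rightTranslate n (a q) x)) := fun q => hGr.translate (a q)
  rw [Metric.tendsto_nhds]
  intro ε hε
  set L := (lam n).real K
  have hL : 0 ≤ L := measureReal_nonneg
  have h1 := Metric.tendsto_nhds.1 (hP hρ.toLp) (ε / (2 * (M + 1))) (by positivity)
  obtain ⟨H, hH, hH1⟩ := (h1.and (eventually_ge_atTop 1)).exists
  have h2 : ∀ᶠ q in atTop, ∀ b ∈ Finset.range H, ∀ x,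
      |G (rightTranslate n ((a q)⁻¹ * u ^ b * a q) x) - G x| ≤ ε / (4 * (L + 1)) := by
    rw [eventually_all_finset]
    intro b _
    exact (hau b).eventually (hGr.unif _ (by positivity))
  filter_upwards [h2] with q hq
  set w := fun x => G (rightTranslate n (a q) x) with hwdef
  have hHr : (0 : ℝ) < H := by positivity
  have e1 : ∀ x, |avgU u H w x - w x| ≤ ε / (4 * (L + 1)) := by
    intro x
    have : avgU u H w x - w x = (H : ℝ)⁻¹ * ∑ b ∈ Finset.range H, (w (rightTranslate n (u ^ b) x) - w x) := by
      rw [Finset.sum_sub_distrib, avgU]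
      simp
      field_simp
    rw [this, abs_mul, abs_of_pos (inv_pos.2 hHr)]
    calc _ ≤ (H : ℝ)⁻¹ * ∑ b ∈ Finset.range H, ε / (4 * (L + 1)) := by
          gcongr
          refine (Finset.abs_sum_le_sum_abs _ _).trans (Finset.sum_le_sum fun b hb => ?_)
          have := hq b hb (rightTranslate n (a q) x)
          rwa [← rT_mul, show a q * ((a q)⁻¹ * u ^ b * a q) = u ^ b * a q by group, rT_mul] at this
      _ = _ := by simp; field_simp
  have e2 : |∫ g in K, avgU u H w (pr g) ∂(lam n) - ∫ g in K, w (pr g) ∂(lam n)| ≤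
      ε / (4 * (L + 1)) * L := by
    rw [← integral_sub (hIntg ((hw q).avgU u H)) (hIntg (hw q))]
    have := norm_integral_le_of_norm_le_const (μ := (lam n).restrict K)
      (f := fun g => avgU u H w (pr g) - w (pr g)) (.of_forall fun g => e1 (pr g))
    rw [measureReal_restrict_apply_univ] at this
    exact this
  have hwm : MemLp w 2 μ := (hw q).memLp μ 2
  have ham : MemLp (avgU u H w) 2 μ := ((hw q).avgU u H).memLp μ 2
  have hPw : P hwm.toLp = 0 := by
    have h0 := ME_lp hinv hu.inv (hw q) hP hP2
    have h3 : ∫ x, G (rightTranslate n (a q) x) ∂μ = 0 := by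
      rw [← hG0]
      exact (mp_rT hinv (a q)).integral_comp' (f := ⟨⟨rightTranslate n (a q), rightTranslate n (a q)⁻¹,
        fun x => by rw [← rT_mul]; simp, fun x => by rw [← rT_mul]; simp⟩,
        (continuous_rT _).measurable, (continuous_rT _).measurable⟩) G
    rw [h3] at h0
    exact h0.trans (MemLp.toLp_zero _)
  have e3 : ∫ g in K, avgU u H w (pr g) ∂(lam n) =
      inner ℝ (birkhoffAverage ℝ (Kp hinv u⁻¹) _root_.id H hρ.toLp) hwm.toLp := by
    rw [hρη _ ((hw q).avgU u H).measurable, ← inner_toLp hρ ham]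
    have hb := birkhoff_toLp hinv u (hw q) H ham
    have hb' : ham.toLp = birkhoffAverage ℝ (Kp hinv u) _root_.id H hwm.toLp := hb.symm
    rw [hb', birkhoffAverage, birkhoffAverage, birkhoffSum, birkhoffSum, inner_smul_left,
      inner_smul_right, inner_sum, sum_inner]
    simp only [id, Kp_iter]
    congr 1
    refine Finset.sum_congr rfl fun b _ => ?_
    rw [← (Kp hinv (u ^ b)).inner_map_map (Kp hinv (u⁻¹ ^ b) hρ.toLp), ← Kp_mul]
    simp [Kp_one]
  have e4 : |∫ g in K, avgU u H w (pr g) ∂(lam n)| ≤ ε / (2 * (M + 1)) * M := by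
    have h5 : inner ℝ (P hρ.toLp) hwm.toLp = 0 := by rw [hP3, hPw, inner_zero_right]
    rw [e3, ← sub_zero (inner ℝ _ _), ← h5, ← inner_sub_left]
    refine (abs_real_inner_le_norm _ _).trans ?_
    rw [← dist_eq_norm]
    refine mul_le_mul hH.le ?_ (norm_nonneg _) (by positivity)
    refine (Lp.norm_le_of_ae_bound (C := M) hM0 ?_).trans ?_
    · filter_upwards [hwm.coeFn_toLp] with x hx
      rw [hx]
      exact hM _
    · simp [measureUnivNNReal]
  rw [Real.dist_0_eq_abs]
  change |∫ g in K, w (pr g) ∂(lam n)| < ε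
  have e5 : ε / (4 * (L + 1)) * L < ε / 2 := by
    rw [div_mul_eq_mul_div, div_lt_div_iff₀ (by positivity) (by positivity)]
    nlinarith
  have e6 : ε / (2 * (M + 1)) * M ≤ ε / 2 := by
    rw [div_mul_eq_mul_div, div_le_div_iff₀ (by positivity) (by positivity)]
    nlinarith
  rw [abs_sub_comm] at e2
  have := abs_add_le (∫ g in K, w (pr g) ∂(lam n) - ∫ g in K, avgU u H w (pr g) ∂(lam n))
    (∫ g in K, avgU u H w (pr g) ∂(lam n))
  rw [sub_add_cancel] at this
  linarith

end mixing

end part5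

section part6
open Filter Topology

section unip
variable {n j : ℕ}

/-- positions of the lower left block -/
abbrev Sx (n j : ℕ) := {x : Fin n × Fin n // j ≤ (x.1 : ℕ) ∧ (x.2 : ℕ) < j}

/-- lower left block matrix -/
def Nm (T : Sx n j → ℝ) : Matrix (Fin n) (Fin n) ℝ :=
  Matrix.of fun r c => if h : j ≤ (r : ℕ) ∧ (c : ℕ) < j then T ⟨(r, c), h⟩ else 0

lemma Nm_apply (T : Sx n j → ℝ) (r c : Fin n) :
    Nm T r c = if h : j ≤ (r : ℕ) ∧ (c : ℕ) < j then T ⟨(r, c), h⟩ else 0 := rfl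

lemma Nm_apply_of (T : Sx n j → ℝ) (r c : Fin n) (h : j ≤ (r : ℕ) ∧ (c : ℕ) < j) :
    Nm T r c = T ⟨(r, c), h⟩ := by rw [Nm_apply, dif_pos h]

lemma Nm_apply_not (T : Sx n j → ℝ) (r c : Fin n) (h : ¬ (j ≤ (r : ℕ) ∧ (c : ℕ) < j)) :
    Nm T r c = 0 := by rw [Nm_apply, dif_neg h]

lemma Nm_add (T T' : Sx n j → ℝ) : Nm (T + T') = Nm T + Nm T' := by
  ext r c
  simp only [Nm_apply, Matrix.add_apply, Pi.add_apply]
  split_ifs <;> simp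

lemma Nm_zero : Nm (0 : Sx n j → ℝ) = 0 := by
  ext r c
  simp [Nm_apply]

lemma Nm_mul (T T' : Sx n j → ℝ) : Nm T * Nm T' = 0 := by
  ext r c
  rw [Matrix.mul_apply, Matrix.zero_apply]
  refine Finset.sum_eq_zero fun k _ => ?_
  by_cases hk : (k : ℕ) < j
  · rw [Nm_apply_not T' k c (by omega), mul_zero]
  · rw [Nm_apply_not T r k (by omega), zero_mul]

lemma continuous_Nm : Continuous (Nm : (Sx n j → ℝ) → _) := by
  refine continuous_matrix fun r c => ?_
  simp only [Nm_apply]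
  split_ifs <;> fun_prop

/-- the unipotent radical -/
def uT (T : Sx n j → ℝ) : SLn n := ⟨1 + Nm T, by
  rw [Matrix.det_of_isLowerTriangular]
  · refine Finset.prod_eq_one fun i _ => ?_
    rw [Matrix.add_apply, Nm_apply_not T i i (by omega)]
    simp
  · intro r c hrc
    have hrc : r < c := hrc
    rw [Matrix.add_apply, Nm_apply_not T r c (by rw [Fin.lt_def] at hrc; omega), Matrix.one_apply_ne hrc.ne,
      add_zero]⟩

lemma uT_coe (T : Sx n j → ℝ) : (uT T : Matrix (Fin n) (Fin n) ℝ) = 1 + Nm T := rfl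

lemma uT_zero : uT (0 : Sx n j → ℝ) = 1 := by
  apply Subtype.ext
  rw [uT_coe, Nm_zero]; simp

lemma uT_add (T T' : Sx n j → ℝ) : uT (T + T') = uT T * uT T' := by
  apply Subtype.ext
  rw [Matrix.SpecialLinearGroup.coe_mul, uT_coe, uT_coe, uT_coe, Nm_add, mul_add, add_mul, add_mul,
    Nm_mul]
  simp [add_assoc]

lemma uT_neg (T : Sx n j → ℝ) : uT (-T) = (uT T)⁻¹ := by
  rw [eq_inv_iff_mul_eq_one, ← uT_add]
  simp [uT_zero]

lemma uT_comm (T T' : Sx n j → ℝ) : uT T * uT T' = uT T' * uT T := by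
  rw [← uT_add, add_comm, uT_add]

lemma continuous_uT : Continuous (uT : (Sx n j → ℝ) → SLn n) := by
  rw [(isClosedEmbedding_coe n).isEmbedding.continuous_iff]
  exact continuous_const.add continuous_Nm

lemma uT_nsmul (T : Sx n j → ℝ) (b : ℕ) : uT ((b : ℝ) • T) = uT T ^ b := by
  induction b with
  | zero => simp [uT_zero]
  | succ b ih => rw [pow_succ, ← ih, ← uT_add]; congr 1; push_cast; rw [add_smul, one_smul]

lemma uT_single (s : Sx n j) (t : ℝ) (h : s.1.1 ≠ s.1.2) : uT (Pi.single s t) = el h t := by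
  apply Subtype.ext
  rw [uT_coe]
  change _ = 1 + Matrix.single s.1.1 s.1.2 t
  congr 1
  ext r c
  rw [Nm_apply, Matrix.single_apply]
  obtain ⟨⟨a, b⟩, hs⟩ := s
  simp only [Pi.single_apply, Subtype.mk.injEq, Prod.mk.injEq]
  grind

lemma gamma_of_int {g : SLn n} (B : Matrix (Fin n) (Fin n) ℤ)
    (hB : (g : Matrix (Fin n) (Fin n) ℝ) = B.map (Int.cast : ℤ → ℝ)) : g ∈ Gamma n := by
  have hdet : B.det = 1 := by
    have h1 : (g : Matrix (Fin n) (Fin n) ℝ).det = 1 := g.2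
    rw [hB] at h1
    have h2 : ((B.det : ℤ) : ℝ) = (B.map (Int.cast : ℤ → ℝ)).det := (Int.castRingHom ℝ).map_det B
    rw [h1] at h2
    exact_mod_cast h2
  refine ⟨⟨B, hdet⟩, ?_⟩
  apply Subtype.ext
  exact hB.symm

lemma uT_int_mem (T : Sx n j → ℤ) : uT (fun s => (T s : ℝ)) ∈ Gamma n := by
  refine gamma_of_int (Matrix.of fun r c => (if r = c then 1 else 0) +
    if h : j ≤ (r : ℕ) ∧ (c : ℕ) < j then T ⟨(r, c), h⟩ else 0) ?_
  ext r c
  rw [uT_coe, Matrix.add_apply, Nm_apply, Matrix.one_apply, Matrix.map_apply, Matrix.of_apply]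
  push_cast
  congr 1
  split_ifs <;> simp

/-- diagonal entries -/
def ddg (j q : ℕ) (i : Fin n) : ℝ := if (i : ℕ) < j then (q : ℝ) else 1

lemma ddg_pos {j q : ℕ} (hq : 0 < q) (i : Fin n) : 0 < ddg j q i := by
  unfold ddg; split_ifs <;> positivity

/-- the normalised diagonal matrix, as a matrix -/
def aqM (n j q : ℕ) : Matrix (Fin n) (Fin n) ℝ :=
  ((q : ℝ) ^ (-(j : ℝ) / (n : ℝ))) • Matrix.diagonal (ddg j q)

open Classical in
/-- the normalised diagonal matrix -/
def aq (n j q : ℕ) : SLn n := if h : (aqM n j q).det = 1 then ⟨aqM n j q, h⟩ else 1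

lemma scal_pow {n q : ℕ} (j : ℕ) (hn : 0 < n) (hq : 0 < q) :
    ((q : ℝ) ^ (-(j : ℝ) / (n : ℝ))) ^ n * (q : ℝ) ^ j = 1 := by
  have hq' : (0 : ℝ) < q := by positivity
  rw [← Real.rpow_natCast, ← Real.rpow_mul hq'.le, ← Real.rpow_natCast, ← Real.rpow_add hq']
  have : (n : ℝ) ≠ 0 := by positivity
  rw [div_mul_cancel₀ _ this]
  simp

lemma ddg_prod (hj : j ≤ n) (q : ℕ) : ∏ i : Fin n, ddg j q i = (q : ℝ) ^ j := by
  unfold ddg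
  rw [Finset.prod_ite]
  simp only [Finset.prod_const, one_pow, mul_one]
  congr 1
  rw [Fin.card_filter_val_lt]
  omega

lemma aq_coe (hn : 0 < n) (hj : j ≤ n) {q : ℕ} (hq : 0 < q) :
    (aq n j q : Matrix (Fin n) (Fin n) ℝ) = aqM n j q := by
  have : (aqM n j q).det = 1 := by
    rw [aqM, Matrix.det_smul, Matrix.det_diagonal, ddg_prod hj, Fintype.card_fin]
    exact scal_pow j hn hq
  have h2 : aq n j q = (⟨aqM n j q, this⟩ : SLn n) := dif_pos this
  rw [h2]

lemma aq_conj (hn : 0 < n) (hj : j ≤ n) {q : ℕ} (hq : 0 < q) (p : SLn n) (r c : Fin n) :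
    ((aq n j q)⁻¹ * p * aq n j q : SLn n) r c = (ddg j q r)⁻¹ * p r c * ddg j q c := by
  have hz : (0 : ℝ) < (q : ℝ) ^ (-(j : ℝ) / (n : ℝ)) := by positivity
  set x := (aq n j q)⁻¹ * p * aq n j q with hx
  have h1 : aq n j q * x = p * aq n j q := by rw [hx]; group
  have h2 := congrArg (fun g : SLn n => (g : Matrix (Fin n) (Fin n) ℝ) r c) h1
  simp only [Matrix.SpecialLinearGroup.coe_mul, aq_coe hn hj hq, aqM, Matrix.smul_mul,
    Matrix.mul_smul, Matrix.smul_apply, Matrix.diagonal_mul, Matrix.mul_diagonal, smul_eq_mul] at h2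
  have h3 := mul_left_cancel₀ hz.ne' h2
  have := ddg_pos (j := j) hq r
  rw [mul_assoc, eq_inv_mul_iff_mul_eq₀ this.ne']
  exact h3

lemma aq_uT (hn : 0 < n) (hj : j ≤ n) {q : ℕ} (hq : 0 < q) (s : Sx n j → ℝ) :
    uT s * aq n j q = aq n j q * uT ((q : ℝ) • s) := by
  rw [← inv_mul_eq_iff_eq_mul, ← mul_assoc]
  ext r c
  rw [aq_conj hn hj hq, uT_coe, uT_coe, Matrix.add_apply, Matrix.add_apply]
  by_cases h : j ≤ (r : ℕ) ∧ (c : ℕ) < j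
  · rw [Nm_apply_of _ _ _ h, Nm_apply_of _ _ _ h]
    have : r ≠ c := by rintro rfl; omega
    rw [Matrix.one_apply_ne this, ddg, ddg, if_neg (by omega), if_pos h.2]
    simp [mul_comm]
  · rw [Nm_apply_not _ _ _ h, Nm_apply_not _ _ _ h]
    by_cases h' : r = c
    · subst h'
      have := ddg_pos (j := j) hq r
      simp
      field_simp
    · simp [h']

lemma nhds_one_entries {V : Set (SLn n)} (hV : V ∈ 𝓝 (1 : SLn n)) :
    ∃ r > 0, ∀ g : SLn n, (∀ a b, |g a b - (1 : Matrix (Fin n) (Fin n) ℝ) a b| ≤ r) → g ∈ V := by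
  rw [(isClosedEmbedding_coe n).isInducing.nhds_eq_comap, Filter.mem_comap] at hV
  obtain ⟨t, ht, htV⟩ := hV
  have ht' : (t : Set (Fin n → Fin n → ℝ)) ∈ @nhds (Fin n → Fin n → ℝ) _
    (fun a b => (1 : Matrix (Fin n) (Fin n) ℝ) a b) := ht
  obtain ⟨r, hr, hrt⟩ := Metric.mem_nhds_iff.1 ht'
  refine ⟨r / 2, by positivity, fun g hg => htV (hrt ?_)⟩
  change dist (fun a b => g a b : Fin n → Fin n → ℝ) (fun a b => (1 : Matrix (Fin n) (Fin n) ℝ) a b) < r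
  refine lt_of_le_of_lt ?_ (half_lt_self hr)
  rw [dist_pi_le_iff (by positivity)]
  intro a
  rw [dist_pi_le_iff (by positivity)]
  intro b
  exact hg a b

end unip

end part6

section part7
open Filter Topology

section coord
variable {n j : ℕ}

/-- upper left block, completed by the identity -/
def Mb (j : ℕ) (g : SLn n) : Matrix (Fin n) (Fin n) ℝ :=
  Matrix.of fun i k => if (i : ℕ) < j ∧ (k : ℕ) < j then g i k else if i = k then 1 else 0

/-- lower left block -/
def Lb (j : ℕ) (g : SLn n) : Matrix (Fin n) (Fin n) ℝ :=
  Matrix.of fun r c => if j ≤ (r : ℕ) ∧ (c : ℕ) < j then g r c else 0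

lemma Mb_apply (g : SLn n) (i k : Fin n) : Mb j g i k =
  if (i : ℕ) < j ∧ (k : ℕ) < j then g i k else if i = k then 1 else 0 := rfl

lemma Lb_apply (g : SLn n) (i k : Fin n) : Lb j g i k =
  if j ≤ (i : ℕ) ∧ (k : ℕ) < j then g i k else 0 := rfl

lemma uT_mul_apply_lt (s : Sx n j → ℝ) (g : SLn n) {i : Fin n} (hi : (i : ℕ) < j) (k : Fin n) :
    (uT s * g) i k = g i k := by
  rw [Matrix.SpecialLinearGroup.coe_mul, uT_coe, add_mul, one_mul, Matrix.add_apply,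
    Matrix.mul_apply, Finset.sum_eq_zero, add_zero]
  intro x _
  rw [Nm_apply_not _ _ _ (by omega), zero_mul]

lemma Mb_uT (s : Sx n j → ℝ) (g : SLn n) : Mb j (uT s * g) = Mb j g := by
  ext i k
  rw [Mb_apply, Mb_apply]
  split_ifs with h
  · exact uT_mul_apply_lt s g h.1 k
  · rfl
  · rfl

lemma Lb_uT (s : Sx n j → ℝ) (g : SLn n) : Lb j (uT s * g) = Lb j g + Nm s * Mb j g := by
  ext r c
  rw [Matrix.add_apply, Lb_apply, Lb_apply, Matrix.mul_apply]
  by_cases h : j ≤ (r : ℕ) ∧ (c : ℕ) < j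
  · rw [if_pos h, if_pos h, Matrix.SpecialLinearGroup.coe_mul, uT_coe, add_mul, one_mul,
      Matrix.add_apply, Matrix.mul_apply]
    congr 1
    refine Finset.sum_congr rfl fun k _ => ?_
    by_cases hk : (k : ℕ) < j
    · rw [Mb_apply, if_pos ⟨hk, h.2⟩]
    · rw [Nm_apply_not _ _ _ (by omega), zero_mul, zero_mul]
  · rw [if_neg h, if_neg h, zero_add]
    symm
    refine Finset.sum_eq_zero fun k _ => ?_
    by_cases hk : j ≤ (r : ℕ) ∧ (k : ℕ) < j
    · have : k ≠ c := by rintro rfl; omega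
      rw [Mb_apply, if_neg (by omega), if_neg this, mul_zero]
    · rw [Nm_apply_not _ _ _ hk, zero_mul]

/-- the unipotent coordinate -/
def Tc (j : ℕ) (g : SLn n) : Sx n j → ℝ := fun s => (Lb j g * (Mb j g)⁻¹) s.1.1 s.1.2

lemma Tc_uT (s : Sx n j → ℝ) (g : SLn n) (hg : (Mb j g).det ≠ 0) :
    Tc j (uT s * g) = s + Tc j g := by
  ext x
  simp only [Tc, Pi.add_apply]
  rw [Mb_uT, Lb_uT, add_mul, mul_assoc, Matrix.mul_nonsing_inv _ (isUnit_iff_ne_zero.2 hg), mul_one,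
    Matrix.add_apply, Nm_apply_of _ _ _ x.2, add_comm]

lemma Nm_Tc (g : SLn n) (hg : (Mb j g).det ≠ 0) : Nm (Tc j g) = Lb j g * (Mb j g)⁻¹ := by
  ext r c
  by_cases h : j ≤ (r : ℕ) ∧ (c : ℕ) < j
  · rw [Nm_apply_of _ _ _ h, Tc]
  rw [Nm_apply_not _ _ _ h]
  symm
  by_cases hr : j ≤ (r : ℕ)
  · have hc : ¬ (c : ℕ) < j := by omega
    set Q := Lb j g * (Mb j g)⁻¹ with hQ
    have h1 : Q * Mb j g = Lb j g := by
      rw [hQ, mul_assoc, Matrix.nonsing_inv_mul _ (isUnit_iff_ne_zero.2 hg), mul_one]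
    have h2 := congrFun (congrFun h1 r) c
    rw [Matrix.mul_apply, Lb_apply, if_neg h, Finset.sum_eq_single c] at h2
    · rwa [Mb_apply, if_neg (by omega), if_pos rfl, mul_one] at h2
    · intro k _ hk
      rw [Mb_apply, if_neg (by omega), if_neg hk, mul_zero]
    · simp
  · rw [Matrix.mul_apply]
    refine Finset.sum_eq_zero fun k _ => ?_
    rw [Lb_apply, if_neg (by omega), zero_mul]

/-- the parabolic part -/
def Pc (j : ℕ) (g : SLn n) : SLn n := uT (-Tc j g) * g

lemma Pc_block (g : SLn n) (hg : (Mb j g).det ≠ 0) (r c : Fin n) (hr : j ≤ (r : ℕ))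
    (hc : (c : ℕ) < j) : Pc j g r c = 0 := by
  have h1 : Lb j (Pc j g) = 0 := by
    rw [Pc, Lb_uT]
    have : Nm (-Tc j g) = - Nm (Tc j g) := by
      rw [eq_neg_iff_add_eq_zero, ← Nm_add, neg_add_cancel, Nm_zero]
    rw [this, Nm_Tc g hg, neg_mul, mul_assoc, Matrix.nonsing_inv_mul _ (isUnit_iff_ne_zero.2 hg),
      mul_one, add_neg_cancel]
  have h2 := congrFun (congrFun h1 r) c
  rwa [Lb_apply, if_pos ⟨hr, hc⟩] at h2

lemma Pc_uT (s : Sx n j → ℝ) (g : SLn n) (hg : (Mb j g).det ≠ 0) :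
    Pc j (uT s * g) = Pc j g := by
  rw [Pc, Tc_uT s g hg, Pc, ← mul_assoc, ← uT_add]
  congr 2
  abel

lemma uT_Tc_Pc (g : SLn n) : uT (Tc j g) * Pc j g = g := by
  rw [Pc, uT_neg]; group

lemma Mb_one : Mb j (1 : SLn n) = 1 := by
  ext i k
  rw [Mb_apply, Matrix.SpecialLinearGroup.coe_one, Matrix.one_apply]
  simp

lemma Tc_one : Tc j (1 : SLn n) = 0 := by
  ext s
  have : Lb j (1 : SLn n) = 0 := by
    ext i k
    rw [Lb_apply, Matrix.SpecialLinearGroup.coe_one, Matrix.one_apply]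
    simp
    intro h1 h2 h3; subst h3; omega
  rw [Tc, this]; simp

lemma continuous_entry (a b : Fin n) : Continuous fun g : SLn n => g a b :=
  (isClosedEmbedding_coe n).continuous.matrix_elem a b

lemma continuous_Mb : Continuous (Mb j : SLn n → _) := by
  refine continuous_matrix fun r c => ?_
  simp only [Mb_apply]
  split_ifs
  · exact continuous_entry r c
  all_goals fun_prop

lemma continuous_Lb : Continuous (Lb j : SLn n → _) := by
  refine continuous_matrix fun r c => ?_
  simp only [Lb_apply]
  split_ifs
  · exact continuous_entry r c
  all_goals fun_prop

lemma Tc_eq (g : SLn n) (s : Sx n j) : Tc j g s =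
    ((Mb j g).det)⁻¹ * (Lb j g * (Mb j g).adjugate) s.1.1 s.1.2 := by
  rw [Tc, Matrix.inv_def, Ring.inverse_eq_inv', Matrix.mul_smul, Matrix.smul_apply, smul_eq_mul]

lemma continuous_num (s : Sx n j) :
    Continuous fun g : SLn n => (Lb j g * (Mb j g).adjugate) s.1.1 s.1.2 :=
  (continuous_Lb.matrix_mul continuous_Mb.matrix_adjugate).matrix_elem _ _

lemma measurable_Tc (s : Sx n j) : Measurable fun g : SLn n => Tc j g s := by
  simp only [Tc_eq]
  exact (continuous_Mb.matrix_det.measurable.inv).mul (continuous_num s).measurable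

lemma continuousAt_Tc : ContinuousAt (fun g : SLn n => Tc j g) 1 := by
  rw [continuousAt_pi]
  intro s
  simp only [Tc_eq]
  refine ContinuousAt.mul (ContinuousAt.inv₀ continuous_Mb.matrix_det.continuousAt ?_)
    (continuous_num s).continuousAt
  rw [Mb_one]; simp

lemma continuousAt_Pc : ContinuousAt (fun g : SLn n => Pc j g) 1 := by
  unfold Pc
  refine ContinuousAt.mul ?_ continuousAt_id
  exact (continuous_uT.comp continuous_neg).continuousAt.comp continuousAt_Tc

lemma Pc_one : Pc j (1 : SLn n) = 1 := by
  rw [Pc, Tc_one, neg_zero, uT_zero, one_mul]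

lemma measurable_Pc (a b : Fin n) : Measurable fun g : SLn n => Pc j g a b := by
  have : ∀ g : SLn n, Pc j g a b = g a b + ∑ k, Nm (-Tc j g) a k * g k b := by
    intro g
    rw [Pc, Matrix.SpecialLinearGroup.coe_mul, uT_coe, add_mul, one_mul, Matrix.add_apply,
      Matrix.mul_apply]
  simp only [this]
  refine (continuous_entry a b).measurable.add (Finset.measurable_sum _ fun k _ => ?_)
  refine Measurable.mul ?_ (continuous_entry k b).measurable
  simp only [Nm_apply]
  split_ifs
  · exact (measurable_Tc _).neg
  · exact measurable_const

/-- compact ball around one -/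
def CB (n : ℕ) (r : ℝ) : Set (SLn n) :=
  {p | ∀ a b, |p a b - (1 : Matrix (Fin n) (Fin n) ℝ) a b| ≤ r}

lemma isCompact_CB (n : ℕ) (r : ℝ) : IsCompact (CB n r) := by
  have h : CB n r = (fun g : SLn n => (g : Matrix (Fin n) (Fin n) ℝ)) ⁻¹'
      {A | ∀ a b, |A a b - (1 : Matrix (Fin n) (Fin n) ℝ) a b| ≤ r} := rfl
  rw [h]
  refine (isClosedEmbedding_coe n).isCompact_preimage ?_
  have h2 : {A : Matrix (Fin n) (Fin n) ℝ | ∀ a b, |A a b - (1 : Matrix (Fin n) (Fin n) ℝ) a b| ≤ r}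
    = Set.pi Set.univ (fun a => Set.pi Set.univ fun b =>
      Metric.closedBall ((1 : Matrix (Fin n) (Fin n) ℝ) a b) r) := by
    ext A
    exact ⟨fun h a _ b _ => by simpa [Real.dist_eq] using h a b,
      fun h a b => by simpa [Real.dist_eq] using h a trivial b trivial⟩
  rw [h2]
  exact isCompact_univ_pi fun a => isCompact_univ_pi fun b => isCompact_closedBall _ _

lemma CB_mem_nhds {r : ℝ} (hr : 0 < r) : CB n r ∈ 𝓝 (1 : SLn n) := by
  have : CB n r = ⋂ a, ⋂ b, {p : SLn n | |p a b - (1 : Matrix (Fin n) (Fin n) ℝ) a b| ≤ r} := by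
    ext; simp [CB]
  rw [this, Filter.iInter_mem]
  intro a
  rw [Filter.iInter_mem]
  intro b
  have h1 : ContinuousAt (fun p : SLn n => |p a b - (1 : Matrix (Fin n) (Fin n) ℝ) a b|) 1 :=
    ((continuous_entry a b).sub continuous_const).abs.continuousAt
  have h2 : |(1 : SLn n) a b - (1 : Matrix (Fin n) (Fin n) ℝ) a b| < r := by simpa using hr
  filter_upwards [h1.eventually_lt_const h2] with p hp using hp.le

/-- the sets `K_m` -/
def Km (n j : ℕ) (r : ℝ) (m : ℕ) : Set (SLn n) :=
  {g | (Mb j g).det ≠ 0 ∧ (∀ s, 0 ≤ Tc j g s ∧ Tc j g s < 1 / (m : ℝ)) ∧ Pc j g ∈ CB n r}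

lemma measurableSet_Km (r : ℝ) (m : ℕ) : MeasurableSet (Km n j r m) := by
  have : Km n j r m = {g : SLn n | (Mb j g).det ≠ 0} ∩ ((⋂ s, ({g : SLn n | 0 ≤ Tc j g s} ∩
    {g | Tc j g s < 1 / (m : ℝ)})) ∩ ⋂ a, ⋂ b,
      {g | |Pc j g a b - (1 : Matrix (Fin n) (Fin n) ℝ) a b| ≤ r}) := by
    ext g
    simp [Km, CB]
  rw [this]
  refine MeasurableSet.inter ?_ (MeasurableSet.inter ?_ ?_)
  · exact (isOpen_ne_fun continuous_Mb.matrix_det continuous_const).measurableSet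
  · exact MeasurableSet.iInter fun s => (measurableSet_le measurable_const (measurable_Tc s)).inter
      (measurableSet_lt (measurable_Tc s) measurable_const)
  · refine MeasurableSet.iInter fun a => MeasurableSet.iInter fun b => ?_
    refine measurableSet_le ?_ measurable_const
    have h1 : Measurable fun g : SLn n => Pc j g a b - (1 : Matrix (Fin n) (Fin n) ℝ) a b :=
      (measurable_Pc a b).sub measurable_const
    exact measurable_norm.comp h1

/-- compact hull -/
def KK (n j : ℕ) (r : ℝ) : Set (SLn n) :=
  (fun x : (Sx n j → ℝ) × SLn n => uT x.1 * x.2) '' (Set.Icc 0 1 ×ˢ CB n r)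

lemma isCompact_KK (r : ℝ) : IsCompact (KK n j r) := by
  refine (isCompact_Icc.prod (isCompact_CB n r)).image ?_
  exact (continuous_uT.comp continuous_fst).mul continuous_snd

lemma Km_subset_KK (r : ℝ) {m : ℕ} (hm : 0 < m) : Km n j r m ⊆ KK n j r := by
  intro g hg
  refine ⟨(Tc j g, Pc j g), ⟨⟨fun s => (hg.2.1 s).1, fun s => (hg.2.1 s).2.le.trans ?_⟩, hg.2.2⟩,
    uT_Tc_Pc g⟩
  have : (1 : ℝ) ≤ m := by exact_mod_cast hm
  exact (div_le_one (by positivity)).2 this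

lemma Km_one_pos {r : ℝ} (hr : 0 < r) : 0 < (lam n) (Km n j r 1) := by
  have hW : {g : SLn n | (Mb j g).det ≠ 0 ∧ (∀ s, |Tc j g s| < 1 / 2) ∧ Pc j g ∈ CB n r} ∈
      𝓝 (1 : SLn n) := by
    refine Filter.inter_mem ?_ (Filter.inter_mem ?_ ?_)
    · refine (isOpen_ne_fun continuous_Mb.matrix_det continuous_const).mem_nhds ?_
      show (Mb j (1 : SLn n)).det ≠ 0
      rw [Mb_one]; simp
    · show ∀ᶠ g in 𝓝 (1 : SLn n), ∀ s, |Tc j g s| < 1 / 2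
      rw [Filter.eventually_all]
      intro s
      have h1 := (continuousAt_pi.1 (continuousAt_Tc (n := n) (j := j)) s).abs
      refine h1.eventually_lt_const ?_
      simp [Tc_one]
    · have h1 := continuousAt_Pc (n := n) (j := j)
      have h2 : CB n r ∈ 𝓝 (Pc j (1 : SLn n)) := by
        rw [Pc_one]; exact CB_mem_nhds hr
      show ∀ᶠ g in 𝓝 (1 : SLn n), Pc j g ∈ CB n r
      exact h1.eventually_mem h2
  have h0 := Measure.measure_pos_of_mem_nhds (lam n) hW
  set h : Sx n j → ℝ := fun _ => 1 / 2
  refine lt_of_lt_of_le h0 ?_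
  rw [← measure_preimage_mul (lam n) (uT h) (Km n j r 1)]
  refine measure_mono fun g hg => ?_
  obtain ⟨h1, h2, h3⟩ := hg
  refine ⟨by rwa [Mb_uT], fun s => ?_, by rwa [Pc_uT _ _ h1]⟩
  rw [Tc_uT _ _ h1, Pi.add_apply]
  have := abs_lt.1 (h2 s)
  simp only [h]
  constructor
  · linarith
  · push_cast; linarith

lemma Km_lt_top (r : ℝ) {m : ℕ} (hm : 0 < m) : (lam n) (Km n j r m) < ⊤ :=
  lt_of_le_of_lt (measure_mono (Km_subset_KK r hm)) (isCompact_KK r).measure_lt_top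

lemma Km_cover (r : ℝ) {m : ℕ} (hm : 0 < m) :
    (lam n).real (Km n j r 1) ≤ (m : ℝ) ^ (Fintype.card (Sx n j)) * (lam n).real (Km n j r m) := by
  have hm' : (0 : ℝ) < m := by exact_mod_cast hm
  have h1 : Km n j r 1 ⊆ ⋃ A : Sx n j → Fin m,
      (fun g => uT (fun s => - ((A s : ℕ) : ℝ) / m) * g) ⁻¹' Km n j r m := by
    intro g ⟨h1, h2, h3⟩
    rw [Set.mem_iUnion]
    have h4 : ∀ s, ⌊(m : ℝ) * Tc j g s⌋₊ < m := by
      intro s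
      have := h2 s
      rw [Nat.floor_lt (mul_nonneg hm'.le this.1)]
      have h5 : Tc j g s < 1 := by simpa using this.2
      nlinarith
    refine ⟨fun s => ⟨⌊(m : ℝ) * Tc j g s⌋₊, h4 s⟩, by rwa [Mb_uT], fun s => ?_,
      by rwa [Pc_uT _ _ h1]⟩
    rw [Tc_uT _ _ h1, Pi.add_apply]
    have h5 := Nat.floor_le (mul_nonneg hm'.le (h2 s).1)
    have h6 := Nat.lt_floor_add_one ((m : ℝ) * Tc j g s)
    simp only
    have h7 : -((⌊(m : ℝ) * Tc j g s⌋₊ : ℕ) : ℝ) / m + Tc j g s =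
      ((m : ℝ) * Tc j g s - (⌊(m : ℝ) * Tc j g s⌋₊ : ℕ)) / m := by field_simp; ring
    rw [h7]
    constructor
    · apply div_nonneg _ hm'.le; linarith
    · rw [div_lt_div_iff_of_pos_right hm']; linarith
  have h2 : (lam n) (Km n j r 1) ≤ ∑ A : Sx n j → Fin m, (lam n) (Km n j r m) := by
    refine (measure_mono h1).trans ((measure_iUnion_fintype_le _ _).trans ?_)
    refine Finset.sum_le_sum fun A _ => ?_
    rw [measure_preimage_mul]
  rw [Finset.sum_const, Finset.card_univ, Fintype.card_fun, Fintype.card_fin, nsmul_eq_mul] at h2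
  have h3 := ENNReal.toReal_mono (ENNReal.mul_ne_top (by simp) (Km_lt_top r hm).ne) h2
  rw [ENNReal.toReal_mul] at h3
  simpa [Measure.real] using h3

lemma Km_pack (r : ℝ) {q R : ℕ} (hq : 0 < q) (hR : 0 < R) {ψ : SLn n → ℝ} (hψ : ∀ g, 0 ≤ ψ g)
    (hi : IntegrableOn ψ (Km n j r 1) (lam n)) :
    ∑ A : Sx n j → Fin q, ∫ g in Km n j r (q * R), ψ (uT (fun s => ((A s : ℕ) : ℝ) / q) * g) ∂(lam n)
      ≤ ∫ g in Km n j r 1, ψ g ∂(lam n) := by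
  have hq' : (0 : ℝ) < q := by exact_mod_cast hq
  have hR' : (1 : ℝ) ≤ R := by exact_mod_cast hR
  set B : (Sx n j → Fin q) → Set (SLn n) := fun A =>
    (fun g => uT (fun s => - (((A s : ℕ) : ℝ) / q)) * g) ⁻¹' Km n j r (q * R) with hB
  have hmeas : ∀ A, MeasurableSet (B A) := fun A =>
    (measurableSet_Km r _).preimage (continuous_const.mul continuous_id).measurable
  have hT : ∀ A, ∀ g ∈ B A, (Mb j g).det ≠ 0 ∧ Pc j g ∈ CB n r ∧ ∀ s,
      ((A s : ℕ) : ℝ) ≤ q * Tc j g s ∧ q * Tc j g s < (A s : ℕ) + 1 := by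
    intro A g ⟨h1, h2, h3⟩
    rw [Mb_uT] at h1
    refine ⟨h1, by rwa [Pc_uT _ _ h1] at h3, fun s => ?_⟩
    have := h2 s
    rw [Tc_uT _ _ h1, Pi.add_apply] at this
    obtain ⟨h5, h6⟩ := this
    have h7 : 1 / ((q * R : ℕ) : ℝ) ≤ 1 / q := by
      push_cast
      apply one_div_le_one_div_of_le hq'
      nlinarith
    have h8 : ((A s : ℕ) : ℝ) / q ≤ Tc j g s := by linarith
    have h9 : Tc j g s < ((A s : ℕ) + 1 : ℝ) / q := by rw [add_div]; linarith
    rw [div_le_iff₀ hq'] at h8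
    rw [lt_div_iff₀ hq'] at h9
    constructor <;> linarith
  have hsub : (⋃ A, B A) ⊆ Km n j r 1 := by
    intro g hg
    obtain ⟨A, hA⟩ := Set.mem_iUnion.1 hg
    obtain ⟨h1, h2, h3⟩ := hT A g hA
    refine ⟨h1, fun s => ?_, h2⟩
    obtain ⟨h4, h5⟩ := h3 s
    have h6 : ((A s : ℕ) : ℝ) + 1 ≤ q := by exact_mod_cast (A s).2
    have h7 : (0 : ℝ) ≤ (A s : ℕ) := by positivity
    constructor
    · by_contra hc; push Not at hc; nlinarith
    · by_contra hc; push Not at hc; push_cast at hc; nlinarith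
  have hdisj : Pairwise (Function.onFun Disjoint B) := by
    intro A A' hAA
    rw [Function.onFun, Set.disjoint_left]
    intro g hg hg'
    apply hAA
    funext s
    have h1 := (hT A g hg).2.2 s
    have h2 := (hT A' g hg').2.2 s
    have h3 : ((A s : ℕ) : ℝ) < (A' s : ℕ) + 1 := by linarith
    have h4 : ((A' s : ℕ) : ℝ) < (A s : ℕ) + 1 := by linarith
    have h3 : (A s : ℕ) < (A' s : ℕ) + 1 := by exact_mod_cast h3
    have h4 : (A' s : ℕ) < (A s : ℕ) + 1 := by exact_mod_cast h4
    apply Fin.ext; omega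
  have hsum : ∀ A, ∫ g in Km n j r (q * R), ψ (uT (fun s => ((A s : ℕ) : ℝ) / q) * g) ∂(lam n) =
      ∫ g in B A, ψ g ∂(lam n) := by
    intro A
    rw [← integral_indicator (measurableSet_Km r _), ← integral_indicator (hmeas A),
      ← integral_mul_left_eq_self _ (uT (fun s => - (((A s : ℕ) : ℝ) / q)))]
    congr 1
    ext g
    have h1 : uT (fun s => ((A s : ℕ) : ℝ) / q) * (uT (fun s => - (((A s : ℕ) : ℝ) / q)) * g) = g := by
      have : (fun s => - (((A s : ℕ) : ℝ) / q)) = - (fun s => (((A s : ℕ) : ℝ) / q)) := rfl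
      rw [this, uT_neg]; group
    simp only [Set.indicator, Set.mem_preimage, h1]
    rfl
  simp only [hsum]
  rw [← integral_iUnion_fintype hmeas hdisj (fun A => hi.mono_set ((Set.subset_iUnion _ A).trans hsub))]
  exact setIntegral_mono_set hi (Eventually.of_forall fun g => hψ g) (LE.le.eventuallyLE hsub)

end coord

end part7

section part8
open Filter Topology

section core
variable {n j : ℕ} {μ : Measure (XSpace n)} [IsProbabilityMeasure μ]

/-- average over the periodic points of the expanding horosphere -/
def avgC (j : ℕ) (f : XSpace n → ℝ) (q : ℕ) : ℝ :=
  ((q : ℝ) ^ (Fintype.card (Sx n j)))⁻¹ *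
    ∑ A : Sx n j → Fin q, f (pr (aq n j q * uT (fun s => ((A s : ℕ) : ℝ))))

lemma conj_CB (hn : 0 < n) (hj : j ≤ n) {q : ℕ} (hq : 0 < q) {r : ℝ} {p : SLn n} (hp : p ∈ CB n r)
    (hb : ∀ a b : Fin n, j ≤ (a : ℕ) → (b : ℕ) < j → p a b = 0) :
    (aq n j q)⁻¹ * p * aq n j q ∈ CB n r := by
  have hq' : (1 : ℝ) ≤ q := by exact_mod_cast hq
  intro a b
  have h0 := hp a b
  rw [aq_conj hn hj hq]
  have hr : 0 ≤ r := (abs_nonneg _).trans h0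
  by_cases hab : a = b
  · subst hab
    have := ddg_pos (j := j) hq a
    rw [mul_comm, mul_inv_cancel_left₀ this.ne']
    exact h0
  · rw [Matrix.one_apply_ne hab, sub_zero] at *
    by_cases ha : (a : ℕ) < j
    · by_cases hb : (b : ℕ) < j
      · rw [ddg, ddg, if_pos ha, if_pos hb]
        have : (q : ℝ)⁻¹ * p a b * q = p a b := by field_simp
        rwa [this]
      · rw [ddg, ddg, if_pos ha, if_neg hb, mul_one, abs_mul, abs_of_nonneg (by positivity)]
        have : (q : ℝ)⁻¹ ≤ 1 := inv_le_one_of_one_le₀ hq'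
        have h3 : (0 : ℝ) ≤ (q : ℝ)⁻¹ := by positivity
        nlinarith [abs_nonneg (p a b)]
    · by_cases hb' : (b : ℕ) < j
      · rw [hb a b (by omega) hb']; simpa using hr
      · rw [ddg, ddg, if_neg ha, if_neg hb']; simpa using h0

lemma avgC_bound (hn : 2 ≤ n) (hj1 : 1 ≤ j) (hj : j ≤ n - 1)
    (hinv : ∀ g, Measure.map (rightTranslate n g) μ = μ) {F : XSpace n → ℝ} (hF : RUC F)
    (hF0 : ∀ x, 0 ≤ F x) {ε η : ℝ} (hε : 0 < ε) (hη : 0 < η) {R : ℕ} (hR : 0 < R)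
    (hRF : ∀ x, ∀ t : Sx n j → ℝ, (∀ s, |t s| ≤ 1 / (R : ℝ)) →
      |F (rightTranslate n (uT t) x) - F x| ≤ ε) :
    ∀ᶠ q in atTop, avgC j F q ≤ 2 * ε + (R : ℝ) ^ (Fintype.card (Sx n j)) * (∫ x, F x ∂μ + η) := by
  obtain ⟨r, hr, hrV⟩ := nhds_one_entries (hF.unif ε hε)
  have hn0 : 0 < n := by omega
  have hjn : j ≤ n := by omega
  set l := (lam n).real (Km n j r 1) with hl
  have hlpos : 0 < l := ENNReal.toReal_pos (Km_one_pos hr).ne' (Km_lt_top r one_pos).ne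
  have hik : (⟨0, by omega⟩ : Fin n) ≠ ⟨n - 1, by omega⟩ := by
    simp only [ne_eq, Fin.mk.injEq]; omega
  have hmix := mixing hinv (K := Km n j r 1) (isCompact_KK r) (Km_subset_KK r one_pos)
    (a := fun q => aq n j q) (good_el hn hik) (by
      intro b
      have h1 : Tendsto (fun q : ℕ => el hik ((b : ℝ) / q)) atTop (𝓝 1) := by
        rw [← el_zero hik]
        exact ((continuous_el hik).tendsto 0).comp (tendsto_const_div_atTop_nhds_zero_nat _)
      refine h1.congr' ?_
      filter_upwards [eventually_gt_atTop 0] with q hq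
      have hq' : (0 : ℝ) < q := by exact_mod_cast hq
      rw [el_pow, mul_one]
      ext r c
      rw [aq_conj hn0 hjn hq]
      change (1 + Matrix.single _ _ ((b : ℝ) / q) : Matrix (Fin n) (Fin n) ℝ) r c =
        _ * (1 + Matrix.single _ _ (b : ℝ) : Matrix (Fin n) (Fin n) ℝ) r c * _
      rw [Matrix.add_apply, Matrix.add_apply, Matrix.single_apply, Matrix.single_apply]
      by_cases h : (⟨0, by omega⟩ : Fin n) = r ∧ (⟨n - 1, by omega⟩ : Fin n) = c
      · rw [if_pos h, if_pos h]
        obtain ⟨rfl, rfl⟩ := h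
        rw [Matrix.one_apply_ne hik, ddg, ddg, if_pos (by simp; omega), if_neg (by simp; omega)]
        field_simp
        ring
      · rw [if_neg h, if_neg h]
        by_cases h' : r = c
        · subst h'
          have := ddg_pos (j := j) hq r
          simp
          field_simp
        · simp [h']) hF
  have hev := hmix.eventually_lt_const (u := l * (∫ x, F x ∂μ + η)) (by nlinarith)
  filter_upwards [hev, eventually_gt_atTop 0] with q hqI hq
  have hq' : (0 : ℝ) < q := by exact_mod_cast hq
  have hR' : (0 : ℝ) < R := by exact_mod_cast hR
  set d := Fintype.card (Sx n j) with hd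
  obtain ⟨C, hC⟩ := hF.bdd
  have hcont : Continuous fun g : SLn n => F (pr (g * aq n j q)) :=
    hF.cont.comp ((continuous_pr n).comp (continuous_id.mul continuous_const))
  have hIntg : ∀ (m : ℕ) (_ : 0 < m) (x : SLn n),
      IntegrableOn (fun g => F (pr (x * g * aq n j q))) (Km n j r m) (lam n) := by
    intro m hm x
    refine Measure.integrableOn_of_bounded (M := C) (Km_lt_top r hm).ne ?_ ?_
    · exact (hF.cont.comp ((continuous_pr n).comp
        ((continuous_const.mul continuous_id).mul continuous_const))).aestronglyMeasurable
    · exact Eventually.of_forall fun g => hC _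
  have hpack := Km_pack (j := j) r hq hR (ψ := fun g => F (pr (g * aq n j q))) (fun g => hF0 _)
    (by simpa using hIntg 1 one_pos 1)
  have hqR : 0 < q * R := Nat.mul_pos hq hR
  have hcover := Km_cover (n := n) (j := j) r hqR
  set v := (lam n).real (Km n j r (q * R)) with hv
  have hv0 : 0 ≤ v := measureReal_nonneg
  have hlow : ∀ A : Sx n j → Fin q, v * (F (pr (aq n j q * uT (fun s => ((A s : ℕ) : ℝ)))) - 2 * ε) ≤
      ∫ g in Km n j r (q * R), F (pr (uT (fun s => ((A s : ℕ) : ℝ) / q) * g * aq n j q)) ∂(lam n) := by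
    intro A
    have h1 : v * (F (pr (aq n j q * uT (fun s => ((A s : ℕ) : ℝ)))) - 2 * ε) =
      ∫ g in Km n j r (q * R), (F (pr (aq n j q * uT (fun s => ((A s : ℕ) : ℝ)))) - 2 * ε) ∂(lam n) := by
      rw [setIntegral_const, smul_eq_mul]
    rw [h1]
    refine setIntegral_mono_on (integrableOn_const (Km_lt_top r hqR).ne) (hIntg _ hqR _)
      (measurableSet_Km r _) ?_
    intro g ⟨hg1, hg2, hg3⟩
    set x := pr (aq n j q * uT (fun s => ((A s : ℕ) : ℝ))) with hx
    set k := (aq n j q)⁻¹ * Pc j g * aq n j q with hk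
    have h2 : pr (uT (fun s => ((A s : ℕ) : ℝ) / q) * g * aq n j q) =
        rightTranslate n k (rightTranslate n (uT ((q : ℝ) • Tc j g)) x) := by
      rw [hx, rT_pr, rT_pr]
      congr 1
      have h3 : (fun s => ((A s : ℕ) : ℝ)) = (q : ℝ) • (fun s => ((A s : ℕ) : ℝ) / q) := by
        ext s; simp; field_simp
      rw [h3, ← aq_uT hn0 hjn hq, mul_assoc (uT _) (aq n j q), ← aq_uT hn0 hjn hq, hk]
      conv_lhs => rw [← uT_Tc_Pc (j := j) g]
      group
    have hk1 := hrV k (conj_CB hn0 hjn hq hg3 (fun a b ha hb => Pc_block g hg1 a b ha hb))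
      (rightTranslate n (uT ((q : ℝ) • Tc j g)) x)
    have hk2 := hRF x ((q : ℝ) • Tc j g) (fun s => by
      obtain ⟨h5, h6⟩ := hg2 s
      rw [Pi.smul_apply, smul_eq_mul, abs_of_nonneg (by positivity)]
      push_cast at h6
      rw [lt_div_iff₀ (by positivity)] at h6
      rw [le_div_iff₀ hR']
      linarith)
    rw [h2]
    have := abs_le.1 hk1
    have := abs_le.1 hk2
    linarith [this.1]
  have hsum := (Finset.sum_le_sum fun A (_ : A ∈ Finset.univ) => hlow A).trans hpack
  rw [← Finset.mul_sum, Finset.sum_sub_distrib, Finset.sum_const, Finset.card_univ, Fintype.card_fun,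
    Fintype.card_fin, nsmul_eq_mul, ← hd] at hsum
  set S := ∑ A : Sx n j → Fin q, F (pr (aq n j q * uT (fun s => ((A s : ℕ) : ℝ)))) with hS
  have hE : S = (q : ℝ) ^ d * avgC j F q := by
    rw [avgC, ← hS, ← hd]; field_simp
  have hFint : 0 ≤ ∫ x, F x ∂μ := integral_nonneg hF0
  rw [hE] at hsum
  push_cast at hsum hcover
  rw [← hd, mul_pow] at hcover
  by_cases hneg : avgC j F q ≤ 2 * ε
  · have : 0 ≤ (R : ℝ) ^ d * (∫ x, F x ∂μ + η) := by positivity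
    linarith
  push Not at hneg
  have h4 : l * (avgC j F q - 2 * ε) ≤ (R : ℝ) ^ d * (l * (∫ x, F x ∂μ + η)) := by
    calc l * (avgC j F q - 2 * ε) ≤ ((q : ℝ) ^ d * (R : ℝ) ^ d * v) * (avgC j F q - 2 * ε) := by
          apply mul_le_mul_of_nonneg_right hcover; linarith
      _ = (R : ℝ) ^ d * (v * ((q : ℝ) ^ d * avgC j F q - (q : ℝ) ^ d * (2 * ε))) := by ring
      _ ≤ _ := by
          apply mul_le_mul_of_nonneg_left _ (by positivity)
          exact hsum.trans hqI.le
  have h5 : l * (avgC j F q - 2 * ε) ≤ l * ((R : ℝ) ^ d * (∫ x, F x ∂μ + η)) := by linarith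
  have := le_of_mul_le_mul_left h5 hlpos
  linarith

lemma pr_period (hn : 0 < n) (hj : j ≤ n) {q : ℕ} (hq : 0 < q) (x : Sx n j → ℕ) :
    pr (aq n j q * uT (fun s => (x s : ℝ))) = pr (aq n j q * uT (fun s => ((x s % q : ℕ) : ℝ))) := by
  have h1 : (fun s => (x s : ℝ)) = (q : ℝ) • (fun s => (((x s / q : ℕ) : ℤ) : ℝ)) +
      (fun s => ((x s % q : ℕ) : ℝ)) := by
    ext s
    simp only [Pi.add_apply, Pi.smul_apply, smul_eq_mul]
    have := Nat.div_add_mod (x s) q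
    have h2 : ((q * (x s / q) + x s % q : ℕ) : ℝ) = (x s : ℕ) := by rw [this]
    rw [← h2]; push_cast; rfl
  rw [h1, uT_add, ← mul_assoc, ← aq_uT hn hj hq, mul_assoc]
  exact pr_gamma (uT_int_mem _) _

lemma avgC_shift (hn : 0 < n) (hj : j ≤ n) {q : ℕ} (hq : 0 < q) (f : XSpace n → ℝ) (B : Sx n j → ℕ) :
    avgC j (fun x => f (rightTranslate n (uT (fun s => (B s : ℝ))) x)) q = avgC j f q := by
  have : NeZero q := ⟨hq.ne'⟩
  unfold avgC
  congr 1
  rw [← Equiv.sum_comp (Equiv.addRight (fun s => Fin.ofNat q (B s) : Sx n j → Fin q))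
    (fun A => f (pr (aq n j q * uT (fun s => ((A s : ℕ) : ℝ)))))]
  refine Finset.sum_congr rfl fun A _ => ?_
  beta_reduce
  rw [rT_pr, mul_assoc, ← uT_add]
  have h1 : ((fun s => ((A s : ℕ) : ℝ)) + fun s => (B s : ℝ)) =
    fun s => ((A s + B s : ℕ) : ℝ) := by ext s; simp
  rw [h1, pr_period hn hj hq]
  congr 4
  ext s
  simp [Fin.val_add]

lemma avgC_sum {ι : Type*} (S : Finset ι) (f : ι → XSpace n → ℝ) (q : ℕ) :
    avgC j (fun x => ∑ i ∈ S, f i x) q = ∑ i ∈ S, avgC j (f i) q := by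
  unfold avgC
  rw [← Finset.mul_sum, Finset.sum_comm]

lemma avgC_const_mul (c : ℝ) (f : XSpace n → ℝ) (q : ℕ) :
    avgC j (fun x => c * f x) q = c * avgC j f q := by
  unfold avgC
  rw [← Finset.mul_sum]; ring

lemma avgC_mono {f h : XSpace n → ℝ} (hfh : ∀ x, f x ≤ h x) (q : ℕ) :
    avgC j f q ≤ avgC j h q := by
  unfold avgC
  gcongr
  exact hfh _

lemma abs_avgC_le (f : XSpace n → ℝ) (q : ℕ) : |avgC j f q| ≤ avgC j (fun x => |f x|) q := by
  unfold avgC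
  rw [abs_mul, abs_of_nonneg (by positivity)]
  gcongr
  exact Finset.abs_sum_le_sum_abs _ _

lemma avgC_sub_const {q : ℕ} (hq : 0 < q) (f : XSpace n → ℝ) (c : ℝ) :
    avgC j (fun x => f x - c) q = avgC j f q - c := by
  unfold avgC
  have hq' : (0 : ℝ) < q := by exact_mod_cast hq
  rw [Finset.sum_sub_distrib, Finset.sum_const, Finset.card_univ, Fintype.card_fun, Fintype.card_fin,
    nsmul_eq_mul, mul_sub]
  push_cast
  field_simp

lemma avgU_diff {u g : SLn n} (hug : ∀ b : ℕ, g * u ^ b = u ^ b * g) {f : XSpace n → ℝ} {ε : ℝ}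
    (hε : 0 ≤ ε) (h : ∀ x, |f (rightTranslate n g x) - f x| ≤ ε) (H : ℕ) (x : XSpace n) :
    |avgU u H f (rightTranslate n g x) - avgU u H f x| ≤ ε := by
  unfold avgU
  rw [← mul_sub, ← Finset.sum_sub_distrib, abs_mul, abs_of_nonneg (by positivity)]
  have h1 : |∑ b ∈ Finset.range H, (f (rightTranslate n (u ^ b) (rightTranslate n g x)) -
      f (rightTranslate n (u ^ b) x))| ≤ ∑ b ∈ Finset.range H, ε := by
    refine (Finset.abs_sum_le_sum_abs _ _).trans (Finset.sum_le_sum fun b _ => ?_)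
    rw [← rT_mul, hug b, rT_mul]
    exact h _
  rw [Finset.sum_const, Finset.card_range, nsmul_eq_mul] at h1
  rcases Nat.eq_zero_or_pos H with rfl | hH
  · simpa using hε
  · have hH' : (0 : ℝ) < H := by exact_mod_cast hH
    calc _ ≤ (H : ℝ)⁻¹ * (H * ε) := by gcongr
      _ = ε := by field_simp

theorem avgC_tendsto (hn : 2 ≤ n) (hj1 : 1 ≤ j) (hj : j ≤ n - 1)
    (hinv : ∀ g, Measure.map (rightTranslate n g) μ = μ) {f : XSpace n → ℝ} (hf : RUC f) :
    Tendsto (avgC j f) atTop (𝓝 (∫ x, f x ∂μ)) := by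
  have hn0 : 0 < n := by omega
  have hjn : j ≤ n := by omega
  set c := ∫ x, f x ∂μ with hc
  have hf0 : RUC (fun x => f x - c) := hf.sub (RUC.const c)
  have hint0 : ∫ x, (f x - c) ∂μ = 0 := by
    rw [integral_sub (hf.integrable μ) (integrable_const _)]
    simp [hc]
  rw [Metric.tendsto_nhds]
  intro ε' hε'
  obtain ⟨ε, hε, hεε⟩ : ∃ ε > 0, 4 * ε < ε' := ⟨ε' / 5, by positivity, by linarith⟩
  obtain ⟨R, hR, hRF⟩ : ∃ R : ℕ, 0 < R ∧ ∀ t : Sx n j → ℝ, (∀ s, |t s| ≤ 1 / (R : ℝ)) →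
      ∀ x, |(f (rightTranslate n (uT t) x) - c) - (f x - c)| ≤ ε := by
    have h1 := hf0.unif ε hε
    have h2 : Tendsto (uT : (Sx n j → ℝ) → SLn n) (𝓝 0) (𝓝 1) := by
      rw [← uT_zero (n := n) (j := j)]; exact continuous_uT.tendsto 0
    obtain ⟨δ, hδ, hδ2⟩ := Metric.eventually_nhds_iff.1 (h2.eventually h1)
    obtain ⟨R, hR⟩ := exists_nat_one_div_lt hδ
    refine ⟨R + 1, by omega, fun t ht x => hδ2 ?_ x⟩
    rw [dist_pi_lt_iff hδ]
    intro s
    have := ht s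
    rw [Pi.zero_apply, Real.dist_eq, sub_zero]
    push_cast at this
    linarith
  have hR' : (0 : ℝ) < R := by exact_mod_cast hR
  set s0 : Sx n j := ⟨(⟨n - 1, by omega⟩, ⟨0, by omega⟩), by simp; omega⟩ with hs0
  have hne : s0.1.1 ≠ s0.1.2 := by simp [hs0]; omega
  have hu : Good (uT (Pi.single s0 (1 : ℝ))) := by
    rw [uT_single s0 1 hne]; exact good_el hn hne
  set u := uT (Pi.single s0 (1 : ℝ)) with hu_def
  set η := ε / (R : ℝ) ^ (Fintype.card (Sx n j)) with hη
  have hη0 : 0 < η := by positivity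
  have hME := ME_one hinv hu hf0
  rw [hint0] at hME
  obtain ⟨H, hH1, hH2⟩ := ((hME.eventually_lt_const hη0).and (eventually_gt_atTop 0)).exists
  simp only [sub_zero] at hH1
  set F : XSpace n → ℝ := fun x => |avgU u H (fun x => f x - c) x| with hFdef
  have hF : RUC F := (hf0.avgU u H).abs
  have hb := avgC_bound hn hj1 hj hinv hF (fun x => abs_nonneg _) hε hη0 hR (by
    intro x t ht
    refine (abs_abs_sub_abs_le_abs_sub _ _).trans ?_
    refine avgU_diff (fun b => ?_) hε.le (hRF t ht) H x
    rw [hu_def, ← uT_nsmul, uT_comm])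
  filter_upwards [hb, eventually_gt_atTop 0] with q hq hq0
  rw [Real.dist_eq, ← avgC_sub_const hq0]
  have h1 : avgC j (fun x => f x - c) q = avgC j (avgU u H (fun x => f x - c)) q := by
    have : avgU u H (fun x => f x - c) = fun x => (H : ℝ)⁻¹ *
      ∑ b ∈ Finset.range H, (f (rightTranslate n (u ^ b) x) - c) := rfl
    rw [this, avgC_const_mul, avgC_sum]
    have h2 : ∀ b ∈ Finset.range H, avgC j (fun x => f (rightTranslate n (u ^ b) x) - c) q =
        avgC j (fun x => f x - c) q := by
      intro b _
      rw [← avgC_shift hn0 hjn hq0 (fun x => f x - c) (Pi.single s0 b)]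
      have h3 : (fun s => ((Pi.single s0 b : Sx n j → ℕ) s : ℝ)) = (b : ℝ) • Pi.single s0 (1 : ℝ) := by
        ext s
        simp only [Pi.single_apply, Pi.smul_apply, smul_eq_mul]
        split_ifs <;> simp
      rw [h3, uT_nsmul]
    rw [Finset.sum_congr rfl h2, Finset.sum_const, Finset.card_range, nsmul_eq_mul]
    have : (0 : ℝ) < H := by exact_mod_cast hH2
    field_simp
  rw [h1]
  refine (abs_avgC_le _ _).trans_lt (hq.trans_lt ?_)
  have h4 : (R : ℝ) ^ (Fintype.card (Sx n j)) * (∫ x, F x ∂μ + η) ≤ 2 * ε := by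
    have h5 : (R : ℝ) ^ (Fintype.card (Sx n j)) * (∫ x, F x ∂μ + η) ≤
      (R : ℝ) ^ (Fintype.card (Sx n j)) * (2 * η) := by
      gcongr; linarith
    refine h5.trans (le_of_eq ?_)
    rw [hη]; field_simp
  linarith

end core

end part8

section part9
open Filter Topology

section lattices
variable {n j : ℕ}

/-- the lattice generated by the rows -/
def lat (B : Matrix (Fin n) (Fin n) ℤ) : AddSubgroup (Fin n → ℤ) :=
  AddSubgroup.closure (Set.range fun i : Fin n => (B i : Fin n → ℤ))

lemma mem_lat {B : Matrix (Fin n) (Fin n) ℤ} {v : Fin n → ℤ} : v ∈ lat B ↔ ∃ x, x ᵥ* B = v := by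
  rw [lat, AddSubgroup.mem_closure_range_iff_of_fintype]
  simp only [Matrix.vecMul_eq_sum]
  constructor
  · rintro ⟨a, ha⟩; exact ⟨a, ha.symm⟩
  · rintro ⟨a, ha⟩; exact ⟨a, ha.symm⟩

/-- `g` represents the lattice `L` at level `N` -/
def IsRep (j N : ℕ) (L : AddSubgroup (Fin n → ℤ)) (g : SLn n) : Prop :=
  ∃ B : Matrix (Fin n) (Fin n) ℤ, lat B = L ∧
    (g : Matrix (Fin n) (Fin n) ℝ) = ((N : ℝ) ^ (-(j : ℝ) / (n : ℝ))) • (B.map (Int.cast : ℤ → ℝ))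

lemma scal_ne {n j N : ℕ} (hN : 0 < N) : ((N : ℝ) ^ (-(j : ℝ) / (n : ℝ))) ≠ 0 := by
  have : (0 : ℝ) < N := by exact_mod_cast hN
  positivity

lemma IsRep.pr_eq {N : ℕ} {L : AddSubgroup (Fin n → ℤ)} {g g' : SLn n}
    (h : IsRep j N L g) (h' : IsRep j N L g') : pr g = pr g' := by
  obtain ⟨B, hB, hg⟩ := h
  obtain ⟨B', hB', hg'⟩ := h'
  have h1 : ∀ i, ∃ x, x ᵥ* B = B' i := fun i => by
    rw [← mem_lat, hB, ← hB']
    exact AddSubgroup.subset_closure ⟨i, rfl⟩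
  choose X hX using h1
  have h2 : B' = Matrix.of X * B := by
    ext i k
    rw [Matrix.mul_apply_eq_vecMul]
    exact congrFun (hX i).symm k
  rw [pr_eq_iff]
  refine gamma_of_int (Matrix.of X) ?_
  have h3 : (g' : Matrix (Fin n) (Fin n) ℝ) = (Matrix.of X).map (Int.cast : ℤ → ℝ) * g := by
    rw [hg', hg, h2, Matrix.mul_smul]
    congr 1
    exact Matrix.map_mul (f := Int.castRingHom ℝ)
  rw [Matrix.SpecialLinearGroup.coe_mul, h3, mul_assoc, ← Matrix.SpecialLinearGroup.coe_mul]
  simp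

lemma lat_mul_mem {B C : Matrix (Fin n) (Fin n) ℤ} {v : Fin n → ℤ} :
    v ∈ lat (B * C) ↔ ∃ w ∈ lat B, w ᵥ* C = v := by
  simp only [mem_lat]
  constructor
  · rintro ⟨x, rfl⟩; exact ⟨x ᵥ* B, ⟨x, rfl⟩, by rw [Matrix.vecMul_vecMul]⟩
  · rintro ⟨w, ⟨x, rfl⟩, rfl⟩; exact ⟨x, by rw [Matrix.vecMul_vecMul]⟩

lemma mem_latticeSet {N : ℕ} {L : AddSubgroup (Fin n → ℤ)} : L ∈ latticeSet N n j ↔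
    ∃ φ : (Fin n → ℤ) →+ (Fin j → ZMod N), Function.Surjective φ ∧ φ.ker = L := by
  constructor
  · rintro ⟨e⟩
    refine ⟨e.toAddMonoidHom.comp (QuotientAddGroup.mk' L), ?_, ?_⟩
    · exact e.surjective.comp (QuotientAddGroup.mk'_surjective L)
    · ext v
      simp
  · rintro ⟨φ, hφ, rfl⟩
    exact ⟨QuotientAddGroup.quotientKerEquivOfSurjective φ hφ⟩

/-- homomorphism attached to a matrix -/
def phi {N : ℕ} (C : Matrix (Fin n) (Fin j) (ZMod N)) : (Fin n → ℤ) →+ (Fin j → ZMod N) where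
  toFun v := (fun i => (v i : ZMod N)) ᵥ* C
  map_zero' := by
    have : (fun i : Fin n => (((0 : Fin n → ℤ) i : ℤ) : ZMod N)) = 0 := by ext; simp
    rw [this, Matrix.zero_vecMul]
  map_add' v w := by
    have : (fun i : Fin n => (((v + w) i : ℤ) : ZMod N)) =
      (fun i => (v i : ZMod N)) + (fun i => (w i : ZMod N)) := by ext; simp
    rw [this, Matrix.add_vecMul]

lemma phi_apply {N : ℕ} (C : Matrix (Fin n) (Fin j) (ZMod N)) (v : Fin n → ℤ) :
    phi C v = (fun i => (v i : ZMod N)) ᵥ* C := rfl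

lemma exists_phi {N : ℕ} (φ : (Fin n → ℤ) →+ (Fin j → ZMod N)) : ∃ C, φ = phi C := by
  refine ⟨Matrix.of fun i => φ (Pi.single i 1), ?_⟩
  refine AddMonoidHom.ext fun v => ?_
  have h1 : v = ∑ i, v i • (Pi.single i (1 : ℤ) : Fin n → ℤ) := by
    ext k
    simp [Finset.sum_apply, Pi.single_apply]
  conv_lhs => rw [h1]
  rw [map_sum, phi_apply, Matrix.vecMul_eq_sum]
  refine Finset.sum_congr rfl fun i _ => ?_
  rw [map_zsmul]
  ext c
  simp

lemma latticeSet_finite {N : ℕ} (hN : 0 < N) : (latticeSet N n j).Finite := by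
  have : NeZero N := ⟨hN.ne'⟩
  refine (Set.finite_range fun C : Matrix (Fin n) (Fin j) (ZMod N) => (phi C).ker).subset ?_
  intro L hL
  obtain ⟨φ, -, h⟩ := mem_latticeSet.1 hL
  obtain ⟨C, rfl⟩ := exists_phi φ
  exact ⟨C, h⟩

lemma exists_basis (hn : 0 < n) {N : ℕ} (hN : 0 < N) {L : AddSubgroup (Fin n → ℤ)}
    (hL : L ∈ latticeSet N n j) :
    ∃ B : Matrix (Fin n) (Fin n) ℤ, lat B = L ∧ B.det = (N : ℤ) ^ j := by
  have : NeZero N := ⟨hN.ne'⟩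
  have hidx : L.index = N ^ j := by
    obtain ⟨e⟩ := hL
    rw [AddSubgroup.index, Nat.card_congr e.toEquiv, Nat.card_fun, Nat.card_zmod, Nat.card_fin]
  obtain ⟨e⟩ := (Int.addSubgroup_index_ne_zero_iff (H := L)).1 (by rw [hidx]; positivity)
  set bN : Module.Basis (Fin n) ℤ (AddSubgroup.toIntSubmodule L) :=
    Module.Basis.ofEquivFun (e.toIntLinearEquiv) with hbN
  set B : Matrix (Fin n) (Fin n) ℤ := Matrix.of fun i => ((bN i : L) : Fin n → ℤ) with hB
  have hdet := AddSubgroup.index_eq_natAbs_det (Pi.basisFun ℤ (Fin n)) L bN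
  have hBdet : B.det.natAbs = N ^ j := by
    rw [← hidx, hdet, Module.Basis.det_apply]
    rw [← Matrix.det_transpose]
    rfl
  have hlat : lat B = L := by
    ext v
    rw [mem_lat]
    constructor
    · rintro ⟨x, rfl⟩
      rw [Matrix.vecMul_eq_sum]
      exact sum_mem fun i _ => zsmul_mem (bN i).2 _
    · intro hv
      refine ⟨bN.repr ⟨v, hv⟩, ?_⟩
      have h1 := bN.sum_repr ⟨v, hv⟩
      have h2 : ((∑ i, bN.repr ⟨v, hv⟩ i • bN i : AddSubgroup.toIntSubmodule L) : Fin n → ℤ) = v := by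
        rw [h1]
      rw [Matrix.vecMul_eq_sum]
      conv_rhs => rw [← h2, Submodule.coe_sum]
      rfl
  rcases Int.natAbs_eq B.det with h | h
  · exact ⟨B, hlat, by rw [h, hBdet]; push_cast; rfl⟩
  · set D : Matrix (Fin n) (Fin n) ℤ := Matrix.diagonal (fun i => if i = ⟨0, hn⟩ then -1 else 1) with hD
    have hDD : D * D = 1 := by
      rw [hD, Matrix.diagonal_mul_diagonal, ← Matrix.diagonal_one]
      congr 1; ext i; split_ifs <;> simp
    refine ⟨D * B, ?_, ?_⟩
    · rw [← hlat]
      ext v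
      rw [mem_lat, mem_lat]
      constructor
      · rintro ⟨x, rfl⟩; exact ⟨x ᵥ* D, by rw [Matrix.vecMul_vecMul]⟩
      · rintro ⟨x, rfl⟩
        exact ⟨x ᵥ* D, by rw [Matrix.vecMul_vecMul, ← mul_assoc, hDD, one_mul]⟩
    · rw [Matrix.det_mul, h, hBdet, hD, Matrix.det_diagonal, Finset.prod_ite_eq']
      simp

lemma det_scal (hn : 0 < n) {N : ℕ} (hN : 0 < N) {B : Matrix (Fin n) (Fin n) ℤ}
    (hB : B.det = (N : ℤ) ^ j) :
    (((N : ℝ) ^ (-(j : ℝ) / (n : ℝ))) • (B.map (Int.cast : ℤ → ℝ))).det = 1 := by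
  have h2 : ((B.det : ℤ) : ℝ) = (B.map (Int.cast : ℤ → ℝ)).det := (Int.castRingHom ℝ).map_det B
  rw [Matrix.det_smul, ← h2, hB, Fintype.card_fin]
  push_cast
  exact scal_pow j hn hN

lemma exists_rep (hn : 0 < n) {N : ℕ} (hN : 0 < N) {L : AddSubgroup (Fin n → ℤ)}
    (hL : L ∈ latticeSet N n j) : ∃ g : SLn n, IsRep j N L g := by
  obtain ⟨B, hB, hd⟩ := exists_basis hn hN hL
  exact ⟨⟨_, det_scal hn hN hd⟩, B, hB, rfl⟩

lemma exists_rep_det (hn : 0 < n) {N : ℕ} (hN : 0 < N)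
    {g : SLn n} {B : Matrix (Fin n) (Fin n) ℤ}
    (hg : (g : Matrix (Fin n) (Fin n) ℝ) = ((N : ℝ) ^ (-(j : ℝ) / (n : ℝ))) • (B.map (Int.cast : ℤ → ℝ))) :
    B.det = (N : ℤ) ^ j := by
  have h2 : ((B.det : ℤ) : ℝ) = (B.map (Int.cast : ℤ → ℝ)).det := (Int.castRingHom ℝ).map_det B
  have h1 : (g : Matrix (Fin n) (Fin n) ℝ).det = 1 := g.2
  rw [hg, Matrix.det_smul, ← h2, Fintype.card_fin] at h1
  have h3 := scal_pow (n := n) j hn hN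
  have h4 : ((N : ℝ) ^ (-(j : ℝ) / (n : ℝ))) ^ n ≠ 0 := pow_ne_zero _ (scal_ne hN)
  have h5 := mul_left_cancel₀ h4 (h1.trans h3.symm)
  exact_mod_cast h5

/-- finite set of lattices -/
def Lfin (n j N : ℕ) : Finset (AddSubgroup (Fin n → ℤ)) :=
  if hN : 0 < N then (latticeSet_finite (n := n) (j := j) hN).toFinset else ∅

lemma mem_Lfin {N : ℕ} (hN : 0 < N) {L : AddSubgroup (Fin n → ℤ)} :
    L ∈ Lfin n j N ↔ L ∈ latticeSet N n j := by
  rw [Lfin, dif_pos hN]; simp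

open Classical in
/-- chosen representative -/
def sL (j N : ℕ) (L : AddSubgroup (Fin n → ℤ)) : SLn n :=
  if h : ∃ g : SLn n, IsRep j N L g then h.choose else 1

lemma sL_rep (hn : 0 < n) {N : ℕ} (hN : 0 < N) {L : AddSubgroup (Fin n → ℤ)}
    (hL : L ∈ latticeSet N n j) : IsRep j N L (sL j N L) := by
  have h := exists_rep hn hN hL
  have h2 : sL j N L = h.choose := dif_pos h
  rw [h2]
  exact h.choose_spec

/-- the standard lattice map -/
def phiStd (hj : j ≤ n) {N : ℕ} : (Fin n → ℤ) →+ (Fin j → ZMod N) where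
  toFun v := fun c => (v (Fin.castLE hj c) : ZMod N)
  map_zero' := by ext; simp
  map_add' v w := by ext; simp

lemma Lfin_nonempty (hj : j ≤ n) {N : ℕ} (hN : 0 < N) : (Lfin n j N).Nonempty := by
  refine ⟨(phiStd (N := N) hj).ker, ?_⟩
  rw [mem_Lfin hN, mem_latticeSet]
  refine ⟨phiStd hj, fun y => ?_, rfl⟩
  choose z hz using fun c => ZMod.intCast_surjective (y c)
  refine ⟨fun i => if h : (i : ℕ) < j then z ⟨i, h⟩ else 0, ?_⟩
  ext c
  simp [phiStd, hz]

end lattices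

end part9

section part10
open Filter Topology

section hecke
variable {n j : ℕ}

/-- right multiplication by an integral unimodular matrix -/
def eG (γ : Matrix.SpecialLinearGroup (Fin n) ℤ) : (Fin n → ℤ) ≃+ (Fin n → ℤ) where
  toFun v := v ᵥ* (γ : Matrix (Fin n) (Fin n) ℤ)
  invFun v := v ᵥ* ((γ⁻¹ : Matrix.SpecialLinearGroup (Fin n) ℤ) : Matrix (Fin n) (Fin n) ℤ)
  left_inv v := by
    beta_reduce
    rw [Matrix.vecMul_vecMul, ← Matrix.SpecialLinearGroup.coe_mul, mul_inv_cancel]; simp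
  right_inv v := by
    beta_reduce
    rw [Matrix.vecMul_vecMul, ← Matrix.SpecialLinearGroup.coe_mul, inv_mul_cancel]; simp
  map_add' v w := Matrix.add_vecMul _ _ _

lemma eG_apply (γ : Matrix.SpecialLinearGroup (Fin n) ℤ) (v : Fin n → ℤ) :
    eG γ v = v ᵥ* (γ : Matrix (Fin n) (Fin n) ℤ) := rfl

/-- `SL_n(ℤ) → SL_n(ℝ)` -/
abbrev toR (γ : Matrix.SpecialLinearGroup (Fin n) ℤ) : SLn n :=
  Matrix.SpecialLinearGroup.map (Int.castRingHom ℝ) γ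

lemma toR_coe (γ : Matrix.SpecialLinearGroup (Fin n) ℤ) :
    (toR γ : Matrix (Fin n) (Fin n) ℝ) = (γ : Matrix (Fin n) (Fin n) ℤ).map (Int.cast : ℤ → ℝ) := rfl

lemma IsRep.mul_gamma {N : ℕ} {L : AddSubgroup (Fin n → ℤ)} {g : SLn n} (h : IsRep j N L g)
    (γ : Matrix.SpecialLinearGroup (Fin n) ℤ) :
    IsRep j N (L.map (eG γ).toAddMonoidHom) (g * toR γ) := by
  obtain ⟨B, rfl, hg⟩ := h
  refine ⟨B * γ, ?_, ?_⟩
  · ext v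
    rw [lat_mul_mem]
    rfl
  · rw [Matrix.SpecialLinearGroup.coe_mul, hg, toR_coe, Matrix.smul_mul]
    congr 1
    exact (Matrix.map_mul (f := Int.castRingHom ℝ)).symm

lemma latticeSet_map {N : ℕ} {L : AddSubgroup (Fin n → ℤ)} (hL : L ∈ latticeSet N n j)
    (e : (Fin n → ℤ) ≃+ (Fin n → ℤ)) : L.map e.toAddMonoidHom ∈ latticeSet N n j := by
  obtain ⟨φ, hφ, rfl⟩ := mem_latticeSet.1 hL
  refine mem_latticeSet.2 ⟨φ.comp e.symm.toAddMonoidHom, hφ.comp e.symm.surjective, ?_⟩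
  ext v
  rw [AddMonoidHom.mem_ker, AddSubgroup.mem_map]
  constructor
  · intro h
    exact ⟨e.symm v, h, e.apply_symm_apply v⟩
  · rintro ⟨w, hw, rfl⟩
    have : φ w = 0 := hw
    simpa using this

lemma sum_gamma (hn : 0 < n) {N : ℕ} (hN : 0 < N) {γ : SLn n} (hγ : γ ∈ Gamma n)
    (Φ : XSpace n → ℝ) :
    ∑ L ∈ Lfin n j N, Φ (pr (sL j N L * γ)) = ∑ L ∈ Lfin n j N, Φ (pr (sL j N L)) := by
  obtain ⟨γ, rfl⟩ := hγ
  refine Finset.sum_nbij' (fun L => L.map (eG γ).toAddMonoidHom)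
    (fun L => L.map (eG γ).symm.toAddMonoidHom) ?_ ?_ ?_ ?_ ?_
  · intro L hL
    rw [mem_Lfin hN] at hL ⊢
    exact latticeSet_map hL _
  · intro L hL
    rw [mem_Lfin hN] at hL ⊢
    exact latticeSet_map hL _
  · intro L _
    rw [AddSubgroup.map_map]
    convert AddSubgroup.map_id L
    ext v : 1
    simp
  · intro L _
    rw [AddSubgroup.map_map]
    convert AddSubgroup.map_id L
    ext v : 1
    simp
  · intro L hL
    rw [mem_Lfin hN] at hL
    congr 1
    exact ((sL_rep hn hN hL).mul_gamma γ).pr_eq (sL_rep hn hN (latticeSet_map hL _))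

/-- the Hecke operator -/
def hT (j N : ℕ) (f : XSpace n → ℝ) (x : XSpace n) : ℝ :=
  ((Lfin n j N).card : ℝ)⁻¹ * ∑ L ∈ Lfin n j N, f (pr (sL j N L * (pr_surj x).choose))

lemma hT_pr (hn : 0 < n) {N : ℕ} (hN : 0 < N) (f : XSpace n → ℝ) (g : SLn n) :
    hT j N f (pr g) = ((Lfin n j N).card : ℝ)⁻¹ * ∑ L ∈ Lfin n j N, f (pr (sL j N L * g)) := by
  unfold hT
  congr 1
  have h := (pr_surj (pr g)).choose_spec
  set g' := (pr_surj (pr g)).choose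
  have hγ : g' * g⁻¹ ∈ Gamma n := pr_eq_iff.1 h.symm
  have h1 := sum_gamma (j := j) hn hN hγ (fun x => f (rightTranslate n g x))
  simp only [rT_pr] at h1
  rw [← h1]
  refine Finset.sum_congr rfl fun L _ => ?_
  congr 2
  group

lemma Lfin_card_pos (hj : j ≤ n) {N : ℕ} (hN : 0 < N) : (0 : ℝ) < (Lfin n j N).card := by
  exact_mod_cast (Lfin_nonempty hj hN).card_pos

lemma avg_bound {ι : Type*} (s : Finset ι) (hs : (0 : ℝ) < s.card) {a : ι → ℝ} {C : ℝ}
    (h : ∀ i ∈ s, |a i| ≤ C) : |(s.card : ℝ)⁻¹ * ∑ i ∈ s, a i| ≤ C := by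
  rw [abs_mul, abs_of_nonneg (by positivity)]
  have h1 : |∑ i ∈ s, a i| ≤ s.card * C := by
    refine (Finset.abs_sum_le_sum_abs _ _).trans ?_
    rw [← nsmul_eq_mul, ← Finset.sum_const]
    exact Finset.sum_le_sum h
  calc _ ≤ (s.card : ℝ)⁻¹ * (s.card * C) := by gcongr
    _ = C := by field_simp

lemma hT_rT (hn : 0 < n) {N : ℕ} (hN : 0 < N) (f : XSpace n → ℝ) (g : SLn n) (x : XSpace n) :
    hT j N f (rightTranslate n g x) = hT j N (fun y => f (rightTranslate n g y)) x := by
  obtain ⟨h, rfl⟩ := pr_surj x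
  rw [rT_pr, hT_pr hn hN, hT_pr hn hN]
  simp only [rT_pr, mul_assoc]

lemma hT_sub_const (hj : j ≤ n) {N : ℕ} (hN : 0 < N) (f : XSpace n → ℝ) (c : ℝ)
    (x : XSpace n) : hT j N (fun y => f y - c) x = hT j N f x - c := by
  have := Lfin_card_pos (n := n) hj hN
  unfold hT
  rw [Finset.sum_sub_distrib, Finset.sum_const, nsmul_eq_mul, mul_sub]
  field_simp

lemma abs_hT_le {N : ℕ} (f : XSpace n → ℝ) (x : XSpace n) :
    |hT j N f x| ≤ hT j N (fun y => |f y|) x := by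
  unfold hT
  rw [abs_mul, abs_of_nonneg (by positivity)]
  gcongr
  exact Finset.abs_sum_le_sum_abs _ _

lemma hT_const_mul {N : ℕ} (c : ℝ) (f : XSpace n → ℝ) (x : XSpace n) :
    hT j N (fun y => c * f y) x = c * hT j N f x := by
  unfold hT
  rw [← Finset.mul_sum]; ring

lemma hT_sum {N : ℕ} {ι : Type*} (S : Finset ι) (f : ι → XSpace n → ℝ) (x : XSpace n) :
    hT j N (fun y => ∑ i ∈ S, f i y) x = ∑ i ∈ S, hT j N (f i) x := by
  unfold hT
  rw [← Finset.mul_sum, Finset.sum_comm]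

lemma hT_avgU (hn : 0 < n) {N : ℕ} (hN : 0 < N) (f : XSpace n → ℝ) (u : SLn n) (H : ℕ)
    (x : XSpace n) : avgU u H (hT j N f) x = hT j N (avgU u H f) x := by
  have : avgU u H f = fun x => (H : ℝ)⁻¹ *
      ∑ b ∈ Finset.range H, f (rightTranslate n (u ^ b) x) := rfl
  rw [this, hT_const_mul, hT_sum]
  unfold avgU
  congr 1
  exact Finset.sum_congr rfl fun b _ => hT_rT hn hN f _ x

lemma RUC.hT (hn : 0 < n) (hj : j ≤ n) {N : ℕ} (hN : 0 < N) {f : XSpace n → ℝ} (hf : RUC f) :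
    RUC (hT j N f) := by
  have hcard := Lfin_card_pos (n := n) hj hN
  refine ⟨?_, ?_, ?_⟩
  · have hq : Topology.IsQuotientMap (pr : SLn n → XSpace n) :=
      (isOpenMap_pr n).isQuotientMap (continuous_pr n) pr_surj
    rw [hq.continuous_iff]
    have : _root_.hT j N f ∘ pr = fun g => ((Lfin n j N).card : ℝ)⁻¹ *
        ∑ L ∈ Lfin n j N, f (pr (sL j N L * g)) := by
      ext g; exact hT_pr hn hN f g
    rw [this]
    refine continuous_const.mul (continuous_finsetSum _ fun L _ => ?_)
    exact hf.cont.comp ((continuous_pr n).comp (continuous_const.mul continuous_id))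
  · obtain ⟨C, hC⟩ := hf.bdd
    exact ⟨C, fun x => avg_bound _ hcard fun L _ => hC _⟩
  · intro ε hε
    filter_upwards [hf.unif ε hε] with g hg x
    obtain ⟨h, rfl⟩ := pr_surj x
    rw [rT_pr, hT_pr hn hN, hT_pr hn hN, ← mul_sub, ← Finset.sum_sub_distrib]
    refine avg_bound _ hcard fun L _ => ?_
    have := hg (pr (sL j N L * h))
    rwa [rT_pr, mul_assoc] at this

variable {μ : Measure (XSpace n)} [IsProbabilityMeasure μ]

lemma local_ac_real (hinv : ∀ g, Measure.map (rightTranslate n g) μ = μ) {K : Set (SLn n)}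
    (hK : IsCompact K) : ∃ C : ℝ, ∀ k : XSpace n → ℝ, RUC k → (∀ x, 0 ≤ k x) →
      ∫ g in K, k (pr g) ∂(lam n) ≤ C * ∫ x, k x ∂μ := by
  obtain ⟨C, hC, h⟩ := local_ac hinv hK
  refine ⟨C.toReal, fun k hk hk0 => ?_⟩
  have h1 := h (fun x => ENNReal.ofReal (k x)) hk.measurable.ennreal_ofReal
  rw [integral_eq_lintegral_of_nonneg_ae (Eventually.of_forall fun x => hk0 _)
      (hk.cont.comp (continuous_pr n)).aestronglyMeasurable,
    integral_eq_lintegral_of_nonneg_ae (Eventually.of_forall fun x => hk0 _)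
      hk.cont.measurable.aestronglyMeasurable, ← ENNReal.toReal_mul]
  refine ENNReal.toReal_mono (ENNReal.mul_ne_top hC ?_) h1
  exact (hk.integrable μ).lintegral_lt_top.ne

lemma local_ac_hT (hn : 0 < n) {N : ℕ} (hN : 0 < N)
    (hinv : ∀ g, Measure.map (rightTranslate n g) μ = μ) {K : Set (SLn n)}
    (hK : IsCompact K) : ∃ C : ℝ, ∀ k : XSpace n → ℝ, RUC k → (∀ x, 0 ≤ k x) →
      ∫ g in K, hT j N k (pr g) ∂(lam n) ≤ C * ∫ x, k x ∂μ := by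
  have h1 : ∀ L : AddSubgroup (Fin n → ℤ), ∃ C : ℝ, ∀ k : XSpace n → ℝ, RUC k → (∀ x, 0 ≤ k x) →
      ∫ g in K, k (pr (sL j N L * g)) ∂(lam n) ≤ C * ∫ x, k x ∂μ := by
    intro L
    set s := sL j N L
    have hsK : IsCompact ((fun g => s * g) '' K) := hK.image (continuous_const.mul continuous_id)
    obtain ⟨C, hC⟩ := local_ac_real hinv hsK
    refine ⟨C, fun k hk hk0 => (le_of_eq ?_).trans (hC k hk hk0)⟩
    rw [← integral_indicator hK.measurableSet, ← integral_indicator hsK.measurableSet,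
      ← integral_mul_left_eq_self (((fun g => s * g) '' K).indicator (fun g => k (pr g))) s]
    congr 1
    ext g
    have : s * g ∈ (fun g => s * g) '' K ↔ g ∈ K := by simp
    by_cases hg : g ∈ K
    · rw [Set.indicator_of_mem hg, Set.indicator_of_mem (this.2 hg)]
    · rw [Set.indicator_of_notMem hg, Set.indicator_of_notMem (fun h => hg (this.1 h))]
  choose C hC using h1
  refine ⟨((Lfin n j N).card : ℝ)⁻¹ * ∑ L ∈ Lfin n j N, C L, fun k hk hk0 => ?_⟩
  simp only [hT_pr hn hN]
  rw [integral_const_mul, integral_finsetSum]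
  · rw [mul_assoc, Finset.sum_mul]
    gcongr with L hL
    exact hC L k hk hk0
  · intro L _
    obtain ⟨D, hD⟩ := hk.bdd
    refine Measure.integrableOn_of_bounded (M := D) hK.measure_lt_top.ne ?_
      (Eventually.of_forall fun g => hD _)
    exact (hk.cont.comp ((continuous_pr n).comp
      (continuous_const.mul continuous_id))).aestronglyMeasurable

lemma hT_integral (hn : 2 ≤ n) (hj : j ≤ n) {N : ℕ} (hN : 0 < N)
    (hinv : ∀ g, Measure.map (rightTranslate n g) μ = μ) {h : XSpace n → ℝ} (hh : RUC h) :
    ∫ x, hT j N h x ∂μ = ∫ x, h x ∂μ := by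
  have hn0 : 0 < n := by omega
  have hik : (⟨0, by omega⟩ : Fin n) ≠ ⟨n - 1, by omega⟩ := by
    simp only [ne_eq, Fin.mk.injEq]; omega
  have hu := good_el hn hik
  set u := el hik 1
  have hTh := hh.hT hn0 hj hN
  set c := ∫ x, h x ∂μ with hc
  set c' := ∫ x, hT j N h x ∂μ with hc'
  set V := CB n 1 with hV
  have hVc : IsCompact V := isCompact_CB n 1
  obtain ⟨C1, hC1⟩ := local_ac_real hinv hVc
  obtain ⟨C2, hC2⟩ := local_ac_hT (j := j) hn0 hN hinv hVc
  have m1 := ME_one hinv hu hh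
  have m2 := ME_one hinv hu hTh
  rw [← hc] at m1
  rw [← hc'] at m2
  have hlim : Tendsto (fun H => C1 * ∫ x, |avgU u H (hT j N h) x - c'| ∂μ +
      C2 * ∫ x, |avgU u H h x - c| ∂μ) atTop (𝓝 (C1 * 0 + C2 * 0)) :=
    (m2.const_mul C1).add (m1.const_mul C2)
  have hle : ∀ H : ℕ, (lam n).real V * |c' - c| ≤ C1 * ∫ x, |avgU u H (hT j N h) x - c'| ∂μ +
      C2 * ∫ x, |avgU u H h x - c| ∂μ := by
    intro H
    have r1 : RUC (fun x => |avgU u H (hT j N h) x - c'|) := ((hTh.avgU u H).sub (RUC.const c')).abs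
    have r2 : RUC (fun x => |avgU u H h x - c|) := ((hh.avgU u H).sub (RUC.const c)).abs
    have r3 := r2.hT hn0 hj hN
    refine le_trans ?_ (add_le_add (hC1 _ r1 fun x => abs_nonneg _) (hC2 _ r2 fun x => abs_nonneg _))
    have hi : ∀ k : XSpace n → ℝ, RUC k → IntegrableOn (fun g => k (pr g)) V (lam n) := by
      intro k hk
      obtain ⟨D, hD⟩ := hk.bdd
      exact Measure.integrableOn_of_bounded (M := D) hVc.measure_lt_top.ne
        (hk.cont.comp (continuous_pr n)).aestronglyMeasurable (Eventually.of_forall fun g => hD _)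
    rw [← integral_add (hi _ r1) (hi _ r3), ← smul_eq_mul, ← setIntegral_const]
    refine setIntegral_mono_on (integrableOn_const hVc.measure_lt_top.ne) ((hi _ r1).add (hi _ r3))
      hVc.measurableSet ?_
    intro g _
    have h1 := abs_hT_le (j := j) (N := N) (fun x => avgU u H h x - c) (pr g)
    rw [hT_sub_const hj hN, ← hT_avgU hn0 hN] at h1
    refine le_trans ?_ (add_le_add_right h1 _)
    have := abs_add_le (c' - avgU u H (hT j N h) (pr g)) (avgU u H (hT j N h) (pr g) - c)
    rw [abs_sub_comm c'] at this
    simpa using this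
  have h0 := ge_of_tendsto' hlim hle
  have hpos : 0 < (lam n).real V := by
    refine ENNReal.toReal_pos (Measure.measure_pos_of_mem_nhds (lam n) (CB_mem_nhds one_pos)).ne' hVc.measure_lt_top.ne
  have h1 : |c' - c| ≤ 0 := by
    by_contra hcon
    push Not at hcon
    nlinarith
  have := abs_nonpos_iff.1 h1
  linarith

end hecke

end part10

section part11
open Filter Topology

section cells
variable {n j : ℕ}

/-- integral matrix of the big cell -/
def BA {q : ℕ} (A : Sx n j → Fin q) : Matrix (Fin n) (Fin n) ℤ :=
  Matrix.of fun i c => (if i = c then (if (i : ℕ) < j then (q : ℤ) else 1) else 0) +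
    (if h : j ≤ (i : ℕ) ∧ (c : ℕ) < j then ((A ⟨(i, c), h⟩ : ℕ) : ℤ) else 0)

/-- auxiliary sum -/
def SA {q : ℕ} (A : Sx n j → Fin q) (x : Fin n → ℤ) (c : Fin n) : ℤ :=
  ∑ i : Fin n, if h : j ≤ (i : ℕ) ∧ (c : ℕ) < j then x i * ((A ⟨(i, c), h⟩ : ℕ) : ℤ) else 0

lemma SA_congr {q : ℕ} (A : Sx n j → Fin q) {x y : Fin n → ℤ} (h : ∀ i : Fin n, j ≤ (i : ℕ) → x i = y i)
    (c : Fin n) : SA A x c = SA A y c := by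
  unfold SA
  refine Finset.sum_congr rfl fun i _ => ?_
  split_ifs with hh
  · rw [h i hh.1]
  · rfl

lemma SA_ge {q : ℕ} (A : Sx n j → Fin q) (x : Fin n → ℤ) {c : Fin n} (hc : j ≤ (c : ℕ)) :
    SA A x c = 0 := by
  unfold SA
  refine Finset.sum_eq_zero fun i _ => ?_
  rw [dif_neg (by omega)]

lemma vecMul_BA {q : ℕ} (A : Sx n j → Fin q) (x : Fin n → ℤ) (c : Fin n) :
    (x ᵥ* BA A) c = x c * (if (c : ℕ) < j then (q : ℤ) else 1) + SA A x c := by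
  unfold SA BA
  simp only [Matrix.vecMul, dotProduct, Matrix.of_apply, mul_add, Finset.sum_add_distrib]
  congr 1
  · simp
  · refine Finset.sum_congr rfl fun i _ => ?_
    split_ifs <;> simp

lemma mem_lat_BA {q : ℕ} (hq : 0 < q) (A : Sx n j → Fin q) (v : Fin n → ℤ) :
    v ∈ lat (BA A) ↔ ∀ c : Fin n, (c : ℕ) < j → (q : ℤ) ∣ v c - SA A v c := by
  rw [mem_lat]
  constructor
  · rintro ⟨x, rfl⟩ c hc
    have h1 : SA A (x ᵥ* BA A) c = SA A x c := by
      refine SA_congr A (fun i hi => ?_) c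
      rw [vecMul_BA, SA_ge A x hi, if_neg (by omega)]; simp
    rw [h1, vecMul_BA, if_pos hc]
    exact ⟨x c, by ring⟩
  · intro h
    refine ⟨fun c => if (c : ℕ) < j then (v c - SA A v c) / q else v c, ?_⟩
    have hS : ∀ c, SA A (fun c => if (c : ℕ) < j then (v c - SA A v c) / q else v c) c = SA A v c :=
      fun c => SA_congr A (fun i hi => by rw [if_neg (show ¬ (i : ℕ) < j by omega)]) c
    ext c
    rw [vecMul_BA, hS]
    by_cases hc : (c : ℕ) < j
    · simp only [hc, if_true]
      rw [Int.ediv_mul_cancel (h c hc)]; ring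
    · simp only [hc, if_false]
      rw [SA_ge A v (by omega)]; ring

/-- matrix of the homomorphism of a big-cell lattice -/
def CA {q : ℕ} (hj : j ≤ n) (A : Sx n j → Fin q) : Matrix (Fin n) (Fin j) (ZMod q) :=
  Matrix.of fun i c => (if i = Fin.castLE hj c then 1 else 0) -
    (if h : j ≤ (i : ℕ) then ((A ⟨(i, Fin.castLE hj c), h, c.2⟩ : ℕ) : ZMod q) else 0)

lemma phi_CA {q : ℕ} (hj : j ≤ n) (A : Sx n j → Fin q) (v : Fin n → ℤ) (c : Fin j) :
    phi (CA hj A) v c = ((v (Fin.castLE hj c) - SA A v (Fin.castLE hj c) : ℤ) : ZMod q) := by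
  rw [phi_apply]
  unfold SA CA
  simp only [Matrix.vecMul, dotProduct, Matrix.of_apply, mul_sub, Finset.sum_sub_distrib]
  push_cast
  congr 1
  · simp
  · refine Finset.sum_congr rfl fun i _ => ?_
    by_cases h : j ≤ (i : ℕ)
    · rw [dif_pos h, dif_pos ⟨h, c.2⟩]; push_cast; rfl
    · rw [dif_neg h, dif_neg (by tauto)]; simp

lemma lat_BA_eq {q : ℕ} (hq : 0 < q) (hj : j ≤ n) (A : Sx n j → Fin q) :
    (phi (CA hj A)).ker = lat (BA A) := by
  ext v
  rw [mem_lat_BA hq, AddMonoidHom.mem_ker, funext_iff]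
  simp only [phi_CA, Pi.zero_apply, ZMod.intCast_zmod_eq_zero_iff_dvd]
  constructor
  · intro h c hc
    exact h ⟨c, hc⟩
  · intro h c
    exact h _ c.2

lemma lat_BA_mem {q : ℕ} (hq : 0 < q) (hj : j ≤ n) (A : Sx n j → Fin q) :
    lat (BA A) ∈ latticeSet q n j := by
  rw [mem_latticeSet]
  refine ⟨phi (CA hj A), fun y => ?_, lat_BA_eq hq hj A⟩
  choose z hz using fun c => ZMod.intCast_surjective (y c)
  refine ⟨fun i => if h : (i : ℕ) < j then z ⟨i, h⟩ else 0, ?_⟩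
  ext c
  rw [phi_CA, SA_congr A (y := 0) (fun i hi => by rw [dif_neg (by omega)]; rfl)]
  simp [SA, hz]

lemma lat_BA_inj {q : ℕ} (hq : 0 < q) : Function.Injective (fun A : Sx n j → Fin q => lat (BA A)) := by
  intro A A' h
  replace h : lat (BA A) = lat (BA A') := h
  ext ⟨⟨r, c⟩, hr, hc⟩
  have hr : j ≤ (r : ℕ) := hr
  have hc : (c : ℕ) < j := hc
  have h1 : BA A r ∈ lat (BA A') := by
    rw [← h]; exact AddSubgroup.subset_closure ⟨r, rfl⟩
  have h2 := (mem_lat_BA hq A' _).1 h1 c hc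
  have h3 : SA A' (BA A r) c = ((A' ⟨(r, c), hr, hc⟩ : ℕ) : ℤ) := by
    rw [SA_congr A' (y := Pi.single r 1)]
    · unfold SA
      rw [Finset.sum_eq_single r]
      · rw [dif_pos ⟨hr, hc⟩]; simp
      · intro i _ hi
        simp [hi]
      · simp
    · intro i hi
      simp only [BA, Matrix.of_apply, Pi.single_apply]
      rw [dif_neg (show ¬ (j ≤ (r : ℕ) ∧ (i : ℕ) < j) by omega),
        if_neg (show ¬ (r : ℕ) < j by omega)]
      simp [eq_comm]
  have h4 : BA A r c = ((A ⟨(r, c), hr, hc⟩ : ℕ) : ℤ) := by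
    have : r ≠ c := by rintro rfl; omega
    simp only [BA, Matrix.of_apply, dif_pos (show j ≤ (r : ℕ) ∧ (c : ℕ) < j from ⟨hr, hc⟩), if_neg this, zero_add]
  rw [h3, h4] at h2
  have b1 := (A ⟨(r, c), hr, hc⟩).2
  have b2 := (A' ⟨(r, c), hr, hc⟩).2
  have h5 := Int.eq_zero_of_abs_lt_dvd h2 (by rw [abs_lt]; constructor <;> omega)
  omega

lemma rep_BA (hn : 0 < n) {q : ℕ} (hq : 0 < q) (hj : j ≤ n) (A : Sx n j → Fin q) :
    IsRep j q (lat (BA A)) (aq n j q * uT (fun s => ((A s : ℕ) : ℝ))) := by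
  refine ⟨BA A, rfl, ?_⟩
  rw [Matrix.SpecialLinearGroup.coe_mul, aq_coe hn hj hq, aqM, uT_coe, Matrix.smul_mul]
  congr 1
  ext i c
  rw [Matrix.diagonal_mul, Matrix.add_apply, Nm_apply, Matrix.map_apply]
  simp only [BA, ddg, Matrix.of_apply, Matrix.one_apply]
  by_cases h1 : i = c
  · subst h1
    rw [dif_neg (by omega), dif_neg (by omega)]
    split_ifs <;> simp
  · by_cases h2 : j ≤ (i : ℕ) ∧ (c : ℕ) < j
    · rw [dif_pos h2, dif_pos h2, if_neg (show ¬ ((i : ℕ) < j) by omega)]; simp [h1]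
    · rw [dif_neg h2, dif_neg h2]; simp [h1]

lemma card_le (hj : j ≤ n) {q : ℕ} (hq : 0 < q) :
    (q : ℝ) ^ (Fintype.card (Sx n j)) ≤ (Lfin n j q).card := by
  have h := Finset.card_le_card_of_injOn (s := (Finset.univ : Finset (Sx n j → Fin q))) (t := Lfin n j q)
    (fun A => lat (BA A)) (fun A _ => by
      rw [Finset.mem_coe, mem_Lfin hq]; exact lat_BA_mem hq hj A) (lat_BA_inj hq).injOn
  rw [Finset.card_univ, Fintype.card_fun, Fintype.card_fin] at h
  exact_mod_cast h

lemma exists_W (hn : 0 < n) (σ : Equiv.Perm (Fin n)) :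
    ∃ w : Matrix.SpecialLinearGroup (Fin n) ℤ, ∃ ε : Fin n → ℤˣ,
      ∀ i k, (w : Matrix (Fin n) (Fin n) ℤ) i k = ε i * if σ i = k then 1 else 0 := by
  refine ⟨⟨Matrix.diagonal (fun i => if i = ⟨0, hn⟩ then ((Equiv.Perm.sign σ : ℤˣ) : ℤ) else 1) *
    Equiv.Perm.permMatrix ℤ σ, ?_⟩, fun i => if i = ⟨0, hn⟩ then Equiv.Perm.sign σ else 1, ?_⟩
  · rw [Matrix.det_mul, Matrix.det_diagonal, Finset.prod_ite_eq', Matrix.det_permutation]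
    simp [← Units.val_mul, Int.units_mul_self]
  · intro i k
    change (Matrix.diagonal (fun i : Fin n => if i = ⟨0, hn⟩ then ((Equiv.Perm.sign σ : ℤˣ) : ℤ) else 1) *
      Equiv.Perm.permMatrix ℤ σ) i k = _
    rw [Matrix.diagonal_mul]
    have : Equiv.Perm.permMatrix ℤ σ i k = if σ i = k then 1 else 0 := by
      simp [Equiv.Perm.permMatrix, PEquiv.toMatrix_apply, eq_comm]
    rw [this]
    beta_reduce
    by_cases h : i = ⟨0, hn⟩
    · rw [if_pos h, if_pos h]
    · rw [if_neg h, if_neg h]; simp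

/-- signed permutation matrices -/
def Wσ (hn : 0 < n) (σ : Equiv.Perm (Fin n)) : Matrix.SpecialLinearGroup (Fin n) ℤ :=
  (exists_W hn σ).choose

lemma Wσ_apply (hn : 0 < n) (σ : Equiv.Perm (Fin n)) : ∃ ε : Fin n → ℤˣ,
    ∀ i k, (Wσ hn σ : Matrix (Fin n) (Fin n) ℤ) i k = ε i * if σ i = k then 1 else 0 :=
  (exists_W hn σ).choose_spec

/-- over a field: a surjective matrix has an invertible maximal minor -/
lemma exists_minor {K : Type*} [Field K] (C : Matrix (Fin n) (Fin j) K)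
    (hC : ∀ y, ∃ x, x ᵥ* C = y) :
    ∃ ρ : Fin j ↪ Fin n, IsUnit (C.submatrix ρ id).det := by
  obtain ⟨κ, a, ha, hspan, hli⟩ := exists_linearIndependent' K C.row
  have htop : Submodule.span K (Set.range C.row) = ⊤ := by
    rw [eq_top_iff]
    rintro y -
    obtain ⟨x, rfl⟩ := hC y
    rw [Matrix.vecMul_eq_sum]
    exact Submodule.sum_mem _ fun i _ => Submodule.smul_mem _ _ (Submodule.subset_span ⟨i, rfl⟩)
  have b := Module.Basis.mk hli (by rw [hspan, htop])
  let e : Fin j ≃ κ := (Pi.basisFun K (Fin j)).indexEquiv b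
  refine ⟨⟨a ∘ e, ha.comp e.injective⟩, ?_⟩
  rw [← Matrix.isUnit_iff_isUnit_det, ← Matrix.linearIndependent_rows_iff_isUnit]
  exact hli.comp e e.injective

lemma exists_minor_pp {p k : ℕ} (hp : p.Prime) (hk : 0 < k) (C : Matrix (Fin n) (Fin j) (ZMod (p ^ k)))
    (hC : Function.Surjective (phi C)) :
    ∃ ρ : Fin j ↪ Fin n, IsUnit (C.submatrix ρ id).det := by
  have : Fact p.Prime := ⟨hp⟩
  have : NeZero (p ^ k) := ⟨(pow_pos hp.pos k).ne'⟩
  have hdvd : p ∣ p ^ k := dvd_pow_self p hk.ne'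
  let π : ZMod (p ^ k) →+* ZMod p := ZMod.castHom hdvd (ZMod p)
  have hπ : Function.Surjective π := ZMod.castHom_surjective hdvd
  obtain ⟨ρ, hρ⟩ := exists_minor (C.map π) (by
    intro y
    choose z hz using fun c => hπ (y c)
    obtain ⟨v, hv⟩ := hC z
    refine ⟨fun i => (v i : ZMod p), ?_⟩
    ext c
    rw [← hz c, ← hv, phi_apply]
    simp [Matrix.vecMul, dotProduct])
  refine ⟨ρ, ?_⟩
  have h1 : (C.map π).submatrix ρ id = (C.submatrix ρ id).map π := rfl
  have h2 : ((C.submatrix ρ id).map π).det = π (C.submatrix ρ id).det := (π.map_det _).symm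
  rw [h1, h2] at hρ
  set d := (C.submatrix ρ id).det
  have h3 : ((d.val : ℕ) : ZMod (p ^ k)) = d := ZMod.natCast_zmod_val d
  rw [← h3, map_natCast, ZMod.isUnit_iff_coprime] at hρ
  rw [← h3, ZMod.isUnit_iff_coprime]
  exact hρ.pow_right k

lemma exists_cell (hn : 0 < n) (hj : j ≤ n) {p k : ℕ} (hp : p.Prime) (hk : 0 < k)
    {L : AddSubgroup (Fin n → ℤ)} (hL : L ∈ latticeSet (p ^ k) n j) :
    ∃ (σ : Equiv.Perm (Fin n)) (A : Sx n j → Fin (p ^ k)),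
      (lat (BA A)).map (eG (Wσ hn σ)).toAddMonoidHom = L := by
  have : NeZero (p ^ k) := ⟨(pow_pos hp.pos k).ne'⟩
  have hq : 0 < p ^ k := pow_pos hp.pos k
  obtain ⟨φ, hφ, rfl⟩ := mem_latticeSet.1 hL
  obtain ⟨C, rfl⟩ := exists_phi φ
  obtain ⟨ρ, hρ⟩ := exists_minor_pp hp hk C hφ
  have := Equiv.Perm.isMultiplyPretransitive (Fin n) j
  obtain ⟨σ, hσ⟩ := MulAction.exists_smul_eq (Equiv.Perm (Fin n))
    (Fin.castLEEmb hj) ρ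
  have hσ' : ∀ c : Fin j, σ (Fin.castLE hj c) = ρ c := fun c => by rw [← hσ]; rfl
  obtain ⟨ε, hε⟩ := Wσ_apply hn σ
  set w := Wσ hn σ with hw
  -- the transformed matrix
  set C2 : Matrix (Fin n) (Fin j) (ZMod (p ^ k)) :=
    Matrix.of fun i c => ((ε i : ℤ) : ZMod (p ^ k)) * C (σ i) c with hC2
  have hphi : ∀ v, phi C (v ᵥ* (w : Matrix (Fin n) (Fin n) ℤ)) = phi C2 v := by
    intro v
    have e1 : (fun i => (((v ᵥ* (w : Matrix (Fin n) (Fin n) ℤ)) i : ℤ) : ZMod (p ^ k))) =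
        (fun i => (v i : ZMod (p ^ k))) ᵥ* ((w : Matrix (Fin n) (Fin n) ℤ).map (Int.cast : ℤ → ZMod (p ^ k))) := by
      ext i
      simp [Matrix.vecMul, dotProduct]
    rw [phi_apply, e1, Matrix.vecMul_vecMul, phi_apply]
    congr 1
    ext i c
    rw [Matrix.mul_apply, hC2, Matrix.of_apply]
    simp [hε]
  set U : Matrix (Fin j) (Fin j) (ZMod (p ^ k)) := C2.submatrix (Fin.castLE hj) id with hU
  have hUdet : IsUnit U.det := by
    have : U = Matrix.diagonal (fun c => ((ε (Fin.castLE hj c) : ℤ) : ZMod (p ^ k))) *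
        C.submatrix ρ id := by
      ext c c'
      rw [Matrix.diagonal_mul, hU, Matrix.submatrix_apply, hC2, Matrix.of_apply, hσ']
      rfl
    rw [this, Matrix.det_mul, Matrix.det_diagonal]
    refine IsUnit.mul ?_ hρ
    rw [IsUnit.prod_univ_iff]
    intro c
    exact (ε (Fin.castLE hj c)).isUnit.map (Int.castRingHom (ZMod (p ^ k)))
  set C3 := C2 * U⁻¹ with hC3
  have hker : (phi C2).ker = (phi C3).ker := by
    ext v
    rw [AddMonoidHom.mem_ker, AddMonoidHom.mem_ker, phi_apply, phi_apply, hC3,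
      ← Matrix.vecMul_vecMul]
    constructor
    · intro h; rw [h, Matrix.zero_vecMul]
    · intro h
      have := congrArg (fun y => y ᵥ* U) h
      simpa [Matrix.vecMul_vecMul, Matrix.mul_assoc, Matrix.nonsing_inv_mul U hUdet] using this
  have htop : ∀ c c', C3 (Fin.castLE hj c) c' = if c = c' then 1 else 0 := by
    intro c c'
    have : (U * U⁻¹) c c' = C3 (Fin.castLE hj c) c' := rfl
    rw [← this, Matrix.mul_nonsing_inv U hUdet, Matrix.one_apply]
  let A : Sx n j → Fin (p ^ k) := fun s => ⟨(-(C3 s.1.1 ⟨s.1.2, s.2.2⟩)).val, ZMod.val_lt _⟩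
  have hCA : C3 = CA hj A := by
    ext i c
    simp only [CA, Matrix.of_apply, A]
    by_cases h : j ≤ (i : ℕ)
    · rw [dif_pos h, if_neg (by rintro rfl; have := c.2; simp at h; omega)]
      simp
    · rw [dif_neg h]
      have : i = Fin.castLE hj ⟨i, by omega⟩ := rfl
      rw [this, htop]
      simp [Fin.ext_iff]
  refine ⟨σ, A, ?_⟩
  rw [← lat_BA_eq hq hj, ← hCA, ← hker]
  ext v
  rw [AddSubgroup.mem_map]
  constructor
  · rintro ⟨x, hx, rfl⟩
    have hx : phi C2 x = 0 := hx
    rw [AddMonoidHom.mem_ker, ← hx, ← hphi]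
    rfl
  · intro hv
    refine ⟨(eG w).symm v, ?_, (eG w).apply_symm_apply v⟩
    rw [AddMonoidHom.mem_ker, ← hphi, ← eG_apply, AddEquiv.apply_symm_apply]
    exact hv

end cells

end part11

section part12
open Filter Topology

section primepow
variable {n j : ℕ}

lemma hT_le_avgC (hn : 0 < n) (hj : j ≤ n) {q : ℕ} (hq : IsPrimePow q)
    {F : XSpace n → ℝ} (hF : ∀ x, 0 ≤ F x) :
    hT j q F (pr 1) ≤ ∑ σ : Equiv.Perm (Fin n),
      avgC j (fun x => F (rightTranslate n (toR (Wσ hn σ)) x)) q := by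
  classical
  have hq0 : 0 < q := hq.pos
  have hcell : ∀ L : AddSubgroup (Fin n → ℤ), L ∈ Lfin n j q →
      ∃ x : Equiv.Perm (Fin n) × (Sx n j → Fin q),
        (lat (BA x.2)).map (eG (Wσ hn x.1)).toAddMonoidHom = L := by
    intro L hL
    obtain ⟨p, k, hp, hk, rfl⟩ := (isPrimePow_nat_iff _).1 hq
    obtain ⟨σ, A, h⟩ := exists_cell hn hj hp hk ((mem_Lfin hq0).1 hL)
    exact ⟨(σ, A), h⟩
  have : Nonempty (Equiv.Perm (Fin n) × (Sx n j → Fin q)) := ⟨(1, fun _ => ⟨0, hq0⟩)⟩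
  choose! x hx using hcell
  rw [hT_pr hn hq0]
  have h1 : ∑ L ∈ Lfin n j q, F (pr (sL j q L * 1)) ≤
      ∑ y : Equiv.Perm (Fin n) × (Sx n j → Fin q),
        F (rightTranslate n (toR (Wσ hn y.1)) (pr (aq n j q * uT (fun s => ((y.2 s : ℕ) : ℝ))))) := by
    have h2 : ∀ L ∈ Lfin n j q, F (pr (sL j q L * 1)) =
        F (rightTranslate n (toR (Wσ hn (x L).1))
          (pr (aq n j q * uT (fun s => (((x L).2 s : ℕ) : ℝ))))) := by
      intro L hL
      congr 1
      rw [mul_one, rT_pr]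
      have r1 := (rep_BA hn hq0 hj (x L).2).mul_gamma (Wσ hn (x L).1)
      rw [hx L hL] at r1
      exact (sL_rep hn hq0 ((mem_Lfin hq0).1 hL)).pr_eq r1
    rw [Finset.sum_congr rfl h2]
    have hinj : Set.InjOn x (Lfin n j q : Set (AddSubgroup (Fin n → ℤ))) := by
      intro L hL L' hL' h
      rw [← hx L hL, ← hx L' hL', h]
    rw [← Finset.sum_image (f := fun y : Equiv.Perm (Fin n) × (Sx n j → Fin q) =>
        F (rightTranslate n (toR (Wσ hn y.1)) (pr (aq n j q * uT (fun s => ((y.2 s : ℕ) : ℝ)))))) hinj]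
    exact Finset.sum_le_univ_sum_of_nonneg fun y => hF _
  have hqd : (0 : ℝ) < (q : ℝ) ^ (Fintype.card (Sx n j)) := by
    have : (0 : ℝ) < q := by exact_mod_cast hq0
    positivity
  refine (mul_le_mul (inv_anti₀ hqd (card_le hj hq0)) h1 (Finset.sum_nonneg fun L _ => hF _)
    (by positivity)).trans (le_of_eq ?_)
  unfold avgC
  rw [← Finset.mul_sum, Fintype.sum_prod_type]

/-- the filter of prime powers tending to infinity -/
def ppF : Filter ℕ := atTop ⊓ 𝓟 {q | IsPrimePow q}

lemma ppF_pp : ∀ᶠ q in ppF, IsPrimePow q :=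
  (mem_inf_of_right (mem_principal_self _) : {q | IsPrimePow q} ∈ ppF)

variable {μ : Measure (XSpace n)} [IsProbabilityMeasure μ]

lemma el_pow_gamma {i k : Fin n} (h : i ≠ k) (b : ℕ) : (el h 1) ^ b ∈ Gamma n := by
  have h1 : el h 1 ∈ Gamma n := by
    refine gamma_of_int (Matrix.transvection i k 1) ?_
    ext a c
    change Matrix.transvection i k (1 : ℝ) a c = _
    simp [Matrix.transvection, Matrix.one_apply, Matrix.single_apply]
  exact pow_mem h1 b

lemma hT_avgU_one (hn : 0 < n) {N : ℕ} (hN : 0 < N) (f : XSpace n → ℝ) {i k : Fin n} (h : i ≠ k)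
    {H : ℕ} (hH : 0 < H) : hT j N (avgU (el h 1) H f) (pr 1) = hT j N f (pr 1) := by
  rw [← hT_avgU hn hN]
  unfold avgU
  have : ∀ b ∈ Finset.range H, hT j N f (rightTranslate n (el h 1 ^ b) (pr 1)) = hT j N f (pr 1) := by
    intro b _
    congr 1
    rw [rT_pr, one_mul]
    have := pr_gamma (el_pow_gamma h b) 1
    rwa [mul_one] at this
  rw [Finset.sum_congr rfl this, Finset.sum_const, Finset.card_range, nsmul_eq_mul]
  have : (H : ℝ) ≠ 0 := by exact_mod_cast hH.ne'
  field_simp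

lemma integral_rT (hinv : ∀ g, Measure.map (rightTranslate n g) μ = μ) (g : SLn n)
    {F : XSpace n → ℝ} (hF : RUC F) : ∫ x, F (rightTranslate n g x) ∂μ = ∫ x, F x ∂μ := by
  conv_rhs => rw [← hinv g]
  rw [integral_map (continuous_rT g).measurable.aemeasurable hF.measurable.aestronglyMeasurable]

lemma pp_one (hn : 2 ≤ n) (hj1 : 1 ≤ j) (hj : j ≤ n - 1)
    (hinv : ∀ g, Measure.map (rightTranslate n g) μ = μ) {f : XSpace n → ℝ} (hf : RUC f) :
    Tendsto (fun q => hT j q f (pr 1)) ppF (𝓝 (∫ x, f x ∂μ)) := by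
  have hn0 : 0 < n := by omega
  have hjn : j ≤ n := by omega
  have hik : (⟨0, by omega⟩ : Fin n) ≠ ⟨n - 1, by omega⟩ := by
    simp only [ne_eq, Fin.mk.injEq]; omega
  have hu := good_el hn hik
  set c := ∫ x, f x ∂μ with hc
  have m1 := ME_one hinv hu hf
  rw [← hc] at m1
  have m2 := m1.const_mul (Fintype.card (Equiv.Perm (Fin n)) : ℝ)
  rw [mul_zero] at m2
  rw [Metric.tendsto_nhds]
  intro ε hε
  obtain ⟨H, hH1, hH2⟩ := ((m2.eventually (gt_mem_nhds (half_pos hε))).and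
    (eventually_gt_atTop 0)).exists
  set F : XSpace n → ℝ := fun x => |avgU (el hik 1) H f x - c| with hF
  have hFr : RUC F := ((hf.avgU _ H).sub (RUC.const c)).abs
  have hlim : Tendsto (fun q => ∑ σ : Equiv.Perm (Fin n),
      avgC j (fun x => F (rightTranslate n (toR (Wσ hn0 σ)) x)) q) atTop
      (𝓝 (∑ σ : Equiv.Perm (Fin n), ∫ x, F x ∂μ)) := by
    refine tendsto_finsetSum _ fun σ _ => ?_
    rw [← integral_rT hinv (toR (Wσ hn0 σ)) hFr]
    exact avgC_tendsto hn hj1 hj hinv (hFr.translate _)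
  rw [Finset.sum_const, nsmul_eq_mul, Finset.card_univ] at hlim
  have hev := hlim.eventually (gt_mem_nhds (lt_of_lt_of_le hH1 (half_le_self hε.le)))
  have hev2 : ∀ᶠ q in ppF, _ := hev.filter_mono inf_le_left
  filter_upwards [hev2, ppF_pp] with q h1 h2
  rw [Real.dist_eq, ← hT_avgU_one hn0 h2.pos f hik hH2, ← hT_sub_const hjn h2.pos]
  exact ((abs_hT_le _ _).trans (hT_le_avgC hn0 hjn h2 fun x => abs_nonneg _)).trans_lt h1

lemma pp_all (hn : 2 ≤ n) (hj1 : 1 ≤ j) (hj : j ≤ n - 1)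
    (hinv : ∀ g, Measure.map (rightTranslate n g) μ = μ) {f : XSpace n → ℝ} (hf : RUC f)
    (x : XSpace n) : Tendsto (fun q => hT j q f x) ppF (𝓝 (∫ x, f x ∂μ)) := by
  obtain ⟨g, rfl⟩ := pr_surj x
  rw [← integral_rT hinv g hf]
  refine (pp_one hn hj1 hj hinv (hf.translate g)).congr' ?_
  filter_upwards [ppF_pp] with q hq
  rw [← hT_rT (by omega) hq.pos, rT_pr, one_mul]

lemma pp_L1 (hn : 2 ≤ n) (hj1 : 1 ≤ j) (hj : j ≤ n - 1)
    (hinv : ∀ g, Measure.map (rightTranslate n g) μ = μ) {f : XSpace n → ℝ} (hf : RUC f) :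
    Tendsto (fun q => ∫ x, |hT j q f x - ∫ y, f y ∂μ| ∂μ) ppF (𝓝 0) := by
  have hn0 : 0 < n := by omega
  have hjn : j ≤ n := by omega
  set c := ∫ y, f y ∂μ
  obtain ⟨C, hC⟩ := hf.bdd
  have : IsCountablyGenerated ppF := by unfold ppF; infer_instance
  have h := tendsto_integral_filter_of_dominated_convergence (μ := μ) (l := ppF)
    (F := fun q x => |hT j q f x - c|) (f := fun _ => (0 : ℝ)) (fun _ => C + |c|) ?_ ?_ ?_ ?_
  · simpa using h
  · filter_upwards [ppF_pp] with q hq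
    exact (((hf.hT hn0 hjn hq.pos).sub (RUC.const c)).abs).measurable.aestronglyMeasurable
  · filter_upwards [ppF_pp] with q hq
    refine Eventually.of_forall fun x => ?_
    rw [Real.norm_eq_abs, abs_abs]
    refine (abs_sub _ _).trans ?_
    gcongr
    exact avg_bound _ (Lfin_card_pos hjn hq.pos) fun L _ => hC _
  · exact integrable_const _
  · refine Eventually.of_forall fun x => ?_
    have := (pp_all hn hj1 hj hinv hf x).sub_const c
    rw [sub_self] at this
    simpa using this.abs

end primepow

end part12

section part13
open Filter Topology

section multiplicative
variable {n j : ℕ}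

/-- right multiplication by an integral matrix -/
def vm (B : Matrix (Fin n) (Fin n) ℤ) : (Fin n → ℤ) →+ (Fin n → ℤ) where
  toFun v := v ᵥ* B
  map_zero' := Matrix.zero_vecMul _
  map_add' v w := Matrix.add_vecMul _ _ _

lemma vm_apply (B : Matrix (Fin n) (Fin n) ℤ) (v : Fin n → ℤ) : vm B v = v ᵥ* B := rfl

lemma vm_range (B : Matrix (Fin n) (Fin n) ℤ) : (vm B).range = lat B := by
  ext v
  rw [mem_lat]; rfl

lemma vm_adj (B : Matrix (Fin n) (Fin n) ℤ) (v : Fin n → ℤ) :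
    vm B (v ᵥ* B.adjugate) = B.det • v := by
  rw [vm_apply, Matrix.vecMul_vecMul, Matrix.adjugate_mul, Matrix.vecMul_smul, Matrix.vecMul_one]

lemma phi_zsmul {q : ℕ} (φ : (Fin n → ℤ) →+ (Fin j → ZMod q)) (a : ℤ) (v : Fin n → ℤ) (c : Fin j) :
    φ (a • v) c = (a : ZMod q) * φ v c := by
  rw [map_zsmul]; simp

lemma unit_zsmul_mem {q : ℕ} {L : AddSubgroup (Fin n → ℤ)} (hL : L ∈ latticeSet q n j) {a : ℤ}
    (ha : IsUnit (a : ZMod q)) (v : Fin n → ℤ) : a • v ∈ L ↔ v ∈ L := by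
  obtain ⟨φ, hφ, rfl⟩ := mem_latticeSet.1 hL
  rw [AddMonoidHom.mem_ker, AddMonoidHom.mem_ker, funext_iff, funext_iff]
  refine forall_congr' fun c => ?_
  rw [phi_zsmul, Pi.zero_apply, ha.mul_right_eq_zero]

lemma q_zsmul_mem {q : ℕ} {L : AddSubgroup (Fin n → ℤ)} (hL : L ∈ latticeSet q n j)
    (v : Fin n → ℤ) : (q : ℤ) • v ∈ L := by
  obtain ⟨φ, hφ, rfl⟩ := mem_latticeSet.1 hL
  rw [AddMonoidHom.mem_ker]
  ext c
  rw [phi_zsmul]; simp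

lemma comap_mem {q : ℕ} {L : AddSubgroup (Fin n → ℤ)} (hL : L ∈ latticeSet q n j)
    {B : Matrix (Fin n) (Fin n) ℤ} (hB : IsUnit (B.det : ZMod q)) :
    L.comap (vm B) ∈ latticeSet q n j := by
  obtain ⟨φ, hφ, rfl⟩ := mem_latticeSet.1 hL
  refine mem_latticeSet.2 ⟨φ.comp (vm B), fun y => ?_, ?_⟩
  · obtain ⟨u, hu⟩ := hB
    obtain ⟨v, hv⟩ := hφ (fun c => (↑u⁻¹ : ZMod q) * y c)
    refine ⟨v ᵥ* B.adjugate, ?_⟩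
    rw [AddMonoidHom.comp_apply, vm_adj]
    ext c
    rw [phi_zsmul, hv, ← hu, Units.mul_inv_cancel_left]
  · exact (AddMonoidHom.comap_ker φ (vm B)).symm

lemma comap_inj {q : ℕ} {L L' : AddSubgroup (Fin n → ℤ)} (hL : L ∈ latticeSet q n j)
    (hL' : L' ∈ latticeSet q n j)
    {B : Matrix (Fin n) (Fin n) ℤ} (hB : IsUnit (B.det : ZMod q))
    (h : L.comap (vm B) = L'.comap (vm B)) : L = L' := by
  ext v
  rw [← unit_zsmul_mem hL hB, ← unit_zsmul_mem hL' hB, ← vm_adj, ← AddSubgroup.mem_comap, h,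
    AddSubgroup.mem_comap]

lemma sum_comap {q : ℕ} (hq : 0 < q) {B : Matrix (Fin n) (Fin n) ℤ} (hB : IsUnit (B.det : ZMod q))
    (G : AddSubgroup (Fin n → ℤ) → ℝ) :
    ∑ L ∈ Lfin n j q, G (L.comap (vm B)) = ∑ L ∈ Lfin n j q, G L := by
  have hm : Set.MapsTo (fun L : AddSubgroup (Fin n → ℤ) => L.comap (vm B))
      (Lfin n j q : Set (AddSubgroup (Fin n → ℤ))) (Lfin n j q : Set (AddSubgroup (Fin n → ℤ))) := by
    intro L hL
    rw [Finset.mem_coe, mem_Lfin hq] at hL ⊢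
    exact comap_mem hL hB
  have hi : Set.InjOn (fun L : AddSubgroup (Fin n → ℤ) => L.comap (vm B))
      (Lfin n j q : Set (AddSubgroup (Fin n → ℤ))) := by
    intro L hL L' hL' h
    rw [Finset.mem_coe, mem_Lfin hq] at hL hL'
    exact comap_inj hL hL' hB h
  exact Finset.sum_nbij _ hm hi (Finset.surjOn_of_injOn_of_card_le _ hm hi le_rfl) (fun _ _ => rfl)

lemma inter_mem {M q : ℕ} (hc : M.Coprime q) {L1 L2 : AddSubgroup (Fin n → ℤ)}
    (h1 : L1 ∈ latticeSet M n j) (h2 : L2 ∈ latticeSet q n j) :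
    L1 ⊓ L2 ∈ latticeSet (M * q) n j := by
  obtain ⟨φ1, hφ1, rfl⟩ := mem_latticeSet.1 h1
  obtain ⟨φ2, hφ2, rfl⟩ := mem_latticeSet.1 h2
  let e := ZMod.chineseRemainder hc
  let φ : (Fin n → ℤ) →+ (Fin j → ZMod (M * q)) :=
    { toFun := fun v c => e.symm (φ1 v c, φ2 v c)
      map_zero' := by
        ext c
        rw [map_zero, map_zero]
        exact map_zero e.symm
      map_add' := fun v w => by
        ext c
        rw [map_add, map_add]
        exact map_add e.symm (φ1 v c, φ2 v c) (φ1 w c, φ2 w c) }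
  have hφ : ∀ v c, φ v c = e.symm (φ1 v c, φ2 v c) := fun _ _ => rfl
  refine mem_latticeSet.2 ⟨φ, fun y => ?_, ?_⟩
  · obtain ⟨v1, hv1⟩ := hφ1 (fun c => (e (y c)).1)
    obtain ⟨v2, hv2⟩ := hφ2 (fun c => (e (y c)).2)
    obtain ⟨a, ha1, ha2⟩ := Nat.chineseRemainder hc 1 0
    obtain ⟨b, hb1, hb2⟩ := Nat.chineseRemainder hc 0 1
    refine ⟨(a : ℤ) • v1 + (b : ℤ) • v2, ?_⟩
    have ea1 : (a : ZMod M) = 1 := by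
      have := (ZMod.natCast_eq_natCast_iff a 1 M).2 ha1; simpa using this
    have ea2 : (a : ZMod q) = 0 := by
      have := (ZMod.natCast_eq_natCast_iff a 0 q).2 ha2; simpa using this
    have eb1 : (b : ZMod M) = 0 := by
      have := (ZMod.natCast_eq_natCast_iff b 0 M).2 hb1; simpa using this
    have eb2 : (b : ZMod q) = 1 := by
      have := (ZMod.natCast_eq_natCast_iff b 1 q).2 hb2; simpa using this
    ext c
    rw [hφ, RingEquiv.symm_apply_eq, map_add, map_add, Pi.add_apply, Pi.add_apply,
      phi_zsmul, phi_zsmul, phi_zsmul, phi_zsmul, hv1, hv2]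
    simp [ea1, ea2, eb1, eb2]
  · ext v
    rw [AddMonoidHom.mem_ker, AddSubgroup.mem_inf, AddMonoidHom.mem_ker, AddMonoidHom.mem_ker,
      funext_iff, funext_iff, funext_iff, ← forall_and]
    refine forall_congr' fun c => ?_
    rw [hφ, Pi.zero_apply, Pi.zero_apply, Pi.zero_apply, map_eq_zero_iff _ e.symm.injective,
      Prod.mk_eq_zero]

lemma inter_left {M q : ℕ} (hc : M.Coprime q) {L1 L2 : AddSubgroup (Fin n → ℤ)}
    (h1 : L1 ∈ latticeSet M n j) (h2 : L2 ∈ latticeSet q n j) (v : Fin n → ℤ) :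
    (q : ℤ) • v ∈ L1 ⊓ L2 ↔ v ∈ L1 := by
  rw [AddSubgroup.mem_inf, unit_zsmul_mem h1]
  · exact and_iff_left (q_zsmul_mem h2 v)
  · rw [Int.cast_natCast, ZMod.isUnit_iff_coprime]; exact hc.symm

lemma inter_surj {M q : ℕ} (hc : M.Coprime q) {L : AddSubgroup (Fin n → ℤ)}
    (h : L ∈ latticeSet (M * q) n j) :
    ∃ L1 ∈ latticeSet M n j, ∃ L2 ∈ latticeSet q n j, L1 ⊓ L2 = L := by
  obtain ⟨φ, hφ, rfl⟩ := mem_latticeSet.1 h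
  let e := ZMod.chineseRemainder hc
  let φ1 : (Fin n → ℤ) →+ (Fin j → ZMod M) :=
    { toFun := fun v c => (e (φ v c)).1
      map_zero' := by ext c; simp
      map_add' := fun v w => by ext c; simp }
  let φ2 : (Fin n → ℤ) →+ (Fin j → ZMod q) :=
    { toFun := fun v c => (e (φ v c)).2
      map_zero' := by ext c; simp
      map_add' := fun v w => by ext c; simp }
  have e1 : ∀ v c, φ1 v c = (e (φ v c)).1 := fun _ _ => rfl
  have e2 : ∀ v c, φ2 v c = (e (φ v c)).2 := fun _ _ => rfl
  refine ⟨φ1.ker, mem_latticeSet.2 ⟨φ1, fun y => ?_, rfl⟩, φ2.ker,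
    mem_latticeSet.2 ⟨φ2, fun y => ?_, rfl⟩, ?_⟩
  · obtain ⟨v, hv⟩ := hφ (fun c => e.symm (y c, 0))
    refine ⟨v, ?_⟩
    ext c
    rw [e1, hv, RingEquiv.apply_symm_apply]
  · obtain ⟨v, hv⟩ := hφ (fun c => e.symm (0, y c))
    refine ⟨v, ?_⟩
    ext c
    rw [e2, hv, RingEquiv.apply_symm_apply]
  · ext v
    rw [AddMonoidHom.mem_ker, AddSubgroup.mem_inf, AddMonoidHom.mem_ker, AddMonoidHom.mem_ker,
      funext_iff, funext_iff, funext_iff, ← forall_and]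
    refine forall_congr' fun c => ?_
    rw [e1, e2, Pi.zero_apply, Pi.zero_apply, Pi.zero_apply, ← Prod.mk_eq_zero,
      map_eq_zero_iff _ e.injective]

lemma sum_inter {M q : ℕ} (hM : 0 < M) (hq : 0 < q) (hc : M.Coprime q)
    (G : AddSubgroup (Fin n → ℤ) → ℝ) :
    ∑ L1 ∈ Lfin n j M, ∑ L2 ∈ Lfin n j q, G (L1 ⊓ L2) = ∑ L ∈ Lfin n j (M * q), G L := by
  have hMq : 0 < M * q := Nat.mul_pos hM hq
  rw [← Finset.sum_product']
  refine Finset.sum_nbij (fun x => x.1 ⊓ x.2) ?_ ?_ ?_ (fun _ _ => rfl)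
  · rintro ⟨L1, L2⟩ h
    rw [Finset.mem_product, mem_Lfin hM, mem_Lfin hq] at h
    rw [mem_Lfin hMq]
    exact inter_mem hc h.1 h.2
  · rintro ⟨L1, L2⟩ h ⟨L1', L2'⟩ h' heq
    rw [Finset.mem_coe, Finset.mem_product, mem_Lfin hM, mem_Lfin hq] at h h'
    have heq : L1 ⊓ L2 = L1' ⊓ L2' := heq
    ext1
    · ext v
      change v ∈ L1 ↔ v ∈ L1'
      rw [← inter_left hc h.1 h.2, heq, inter_left hc h'.1 h'.2]
    · ext v
      change v ∈ L2 ↔ v ∈ L2'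
      rw [← inter_left hc.symm h.2 h.1, inf_comm, heq, inf_comm, inter_left hc.symm h'.2 h'.1]
  · intro L hL
    rw [Finset.mem_coe, mem_Lfin hMq] at hL
    obtain ⟨L1, h1, L2, h2, h⟩ := inter_surj hc hL
    refine ⟨(L1, L2), ?_, h⟩
    rw [Finset.mem_coe, Finset.mem_product, mem_Lfin hM, mem_Lfin hq]
    exact ⟨h1, h2⟩

lemma IsRep.mul {M q : ℕ} {L2 : AddSubgroup (Fin n → ℤ)} {s1 s2 : SLn n}
    {B : Matrix (Fin n) (Fin n) ℤ}
    (h1 : (s1 : Matrix (Fin n) (Fin n) ℝ) = ((M : ℝ) ^ (-(j : ℝ) / (n : ℝ))) • (B.map (Int.cast : ℤ → ℝ)))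
    (h2 : IsRep j q L2 s2) : IsRep j (M * q) (L2.map (vm B)) (s2 * s1) := by
  obtain ⟨B2, rfl, hs⟩ := h2
  refine ⟨B2 * B, ?_, ?_⟩
  · ext v
    rw [lat_mul_mem]; rfl
  · rw [Matrix.SpecialLinearGroup.coe_mul, hs, h1, Matrix.smul_mul, Matrix.mul_smul, smul_smul]
    push_cast
    rw [Real.mul_rpow (Nat.cast_nonneg _) (Nat.cast_nonneg _), mul_comm]
    congr 1
    exact (Matrix.map_mul (f := Int.castRingHom ℝ)).symm

lemma hT_mul (hn : 0 < n) (hj : j ≤ n) {M q : ℕ} (hM : 0 < M) (hq : 0 < q) (hc : M.Coprime q)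
    (f : XSpace n → ℝ) (x : XSpace n) : hT j M (hT j q f) x = hT j (M * q) f x := by
  have hMq : 0 < M * q := Nat.mul_pos hM hq
  obtain ⟨g, rfl⟩ := pr_surj x
  rw [hT_pr hn hM, hT_pr hn hMq]
  have hsum : ∑ L1 ∈ Lfin n j M, hT j q f (pr (sL j M L1 * g)) =
      ((Lfin n j q).card : ℝ)⁻¹ * ∑ L ∈ Lfin n j (M * q), f (pr (sL j (M * q) L * g)) := by
    rw [← sum_inter hM hq hc, Finset.mul_sum]
    refine Finset.sum_congr rfl fun L1 hL1 => ?_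
    rw [mem_Lfin hM] at hL1
    rw [hT_pr hn hq]
    congr 1
    obtain ⟨B, hB, hs⟩ := sL_rep hn hM hL1
    have hdet := exists_rep_det hn hM hs
    have hu : IsUnit (B.det : ZMod q) := by
      rw [hdet]
      push_cast
      exact ((ZMod.isUnit_iff_coprime M q).2 hc).pow j
    rw [← sum_comap hq hu]
    refine Finset.sum_congr rfl fun L2 hL2 => ?_
    rw [mem_Lfin hq] at hL2
    have r := IsRep.mul hs (sL_rep hn hq (comap_mem hL2 hu))
    rw [AddSubgroup.map_comap_eq, vm_range, hB] at r
    have := r.pr_eq (sL_rep hn hMq (inter_mem hc hL1 hL2))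
    have h2 := congrArg (rightTranslate n g) this
    rw [rT_pr, rT_pr, mul_assoc] at h2
    rw [h2]
  have hcard : ((Lfin n j (M * q)).card : ℝ) = (Lfin n j M).card * (Lfin n j q).card := by
    have := sum_inter (n := n) (j := j) hM hq hc (fun _ => (1 : ℝ))
    simp only [Finset.sum_const, nsmul_eq_mul, mul_one] at this
    exact this.symm
  rw [hsum, hcard, mul_inv, mul_assoc]

end multiplicative

end part13

section part14
open Filter Topology

section conclusion
variable {n j : ℕ}

lemma exists_big_pp (Q : ℕ) : ∀ᶠ N : ℕ in atTop, ∃ M q : ℕ, N = M * q ∧ 0 < M ∧ M.Coprime q ∧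
    IsPrimePow q ∧ Q ≤ q := by
  filter_upwards [eventually_gt_atTop (Nat.factorial Q)] with N hN
  have hN0 : N ≠ 0 := by omega
  by_contra hcon
  have key : N ∣ Nat.factorial Q := by
    rw [Nat.dvd_iff_prime_pow_dvd_dvd]
    intro p k hp hk
    rcases Nat.eq_zero_or_pos k with rfl | hk0
    · simp
    have hpN : p ∣ N := (dvd_pow_self p hk0.ne').trans hk
    have h1 : p ^ k ≤ ordProj[p] N := by
      refine Nat.pow_le_pow_right hp.pos ?_
      exact (hp.pow_dvd_iff_le_factorization hN0).1 hk
    have h2 : ordProj[p] N ≤ Q := by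
      by_contra h
      refine hcon ⟨ordCompl[p] N, ordProj[p] N, ?_, Nat.ordCompl_pos p hN0, ?_, ?_, by omega⟩
      · rw [mul_comm]; exact (Nat.ordProj_mul_ordCompl_eq_self N p).symm
      · exact ((Nat.coprime_ordCompl hp hN0).pow_left _).symm
      · exact hp.isPrimePow.pow (hp.factorization_pos_of_dvd hN0 hpN).ne'
    exact Nat.dvd_factorial (pow_pos hp.pos k) (h1.trans h2)
  have := Nat.le_of_dvd (Nat.factorial_pos Q) key
  omega

variable {μ : Measure (XSpace n)} [IsProbabilityMeasure μ]

lemma hT_tendsto (hn : 2 ≤ n) (hj1 : 1 ≤ j) (hj : j ≤ n - 1)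
    (hinv : ∀ g, Measure.map (rightTranslate n g) μ = μ) {f : XSpace n → ℝ} (hf : RUC f) :
    Tendsto (fun N => hT j N f (pr 1)) atTop (𝓝 (∫ x, f x ∂μ)) := by
  have hn0 : 0 < n := by omega
  have hjn : j ≤ n := by omega
  set c := ∫ x, f x ∂μ with hc
  rw [Metric.tendsto_atTop']
  intro ε hε
  have hV := hf.unif (ε / 2) (half_pos hε)
  obtain ⟨V, hVs, hVo, h1V⟩ := mem_nhds_iff.1 hV
  set U : Set (XSpace n) := pr '' V with hU
  have hUo : IsOpen U := isOpenMap_pr n V hVo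
  have hUpos : 0 < μ U := open_pos hinv hUo ⟨pr 1, 1, h1V, rfl⟩
  have hm : 0 < μ.real U := ENNReal.toReal_pos hUpos.ne' (measure_ne_top μ U)
  have hpp := (pp_L1 hn hj1 hj hinv hf).eventually (gt_mem_nhds (mul_pos (half_pos hε) hm))
  rw [ppF, eventually_inf_principal, eventually_atTop] at hpp
  obtain ⟨Q, hQ⟩ := hpp
  obtain ⟨N0, hN0⟩ := eventually_atTop.1 (exists_big_pp Q)
  refine ⟨N0, fun N hN => ?_⟩
  obtain ⟨M, q, rfl, hM, hcop, hq, hQq⟩ := hN0 N (le_of_lt hN)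
  have hMq : 0 < M * q := Nat.mul_pos hM hq.pos
  have hI := hQ q hQq hq
  have rN : RUC (hT j (M * q) f) := hf.hT hn0 hjn hMq
  have rq : RUC (fun x => |hT j q f x - c|) := ((hf.hT hn0 hjn hq.pos).sub (RUC.const c)).abs
  have rA : RUC (fun x => |hT j (M * q) f x - c|) := (rN.sub (RUC.const c)).abs
  have h1 : ∫ x, |hT j (M * q) f x - c| ∂μ ≤ ∫ x, |hT j q f x - c| ∂μ := by
    rw [← hT_integral hn hjn hM hinv rq]
    refine integral_mono (rA.integrable μ) ((rq.hT hn0 hjn hM).integrable μ) fun x => ?_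
    beta_reduce
    rw [← hT_mul hn0 hjn hM hq.pos hcop, ← hT_sub_const hjn hM]
    exact abs_hT_le _ _
  have h2 : μ.real U * (|hT j (M * q) f (pr 1) - c| - ε / 2) ≤ ∫ x, |hT j (M * q) f x - c| ∂μ := by
    refine le_trans ?_ (setIntegral_le_integral (s := U) (rA.integrable μ)
      (Eventually.of_forall fun x => abs_nonneg _))
    rw [← smul_eq_mul, ← setIntegral_const]
    refine setIntegral_mono_on (integrableOn_const (measure_ne_top μ U)) (rA.integrable μ).integrableOn
      hUo.measurableSet ?_
    rintro _ ⟨g, hg, rfl⟩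
    have hgV := hVs hg
    have h3 : |hT j (M * q) f (pr g) - hT j (M * q) f (pr 1)| ≤ ε / 2 := by
      have e1 : pr g = rightTranslate n g (pr 1) := by rw [rT_pr, one_mul]
      rw [e1, hT_rT hn0 hMq]
      unfold hT
      rw [← mul_sub, ← Finset.sum_sub_distrib]
      exact avg_bound _ (Lfin_card_pos hjn hMq) fun L _ => hgV _
    have h4 := abs_sub_le (hT j (M * q) f (pr 1)) (hT j (M * q) f (pr g)) c
    rw [abs_sub_comm] at h3
    linarith
  rw [Real.dist_eq]
  have h5 := (h2.trans h1).trans_lt hI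
  rw [mul_comm (ε / 2)] at h5
  have := lt_of_mul_lt_mul_left h5 hm.le
  linarith

end conclusion

end part14

open Filter in
/-- Let `n ≥ 2`, `1 ≤ j ≤ n−1`, and let `μ` be the right-invariant Borel
probability measure on `X = SL_n(ℤ)\SL_n(ℝ)`. For every continuous compactly supported
`f : X → ℝ`, the Hecke average `(1/#L_{N,j}(n)) Σ_{L ∈ L_{N,j}(n)} f(x_L)` converges to
`∫_X f dμ` as `N → ∞`, where `x_L` is the coset `SL_n(ℤ)·(N^{−j/n}·B)` for any matrix
`B` whose rows form a ℤ-basis of `L` (with `det B = N^j`); the coset being independent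
of the choice of `B`, we quantify over any assignment `xL` compatible with every such
`B`. -/
theorem hecke_average_tendsto_integral (n j : ℕ)
    (hn : 2 ≤ n) (hj1 : 1 ≤ j) (hj : j ≤ n - 1)
    (μ : Measure (XSpace n)) (hprob : IsProbabilityMeasure μ)
    (hinv : ∀ g, Measure.map (rightTranslate n g) μ = μ)
    (f : XSpace n → ℝ) (hf : Continuous f) (hfc : HasCompactSupport f)
    (xL : ℕ → AddSubgroup (Fin n → ℤ) → XSpace n)
    (hxL : ∀ N : ℕ, ∀ L ∈ latticeSet N n j, ∀ B : Matrix (Fin n) (Fin n) ℤ,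
      AddSubgroup.closure (Set.range fun i : Fin n => (B i : Fin n → ℤ)) = L →
      B.det = (N : ℤ) ^ j →
      ∀ g : Matrix.SpecialLinearGroup (Fin n) ℝ,
        (g : Matrix (Fin n) (Fin n) ℝ) =
          ((N : ℝ) ^ (-(j : ℝ) / (n : ℝ))) • (B.map (Int.cast : ℤ → ℝ)) →
        xL N L = (Quotient.mk'' g : XSpace n)) :
    Tendsto (fun N : ℕ =>
      (∑ᶠ L ∈ latticeSet N n j, f (xL N L)) / (Set.ncard (latticeSet N n j) : ℝ))
      atTop (nhds (∫ x, f x ∂μ)) := by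
  have hn0 : 0 < n := by omega
  have hfr := ruc_of_compact hf hfc
  refine (hT_tendsto hn hj1 hj hinv hfr).congr' ?_
  filter_upwards [eventually_gt_atTop 0] with N hN
  have hfin := latticeSet_finite (n := n) (j := j) hN
  have hL : Lfin n j N = hfin.toFinset := by
    ext L
    rw [mem_Lfin hN, Set.Finite.mem_toFinset]
  rw [hT_pr hn0 hN, hL, finsum_mem_eq_finite_toFinset_sum _ hfin, Set.ncard_eq_toFinset_card _ hfin,
    div_eq_inv_mul]
  congr 1
  refine Finset.sum_congr rfl fun L hLm => ?_
  rw [Set.Finite.mem_toFinset] at hLm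
  obtain ⟨B, hB, hs⟩ := sL_rep hn0 hN hLm
  rw [hxL N L hLm B hB (exists_rep_det hn0 hN hs) _ hs, mul_one]
  rfl
end
end

section
/- Let N ∈ ℕ be square-free, n ≥ 2 and 1 ≤ j ≤ n−1. Then the number of subgroups L of ℤⁿ with ℤⁿ/L ≅ (ℤ/Nℤ)ʲ equals ∏_{p | N} #{V : V is an 𝔽_p-linear subspace of 𝔽_pⁿ of dimension n−j}, the product running over the prime divisors p of N. -/
section Helpers

variable {ι : Type} [Fintype ι] (a : ι → ℕ)

theorem helper_lift (hc : Pairwise (Function.onFun Nat.Coprime a)) (n : ℕ)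
    (y : ∀ i, Fin n → ZMod (a i)) :
    ∃ x : Fin n → ℤ, ∀ i k, ((x k : ℤ) : ZMod (a i)) = y i k := by
  have h : ∀ k : Fin n, ∃ z : ℤ, ∀ i, (z : ZMod (a i)) = y i k := by
    intro k
    obtain ⟨z, hz⟩ := ZMod.intCast_surjective ((ZMod.prodEquivPi a hc).symm (fun i => y i k))
    refine ⟨z, fun i => ?_⟩
    have h1 := congrArg (ZMod.prodEquivPi a hc) hz
    rw [RingEquiv.apply_symm_apply, map_intCast] at h1
    exact congrFun h1 i
  choose x hx using h
  exact ⟨x, fun i k => hx k i⟩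

/-- The subgroup of integer vectors whose reductions lie in the given subspaces. -/
def latOf {n : ℕ} (V : ∀ i, Submodule (ZMod (a i)) (Fin n → ZMod (a i))) :
    AddSubgroup (Fin n → ℤ) where
  carrier := {x | ∀ i, (fun k => ((x k : ℤ) : ZMod (a i))) ∈ V i}
  zero_mem' := by
    intro i
    convert (V i).zero_mem using 1
    ext k
    simp
  add_mem' := by
    intro x y hx hy i
    convert (V i).add_mem (hx i) (hy i) using 1
    ext k
    simp
  neg_mem' := by
    intro x hx i
    convert (V i).neg_mem (hx i) using 1
    ext k
    simp

theorem mem_latOf {n : ℕ} (V : ∀ i, Submodule (ZMod (a i)) (Fin n → ZMod (a i)))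
    (x : Fin n → ℤ) :
    x ∈ latOf a V ↔ ∀ i, (fun k => ((x k : ℤ) : ZMod (a i))) ∈ V i := Iff.rfl

theorem latOf_injective (hc : Pairwise (Function.onFun Nat.Coprime a)) {n : ℕ}
    (V W : ∀ i, Submodule (ZMod (a i)) (Fin n → ZMod (a i)))
    (h : latOf a V ≤ latOf a W) (i : ι) : V i ≤ W i := by
  classical
  intro v hv
  obtain ⟨x, hx⟩ := helper_lift a hc n (Pi.single i v)
  have hx' : ∀ l, (fun k => ((x k : ℤ) : ZMod (a l))) =
      (Pi.single i v : ∀ l, Fin n → ZMod (a l)) l := fun l => funext (hx l)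
  have hm : x ∈ latOf a V := by
    rw [mem_latOf]
    intro l
    rw [hx' l]
    by_cases hl : l = i
    · subst hl
      simpa using hv
    · rw [Pi.single_eq_of_ne hl]
      exact (V l).zero_mem
  have h2 := (mem_latOf a W x).1 (h hm) i
  rw [hx' i, Pi.single_eq_same] at h2
  exact h2

theorem exists_surj (p : ℕ) [Fact p.Prime] (n j : ℕ) (hj : j ≤ n)
    (V : Submodule (ZMod p) (Fin n → ZMod p)) (hV : Module.finrank (ZMod p) V = n - j) :
    ∃ g : (Fin n → ZMod p) →ₗ[ZMod p] (Fin j → ZMod p),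
      Function.Surjective g ∧ ∀ v, g v = 0 ↔ v ∈ V := by
  have h1 := V.finrank_quotient_add_finrank
  rw [hV, Module.finrank_fin_fun] at h1
  have h2 : Module.finrank (ZMod p) ((Fin n → ZMod p) ⧸ V) =
      Module.finrank (ZMod p) (Fin j → ZMod p) := by
    rw [Module.finrank_fin_fun]
    omega
  let e := LinearEquiv.ofFinrankEq _ _ h2
  refine ⟨e.toLinearMap ∘ₗ V.mkQ, e.surjective.comp V.mkQ_surjective, fun v => ?_⟩
  simp

theorem latOf_mem (hc : Pairwise (Function.onFun Nat.Coprime a)) [∀ i, Fact (a i).Prime]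
    (n j : ℕ) (hj : j ≤ n)
    (V : ∀ i, Submodule (ZMod (a i)) (Fin n → ZMod (a i)))
    (hV : ∀ i, Module.finrank (ZMod (a i)) (V i) = n - j) :
    Nonempty (((Fin n → ℤ) ⧸ latOf a V) ≃+ (Fin j → ZMod (∏ i, a i))) := by
  choose g hg hk using fun i => exists_surj (a i) n j hj (V i) (hV i)
  let e := ZMod.prodEquivPi a hc
  let F : (Fin n → ℤ) →+ (Fin j → ZMod (∏ i, a i)) := AddMonoidHom.mk'
    (fun x l => e.symm (fun i => g i (fun k => ((x k : ℤ) : ZMod (a i))) l)) (by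
      intro x y
      ext1 l
      rw [Pi.add_apply, ← map_add]
      congr 1
      ext1 i
      have hxy : (fun k => (((x + y) k : ℤ) : ZMod (a i))) =
          (fun k => ((x k : ℤ) : ZMod (a i))) + (fun k => ((y k : ℤ) : ZMod (a i))) := by
        ext k
        simp
      rw [Pi.add_apply, hxy, map_add, Pi.add_apply])
  have hF : ∀ x l, F x l = e.symm (fun i => g i (fun k => ((x k : ℤ) : ZMod (a i))) l) :=
    fun _ _ => rfl
  have hs : Function.Surjective F := by
    intro w
    choose y hy using fun i => hg i (fun l => e (w l) i)
    obtain ⟨x, hx⟩ := helper_lift a hc n y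
    refine ⟨x, ?_⟩
    ext1 l
    rw [hF, RingEquiv.symm_apply_eq]
    ext1 i
    have : (fun k => ((x k : ℤ) : ZMod (a i))) = y i := funext (hx i)
    rw [this, hy]
  have hker : F.ker = latOf a V := by
    ext x
    rw [AddMonoidHom.mem_ker, mem_latOf]
    constructor
    · intro h i
      rw [← hk]
      ext1 l
      have h1 := congrFun h l
      rw [hF, RingEquiv.symm_apply_eq, Pi.zero_apply, map_zero] at h1
      exact congrFun h1 i
    · intro h
      ext1 l
      rw [hF, RingEquiv.symm_apply_eq, Pi.zero_apply, map_zero]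
      ext1 i
      rw [(hk i _).2 (h i)]
      rfl
  rw [← hker]
  exact ⟨QuotientAddGroup.quotientKerEquivOfSurjective F hs⟩

theorem latOf_surj (hc : Pairwise (Function.onFun Nat.Coprime a)) [∀ i, Fact (a i).Prime]
    (n j : ℕ) (L : AddSubgroup (Fin n → ℤ))
    (f : ((Fin n → ℤ) ⧸ L) ≃+ (Fin j → ZMod (∏ i, a i))) :
    ∃ V : ∀ i, Submodule (ZMod (a i)) (Fin n → ZMod (a i)),
      (∀ i, Module.finrank (ZMod (a i)) (V i) = n - j) ∧ latOf a V = L := by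
  classical
  let e := ZMod.prodEquivPi a hc
  let φ : (Fin n → ℤ) →+ (Fin j → ZMod (∏ i, a i)) :=
    f.toAddMonoidHom.comp (QuotientAddGroup.mk' L)
  have hφs : Function.Surjective φ := f.surjective.comp (QuotientAddGroup.mk'_surjective L)
  have hφk : ∀ x, φ x = 0 ↔ x ∈ L := by
    intro x
    simp [φ]
  let π : ∀ i, (Fin j → ZMod (∏ i, a i)) →+ (Fin j → ZMod (a i)) := fun i =>
    AddMonoidHom.mk' (fun w l => e (w l) i) (by intro x y; ext1 l; simp)
  have hπ : ∀ i w l, π i w l = e (w l) i := fun _ _ _ => rfl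
  let ψ : ∀ i, (Fin n → ZMod (a i)) →ₗ[ZMod (a i)] (Fin j → ZMod (a i)) := fun i =>
    Fintype.linearCombination (ZMod (a i)) (fun k => π i (φ (Pi.single k 1)))
  have hψ : ∀ i x, ψ i (fun k => ((x k : ℤ) : ZMod (a i))) = π i (φ x) := by
    intro i x
    have hx : x = ∑ k, x k • (Pi.single k 1 : Fin n → ℤ) := by
      ext k
      simp [Finset.sum_apply, Pi.single_apply]
    conv_rhs => rw [hx]
    simp only [ψ, Fintype.linearCombination_apply, map_sum, map_zsmul]
    refine Finset.sum_congr rfl fun k _ => ?_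
    exact Int.cast_smul_eq_zsmul _ _ _
  have hψs : ∀ i, Function.Surjective (ψ i) := by
    intro i w
    obtain ⟨x, hx⟩ := hφs (fun l => e.symm (Pi.single i (w l)))
    refine ⟨fun k => ((x k : ℤ) : ZMod (a i)), ?_⟩
    rw [hψ, hx]
    ext1 l
    rw [hπ, RingEquiv.apply_symm_apply, Pi.single_eq_same]
  refine ⟨fun i => LinearMap.ker (ψ i), fun i => ?_, ?_⟩
  · have h1 := LinearMap.finrank_range_add_finrank_ker (ψ i)
    rw [LinearMap.range_eq_top.2 (hψs i), finrank_top, Module.finrank_fin_fun,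
      Module.finrank_fin_fun] at h1
    show Module.finrank (ZMod (a i)) (LinearMap.ker (ψ i)) = n - j
    omega
  · ext x
    rw [mem_latOf, ← hφk]
    simp only [LinearMap.mem_ker, hψ]
    constructor
    · intro h
      ext1 l
      apply e.injective
      ext1 i
      rw [← hπ, h, Pi.zero_apply, Pi.zero_apply, map_zero, Pi.zero_apply]
    · intro h i
      rw [h, map_zero]

theorem card_aux (hc : Pairwise (Function.onFun Nat.Coprime a)) [∀ i, Fact (a i).Prime]
    (N n j : ℕ) (hN : ∏ i, a i = N) (hj : j ≤ n) :
    Set.ncard {L : AddSubgroup (Fin n → ℤ) |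
        Nonempty (((Fin n → ℤ) ⧸ L) ≃+ (Fin j → ZMod N))} =
      ∏ i, Set.ncard {V : Submodule (ZMod (a i)) (Fin n → ZMod (a i)) |
          Module.finrank (ZMod (a i)) V = n - j} := by
  subst hN
  simp only [← Nat.card_coe_set_eq]
  rw [← Nat.card_pi]
  symm
  refine Nat.card_congr (Equiv.ofBijective
    (fun V => ⟨latOf a (fun i => (V i).1), latOf_mem a hc n j hj _ (fun i => (V i).2)⟩) ⟨?_, ?_⟩)
  · intro V W h
    have h' := congrArg Subtype.val h
    funext i
    exact Subtype.ext (le_antisymm (latOf_injective a hc _ _ h'.le i)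
      (latOf_injective a hc _ _ h'.ge i))
  · rintro ⟨L, ⟨f⟩⟩
    obtain ⟨V, hV, hL⟩ := latOf_surj a hc n j L f
    exact ⟨fun i => ⟨V i, hV i⟩, Subtype.ext hL⟩

end Helpers

/-- For square-free `N`, the number of subgroups `L ≤ ℤⁿ` with
`ℤⁿ/L ≅ (ℤ/Nℤ)ʲ` equals the product over the primes `p ∣ N` of the number of
`(n−j)`-dimensional subspaces of `𝔽_pⁿ`. -/
theorem card_latticeSet_squarefree (N n j : ℕ) (hN : Squarefree N)
    (hn : 2 ≤ n) (hj1 : 1 ≤ j) (hj : j ≤ n - 1) :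
    Set.ncard {L : AddSubgroup (Fin n → ℤ) |
        Nonempty (((Fin n → ℤ) ⧸ L) ≃+ (Fin j → ZMod N))} =
      ∏ p ∈ N.primeFactors,
        Set.ncard {V : Submodule (ZMod p) (Fin n → ZMod p) |
          Module.finrank (ZMod p) V = n - j} := by
  have hp : ∀ i : N.primeFactors, Fact (i : ℕ).Prime :=
    fun i => ⟨Nat.prime_of_mem_primeFactors i.2⟩
  have h := card_aux (fun i : N.primeFactors => (i : ℕ))
    (fun x y hxy => (Nat.coprime_primes (hp x).out (hp y).out).2
      (fun h => hxy (Subtype.ext h))) N n j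
    (by
      rw [Finset.prod_coe_sort N.primeFactors (fun p => p)]
      exact Nat.prod_primeFactors_of_squarefree hN) (by omega)
  rw [h]
  exact Finset.prod_coe_sort N.primeFactors (fun p =>
    Set.ncard {V : Submodule (ZMod p) (Fin n → ZMod p) |
          Module.finrank (ZMod p) V = n - j})
end
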